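/- arXiv:1908.04543 — 8 statements merged into one kernel-verified Lean document; each statement's English description precedes it below -/
import Mathlib

section
/- Let λ ∈ (−1/π, 1/π), set α = arcsin(λπ)/π (so that sin(πα) = λπ and α ∈ (−1/2, 1/2)), and let μ > 0. Define J(x) := x·F_α(x/μ²) for x ≥ 0. Then for every x ≥ 0 the integral ∫₀^∞ J(t)/((t+μ²)²(t+μ²+x)) dt converges absolutely and J satisfies the Fredholm integral equation of second kind J(x) = x − λ x² ∫₀^∞ J(t)/((t+μ²)²(t+μ²+x)) dt. -/
open MeasureTheory Real Set

/-- The Gauss hypergeometric function `₂F₁(α, 1-α; 2; -x)` via its Euler integral. -/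
noncomputable def Fhyp (α x : ℝ) : ℝ :=
  (1 / (Real.Gamma (1 - α) * Real.Gamma (1 + α))) *
    ∫ u in (0:ℝ)..1, u ^ (-α) * (1 - u) ^ α * (1 + x * u) ^ (-α)


lemma aux_beta_real (a b : ℝ) (ha : 0 < a) (hb : 0 < b) :
    IntegrableOn (fun u : ℝ => u ^ (a - 1) * (1 - u) ^ (b - 1)) (Ioo 0 1) ∧
    ∫ u in Ioo (0:ℝ) 1, u ^ (a - 1) * (1 - u) ^ (b - 1)
      = Real.Gamma a * Real.Gamma b / Real.Gamma (a + b) := by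
  have hc := Complex.betaIntegral_convergent (u := (a:ℂ)) (v := (b:ℂ)) (by simpa) (by simpa)
  have he : EqOn (fun u : ℝ => (u:ℂ) ^ ((a:ℂ) - 1) * (1 - (u:ℂ)) ^ ((b:ℂ) - 1))
      (fun u : ℝ => ((u ^ (a - 1) * (1 - u) ^ (b - 1) : ℝ) : ℂ)) (Ioo 0 1) := by
    intro u hu
    have h1 : (0:ℝ) ≤ 1 - u := by linarith [hu.2]
    simp only
    push_cast [Complex.ofReal_cpow hu.1.le, Complex.ofReal_cpow h1]
    rfl
  rw [intervalIntegrable_iff_integrableOn_Ioo_of_le zero_le_one] at hc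
  have hc' := hc.congr_fun he measurableSet_Ioo
  refine ⟨?_, ?_⟩
  · have := hc'.re
    show Integrable _ _
    simpa using this
  · have h2 := Complex.betaIntegral_eq_Gamma_mul_div (a:ℂ) (b:ℂ) (by simpa) (by simpa)
    rw [Complex.betaIntegral, intervalIntegral.integral_of_le zero_le_one,
      integral_Ioc_eq_integral_Ioo, setIntegral_congr_fun measurableSet_Ioo he,
      integral_complex_ofReal, ← Complex.ofReal_add, Complex.Gamma_ofReal, Complex.Gamma_ofReal,
      Complex.Gamma_ofReal] at h2
    exact_mod_cast h2

lemma aux_beta2 (a b : ℝ) (ha : 0 < a) (hb : 0 < b) :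
    IntegrableOn (fun s : ℝ => s ^ (a - 1) * (1 + s) ^ (-(a + b))) (Ioi 0) ∧
    ∫ s in Ioi (0:ℝ), s ^ (a - 1) * (1 + s) ^ (-(a + b))
      = Real.Gamma a * Real.Gamma b / Real.Gamma (a + b) := by
  have him : (fun u : ℝ => u / (1 - u)) '' Ioo 0 1 = Ioi 0 := by
    ext s
    constructor
    · rintro ⟨u, hu, rfl⟩
      exact div_pos hu.1 (by linarith [hu.2])
    · intro hs
      have hs : 0 < s := hs
      refine ⟨s / (1 + s), ⟨by positivity, ?_⟩, ?_⟩
      · rw [div_lt_one (by positivity)]; linarith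
      · have : 1 - s / (1 + s) = 1 / (1 + s) := by field_simp; ring
        simp only [this]; field_simp
  have hinj : InjOn (fun u : ℝ => u / (1 - u)) (Ioo 0 1) := by
    intro u hu v hv h
    have h1 : 1 - u ≠ 0 := by linarith [hu.2]
    have h2 : 1 - v ≠ 0 := by linarith [hv.2]
    simp only at h
    rw [div_eq_div_iff h1 h2] at h
    linarith
  have hd : ∀ u ∈ Ioo (0:ℝ) 1, HasDerivWithinAt (fun u : ℝ => u / (1 - u)) (1 / (1 - u)^2)
      (Ioo 0 1) u := by
    intro u hu
    have h1 : 1 - u ≠ 0 := by linarith [hu.2]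
    have := ((hasDerivAt_id u).div ((hasDerivAt_id u).const_sub 1) h1)
    refine (this.congr_deriv ?_).hasDerivWithinAt
    simp
  have heq : EqOn (fun u : ℝ => |1 / (1 - u)^2| • ((u / (1 - u)) ^ (a - 1)
      * (1 + u / (1 - u)) ^ (-(a + b)))) (fun u : ℝ => u ^ (a - 1) * (1 - u) ^ (b - 1))
      (Ioo 0 1) := by
    intro u hu
    have h1 : 0 < 1 - u := by linarith [hu.2]
    have h3 : 1 + u / (1 - u) = (1 - u)⁻¹ := by field_simp; ring
    have h4 : |1 / (1 - u)^2| = (1 - u) ^ (-2 : ℝ) := by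
      rw [abs_of_pos (by positivity), Real.rpow_neg h1.le]; simp
    simp only [smul_eq_mul]
    rw [h4, h3, Real.div_rpow hu.1.le h1.le, Real.inv_rpow h1.le, ← Real.rpow_neg h1.le,
      div_eq_mul_inv, ← Real.rpow_neg h1.le]
    have : (1 - u) ^ (b - 1) = (1 - u) ^ (-2:ℝ) * (1 - u) ^ (-(a - 1)) * (1 - u) ^ (- -(a + b)) := by
      rw [← Real.rpow_add h1, ← Real.rpow_add h1]; congr 1; ring
    rw [this]; ring
  obtain ⟨h1, h2⟩ := aux_beta_real a b ha hb
  constructor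
  · rw [← him, integrableOn_image_iff_integrableOn_abs_deriv_smul measurableSet_Ioo hd hinj]
    exact h1.congr_fun heq.symm measurableSet_Ioo
  · rw [← him, integral_image_eq_integral_abs_deriv_smul measurableSet_Ioo hd hinj,
      setIntegral_congr_fun measurableSet_Ioo heq, h2]

lemma aux_stieltjes (a c : ℝ) (ha : 0 < a) (ha1 : a < 1) (hc : 0 < c) :
    IntegrableOn (fun s : ℝ => s ^ (-a) / (c + s)) (Ioi 0) ∧
    Real.sin (π * a) * ∫ s in Ioi (0:ℝ), s ^ (-a) / (c + s) = π * c ^ (-a) := by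
  obtain ⟨h1, h2⟩ := aux_beta2 (1 - a) a (by linarith) ha
  have hs : 0 < Real.sin (π * a) :=
    Real.sin_pos_of_pos_of_lt_pi (by positivity) (by nlinarith [Real.pi_pos])
  have hfun : EqOn (fun s : ℝ => s ^ (1 - a - 1) * (1 + s) ^ (-(1 - a + a)))
      (fun s => c ^ a * ((c * s) ^ (-a) / (c + c * s)) * c ) (Ioi 0) := by
    intro s hs
    have hs : 0 < s := hs
    simp only
    rw [show (1 - a - 1) = -a by ring, show -(1 - a + a) = (-1:ℝ) by ring, Real.rpow_neg_one,
      Real.mul_rpow hc.le hs.le, Real.rpow_neg hc.le]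
    have : c ^ a ≠ 0 := (Real.rpow_pos_of_pos hc a).ne'
    field_simp
  have hca : c ^ a ≠ 0 := (Real.rpow_pos_of_pos hc a).ne'
  have h1' := h1.congr_fun hfun measurableSet_Ioi
  rw [setIntegral_congr_fun measurableSet_Ioi hfun] at h2
  constructor
  · have h3 : IntegrableOn (fun s : ℝ => (c * s) ^ (-a) / (c + c * s)) (Ioi 0) := by
      refine IntegrableOn.congr_fun (h1'.const_mul (c ^ a * c)⁻¹) ?_ measurableSet_Ioi
      intro s _
      simp only
      field_simp
    have := integrableOn_Ioi_comp_mul_left_iff (fun s : ℝ => s ^ (-a) / (c + s)) 0 hc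
    rw [mul_zero] at this
    exact this.1 h3
  · rw [integral_mul_const, integral_const_mul,
      integral_comp_mul_left_Ioi (fun s : ℝ => s ^ (-a) / (c + s)) 0 hc, mul_zero, smul_eq_mul,
      mul_comm (Real.Gamma _), Real.Gamma_mul_Gamma_one_sub] at h2
    simp at h2
    rw [Real.rpow_neg hc.le]
    have h3 : c ^ a * (c⁻¹ * ∫ x in Ioi (0:ℝ), x ^ (-a) / (c + x)) * c
        = c ^ a * ∫ x in Ioi (0:ℝ), x ^ (-a) / (c + x) := by field_simp
    rw [h3, eq_div_iff hs.ne'] at h2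
    rw [eq_mul_inv_iff_mul_eq₀ hca]
    linear_combination h2

lemma aux_key (α y : ℝ) (h1 : -1 < α) (h2 : α < 1) (hy : 0 ≤ y) :
    Real.sin (π * α) * (y * ∫ s in Ioi (0:ℝ), s ^ (-α) / ((1 + s) * (1 + s + y)))
      = π * (1 - (1 + y) ^ (-α)) := by
  rcases lt_trichotomy α 0 with h | h | h
  · obtain ⟨i1, e1⟩ := aux_stieltjes (1 + α) 1 (by linarith) (by linarith) one_pos
    obtain ⟨i2, e2⟩ := aux_stieltjes (1 + α) (1 + y) (by linarith) (by linarith) (by linarith)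
    have : ∀ s ∈ Ioi (0:ℝ), y * (s ^ (-α) / ((1 + s) * (1 + s + y))) =
      (1 + y) * (s ^ (-(1 + α)) / (1 + y + s)) - s ^ (-(1+α)) / (1 + s) := by
      intro s hs
      have hs : 0 < s := hs
      have : s ^ (-α) = s ^ (-(1+α)) * s := by
        rw [← Real.rpow_add_one hs.ne']; congr 1; ring
      rw [this]
      have : 1 + y + s ≠ 0 := by positivity
      have : 1 + s + y ≠ 0 := by positivity
      field_simp
      ring
    rw [← integral_const_mul, setIntegral_congr_fun measurableSet_Ioi this,
      integral_sub (i2.const_mul _) i1, integral_const_mul]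
    have hsin : Real.sin (π * (1 + α)) = - Real.sin (π * α) := by
      rw [mul_add, mul_one, add_comm, Real.sin_add_pi]
    rw [hsin] at e1 e2
    rw [Real.one_rpow] at e1
    have : (1 + y) ^ (-α) = (1 + y) ^ (-(1+α)) * (1 + y) := by
      rw [← Real.rpow_add_one (by positivity)]; congr 1; ring
    rw [this]
    linear_combination e1 - (1 + y) * e2
  · subst h; simp
  · obtain ⟨i1, e1⟩ := aux_stieltjes α 1 h h2 one_pos
    obtain ⟨i2, e2⟩ := aux_stieltjes α (1 + y) h h2 (by linarith)
    have : ∀ s ∈ Ioi (0:ℝ), y * (s ^ (-α) / ((1 + s) * (1 + s + y))) =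
      s ^ (-α) / (1 + s) - s ^ (-α) / (1 + y + s) := by
      intro s hs
      have hs : 0 < s := hs
      have : 1 + y + s ≠ 0 := by positivity
      have : 1 + s + y ≠ 0 := by positivity
      field_simp
      ring
    rw [← integral_const_mul, setIntegral_congr_fun measurableSet_Ioi this,
      integral_sub i1 i2]
    rw [Real.one_rpow] at e1
    linear_combination e1 - e2

noncomputable def kk (α s : ℝ) : ℝ := (Ioi (0:ℝ)).indicator (fun s => s ^ (-α)) s

lemma kk_meas (α : ℝ) : Measurable (kk α) := by
  unfold kk
  exact (by fun_prop : Measurable (fun s : ℝ => s ^ (-α))).indicator measurableSet_Ioi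

lemma kk_nonneg (α s : ℝ) : 0 ≤ kk α s := by
  unfold kk
  exact indicator_nonneg (fun s hs => Real.rpow_nonneg (le_of_lt hs) _) s

lemma kk_pos_eq (α s : ℝ) (hs : 0 < s) : kk α s = s ^ (-α) := by
  unfold kk; exact indicator_of_mem (show s ∈ Ioi 0 from hs) _

lemma kk_neg_eq (α s : ℝ) (hs : s ≤ 0) : kk α s = 0 := by
  unfold kk; exact indicator_of_notMem (show s ∉ Ioi 0 from not_lt.2 hs) _

lemma aux_usec0 (α y : ℝ) (h1 : -1 < α) (h2 : α < 1) (hy : 0 ≤ y) :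
    IntegrableOn (fun s : ℝ => s ^ (-α) / ((1 + s) * (1 + s + y))) (Ioi 0) := by
  obtain ⟨i, -⟩ := aux_beta2 (1 - α) (1 + α) (by linarith) (by linarith)
  refine Integrable.mono' i ?_ ?_
  · exact (by fun_prop : Measurable fun s : ℝ => s ^ (-α) / ((1 + s) * (1 + s + y))).aestronglyMeasurable
  · filter_upwards [ae_restrict_mem measurableSet_Ioi] with s hs
    have hs : 0 < s := hs
    have hp : 0 < s ^ (-α) := Real.rpow_pos_of_pos hs _
    rw [Real.norm_of_nonneg (by positivity), show 1 - α - 1 = -α by ring,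
      show -(1 - α + (1 + α)) = (-2:ℝ) by ring, Real.rpow_neg (by positivity : 0 ≤ 1 + s), ← div_eq_mul_inv]
    have : (1 + s) ^ (2:ℝ) = (1 + s) * (1 + s) := by
      rw [show (2:ℝ) = ((2:ℕ):ℝ) by norm_num, Real.rpow_natCast]; ring
    rw [this]
    exact div_le_div_of_nonneg_left hp.le (by positivity) (by nlinarith [mul_nonneg hs.le hy])

lemma aux_usec (α x u : ℝ) (h1 : -1 < α) (h2 : α < 1) (hx : 0 ≤ x) (hu : u ∈ Ioo (0:ℝ) 1) :
    IntegrableOn (fun t : ℝ => kk α (u * (1 + t) - 1) / ((1 + t) * (1 + t + x))) (Ioi 0) ∧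
    ∫ t in Ioi (0:ℝ), kk α (u * (1 + t) - 1) / ((1 + t) * (1 + t + x)) =
      u * ∫ s in Ioi (0:ℝ), s ^ (-α) / ((1 + s) * (1 + s + x * u)) := by
  obtain ⟨hu0, hu1⟩ := hu
  have hi := aux_usec0 α (x * u) h1 h2 (by positivity)
  set f := fun s : ℝ => s ^ (-α) / ((1 + s) * (1 + s + x * u)) with hf
  set g := fun t : ℝ => kk α (u * (1 + t) - 1) / ((1 + t) * (1 + t + x)) with hg
  have key : (Ioi (0:ℝ)).indicator g =
      fun t => u ^ 2 * (Ioi (0:ℝ)).indicator f (u * t + (u - 1)) := by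
    ext t
    by_cases ht : 0 < t
    · rw [indicator_of_mem (show t ∈ Ioi 0 from ht)]
      by_cases hs : 0 < u * t + (u - 1)
      · rw [indicator_of_mem (show u * t + (u - 1) ∈ Ioi 0 from hs)]
        simp only [hf, hg]
        rw [kk_pos_eq _ _ (by linarith), show u * (1 + t) - 1 = u * t + (u - 1) by ring,
          show 1 + (u * t + (u - 1)) = u * (1 + t) by ring,
          show u * (1 + t) + x * u = u * (1 + t + x) by ring]
        have : 1 + t + x ≠ 0 := by positivity
        field_simp
      · rw [indicator_of_notMem (show u * t + (u - 1) ∉ Ioi 0 from hs)]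
        simp only [hg]
        rw [kk_neg_eq _ _ (by linarith)]; simp
    · rw [indicator_of_notMem (show t ∉ Ioi 0 from ht), indicator_of_notMem, mul_zero]
      simp only [mem_Ioi, not_lt]
      nlinarith
  have hI : Integrable ((Ioi (0:ℝ)).indicator f) := (integrable_indicator_iff measurableSet_Ioi).2 hi
  constructor
  · rw [← integrable_indicator_iff measurableSet_Ioi, key]
    exact ((hI.comp_add_right (u - 1)).comp_mul_left' hu0.ne').const_mul _
  · rw [← integral_indicator measurableSet_Ioi, key, integral_const_mul,
      Measure.integral_comp_mul_left (fun s => (Ioi (0:ℝ)).indicator f (s + (u - 1))) u,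
      integral_add_right_eq_self, integral_indicator measurableSet_Ioi, abs_of_pos (by positivity),
      smul_eq_mul]
    field_simp

lemma aux_tsec (α t : ℝ) (ht : 0 < t) :
    ∫ u in Ioo (0:ℝ) 1, u ^ (-α) * (1 - u) ^ α * kk α (u * (1 + t) - 1) =
      t / (1 + t) * ∫ v in Ioo (0:ℝ) 1, v ^ (-α) * (1 - v) ^ α * (1 + t * v) ^ (-α) := by
  set f := fun v : ℝ => v ^ (-α) * (1 - v) ^ α * (1 + t * v) ^ (-α) with hf
  set g := fun u : ℝ => u ^ (-α) * (1 - u) ^ α * kk α (u * (1 + t) - 1) with hg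
  have key : (Ioo (0:ℝ) 1).indicator g =
      fun u => (Ioo (0:ℝ) 1).indicator f ((1 + t) / t * u + (-1 / t)) := by
    ext u
    obtain ⟨v, hv⟩ : ∃ v, v = (1 + t) / t * u + (-1 / t) := ⟨_, rfl⟩
    have huv : u = (1 + t * v) / (1 + t) := by rw [hv]; field_simp; ring
    rw [← hv]
    by_cases hv01 : v ∈ Ioo (0:ℝ) 1
    · have hv0 := hv01.1
      have hv1 : 0 < 1 - v := by linarith [hv01.2]
      have hum : u ∈ Ioo (0:ℝ) 1 := by
        rw [huv]
        refine ⟨by positivity, ?_⟩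
        rw [div_lt_one (by positivity)]
        nlinarith
      rw [indicator_of_mem hum, indicator_of_mem hv01]
      simp only [hf, hg]
      have e1 : u * (1 + t) - 1 = t * v := by rw [huv]; field_simp; ring
      have e2 : 1 - u = t * (1 - v) / (1 + t) := by rw [huv]; field_simp; ring
      rw [e1, kk_pos_eq _ _ (by positivity), e2, huv, Real.div_rpow (by positivity) (by positivity),
        Real.div_rpow (by positivity) (by positivity), Real.mul_rpow ht.le hv1.le,
        Real.mul_rpow ht.le hv0.le, Real.rpow_neg ht.le, Real.rpow_neg (by positivity : 0 ≤ 1 + t)]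
      have : t ^ α ≠ 0 := (Real.rpow_pos_of_pos ht α).ne'
      have : (1 + t) ^ α ≠ 0 := (Real.rpow_pos_of_pos (by positivity) α).ne'
      field_simp
    · rw [indicator_of_notMem hv01]
      by_cases hum : u ∈ Ioo (0:ℝ) 1
      · rw [indicator_of_mem hum]
        simp only [hg]
        rw [kk_neg_eq, mul_zero]
        by_contra hcon
        apply hv01
        have e1 : u * (1 + t) - 1 = t * v := by rw [huv]; field_simp; ring
        rw [e1] at hcon
        refine ⟨by by_contra h; nlinarith, ?_⟩
        nlinarith [hum.2]
      · rw [indicator_of_notMem hum]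
  rw [← integral_indicator measurableSet_Ioo, key,
      Measure.integral_comp_mul_left (fun s => (Ioo (0:ℝ) 1).indicator f (s + (-1 / t))) ((1 + t) / t),
      integral_add_right_eq_self, integral_indicator measurableSet_Ioo, abs_of_pos (by positivity),
      smul_eq_mul, inv_div]

lemma aux_w (α : ℝ) (h1 : -1 < α) (h2 : α < 1) :
    IntegrableOn (fun u : ℝ => u ^ (-α) * (1 - u) ^ α) (Ioo 0 1) ∧
    ∫ u in Ioo (0:ℝ) 1, u ^ (-α) * (1 - u) ^ α
      = Real.Gamma (1 - α) * Real.Gamma (1 + α) := by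
  have := aux_beta_real (1 - α) (1 + α) (by linarith) (by linarith)
  rw [show 1 - α - 1 = -α by ring, show 1 + α - 1 = α by ring,
    show 1 - α + (1 + α) = 2 by ring, Real.Gamma_two, div_one] at this
  exact this

noncomputable def GG (α x : ℝ) (u t : ℝ) : ℝ :=
  u ^ (-α) * (1 - u) ^ α * (kk α (u * (1 + t) - 1) / ((1 + t) * (1 + t + x)))

lemma GG_meas (α x : ℝ) : Measurable (Function.uncurry (GG α x)) := by
  unfold Function.uncurry GG
  have : Measurable (fun p : ℝ × ℝ => kk α (p.1 * (1 + p.2) - 1)) :=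
    (kk_meas α).comp (by fun_prop)
  fun_prop

lemma GG_integrable0 (α : ℝ) (h1 : -1 < α) (h2 : α < 1) :
    Integrable (Function.uncurry (GG α 0))
      ((volume.restrict (Ioo (0:ℝ) 1)).prod (volume.restrict (Ioi (0:ℝ)))) := by
  rw [integrable_prod_iff (GG_meas α 0).aestronglyMeasurable]
  constructor
  · filter_upwards [ae_restrict_mem measurableSet_Ioo] with u hu
    exact (aux_usec α 0 u h1 h2 le_rfl hu).1.const_mul (u ^ (-α) * (1 - u) ^ α)
  · have h3 := (aux_w α h1 h2).1
    have h4 : Integrable (fun u : ℝ => u ^ (-α) * (1 - u) ^ α * u) (volume.restrict (Ioo (0:ℝ) 1)) := by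
      refine Integrable.mul_bdd (c := 1) h3 (by fun_prop) ?_
      filter_upwards [ae_restrict_mem measurableSet_Ioo] with u hu
      rw [Real.norm_of_nonneg hu.1.le]; exact hu.2.le
    refine (h4.mul_const (∫ s in Ioi (0:ℝ), s ^ (-α) / ((1 + s) * (1 + s + 0)))).congr ?_
    filter_upwards [ae_restrict_mem measurableSet_Ioo] with u hu
    have h5 := (aux_usec α 0 u h1 h2 le_rfl hu).2
    rw [zero_mul] at h5
    rw [mul_assoc, ← h5, ← integral_const_mul]
    refine setIntegral_congr_fun measurableSet_Ioi ?_
    intro t ht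
    have ht : 0 < t := ht
    have hw1 : 0 ≤ u ^ (-α) := Real.rpow_nonneg hu.1.le _
    have hw2 : 0 ≤ (1 - u) ^ α := Real.rpow_nonneg (by linarith [hu.2]) _
    have := kk_nonneg α (u * (1 + t) - 1)
    simp only [Function.uncurry, GG]
    rw [Real.norm_of_nonneg (by positivity)]

lemma GG_integrable (α x : ℝ) (h1 : -1 < α) (h2 : α < 1) (hx : 0 ≤ x) :
    Integrable (Function.uncurry (GG α x))
      ((volume.restrict (Ioo (0:ℝ) 1)).prod (volume.restrict (Ioi (0:ℝ)))) := by
  refine (GG_integrable0 α h1 h2).mono (GG_meas α x).aestronglyMeasurable ?_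
  rw [Measure.prod_restrict]
  filter_upwards [ae_restrict_mem (measurableSet_Ioo.prod measurableSet_Ioi)] with p hp
  have ht : 0 < p.2 := hp.2
  simp only [Function.uncurry, GG, norm_mul, norm_div]
  have e1 : ‖1 + p.2‖ = 1 + p.2 := Real.norm_of_nonneg (by positivity)
  have e2 : ‖1 + p.2 + x‖ = 1 + p.2 + x := Real.norm_of_nonneg (by positivity)
  have e3 : ‖1 + p.2 + 0‖ = 1 + p.2 + 0 := Real.norm_of_nonneg (by positivity)
  rw [e1, e2, e3]
  gcongr

lemma aux_unit (α x : ℝ) (h1 : -1 < α) (h2 : α < 1) (hx : 0 ≤ x) :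
    IntegrableOn (fun t : ℝ => t * Fhyp α t / ((1 + t) ^ 2 * (1 + t + x))) (Ioi 0) ∧
    Fhyp α x = 1 - Real.sin (π * α) / π * x *
      ∫ t in Ioi (0:ℝ), t * Fhyp α t / ((1 + t) ^ 2 * (1 + t + x)) := by
  set C := Real.Gamma (1 - α) * Real.Gamma (1 + α) with hC
  have hC0 : 0 < C := mul_pos (Real.Gamma_pos_of_pos (by linarith)) (Real.Gamma_pos_of_pos (by linarith))
  have hF : ∀ t, ∫ v in Ioo (0:ℝ) 1, v ^ (-α) * (1 - v) ^ α * (1 + t * v) ^ (-α) = C * Fhyp α t := by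
    intro t
    rw [Fhyp, intervalIntegral.integral_of_le zero_le_one, integral_Ioc_eq_integral_Ioo, ← hC,
      one_div, mul_inv_cancel_left₀ hC0.ne']
  have hG := GG_integrable α x h1 h2 hx
  have ht : EqOn (fun t => ∫ u in Ioo (0:ℝ) 1, GG α x u t)
      (fun t => C * (t * Fhyp α t / ((1 + t) ^ 2 * (1 + t + x)))) (Ioi 0) := by
    intro t ht
    have ht : 0 < t := ht
    simp only [GG]
    simp_rw [← mul_div_assoc]
    rw [integral_div, aux_tsec α t ht, hF]
    have : 1 + t + x ≠ 0 := by positivity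
    field_simp
  have hint := hG.integral_prod_right
  have hint2 : IntegrableOn (fun t => C * (t * Fhyp α t / ((1 + t) ^ 2 * (1 + t + x)))) (Ioi 0) :=
    IntegrableOn.congr_fun hint ht measurableSet_Ioi
  have hsw := integral_integral_swap hG
  rw [setIntegral_congr_fun measurableSet_Ioi ht, integral_const_mul] at hsw
  constructor
  · refine IntegrableOn.congr_fun (hint2.const_mul C⁻¹) ?_ measurableSet_Ioi
    intro t _
    simp only
    rw [inv_mul_cancel_left₀ hC0.ne']
  · obtain ⟨w1, w2⟩ := aux_w α h1 h2
    have hL : Integrable (fun u => ∫ t in Ioi (0:ℝ), GG α x u t) (volume.restrict (Ioo (0:ℝ) 1)) :=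
      hG.integral_prod_left
    have hu : EqOn (fun u : ℝ => u ^ (-α) * (1 - u) ^ α * (1 + x * u) ^ (-α))
        (fun u => u ^ (-α) * (1 - u) ^ α - Real.sin (π * α) / π * x *
          ∫ t in Ioi (0:ℝ), GG α x u t) (Ioo 0 1) := by
      intro u hu
      have hk := aux_key α (x * u) h1 h2 (mul_nonneg hx hu.1.le)
      simp only [GG]
      rw [integral_const_mul, (aux_usec α x u h1 h2 hx hu).2]
      have : (1 + x * u) ^ (-α) = 1 - Real.sin (π * α) / π * (x * u * 
        ∫ s in Ioi (0:ℝ), s ^ (-α) / ((1 + s) * (1 + s + x * u))) := by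
        rw [div_mul_eq_mul_div, hk, mul_div_cancel_left₀ _ Real.pi_ne_zero]
        ring
      rw [this]; ring
    have := hF x
    rw [setIntegral_congr_fun measurableSet_Ioo hu, integral_sub w1 (hL.const_mul _),
      integral_const_mul, w2, hsw, ← hC] at this
    apply mul_left_cancel₀ hC0.ne'
    rw [← this]
    ring

theorem fredholm_solution (lam : ℝ) (hlam : lam ∈ Set.Ioo (-(1/π)) (1/π))
    (α : ℝ) (hα : α = Real.arcsin (lam * π) / π)
    (μ : ℝ) (hμ : 0 < μ)
    (J : ℝ → ℝ) (hJ : ∀ x, J x = x * Fhyp α (x / μ^2)) :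
    ∀ x : ℝ, 0 ≤ x →
      IntegrableOn (fun t => J t / ((t + μ^2)^2 * (t + μ^2 + x))) (Set.Ioi 0) ∧
      J x = x - lam * x^2 *
        ∫ t in Set.Ioi (0:ℝ), J t / ((t + μ^2)^2 * (t + μ^2 + x)) := by
  intro x hx
  have hpi := Real.pi_pos
  have hl1 : -1 < lam * π := by
    have := mul_lt_mul_of_pos_right hlam.1 hpi
    rwa [neg_mul, one_div, inv_mul_cancel₀ hpi.ne'] at this
  have hl2 : lam * π < 1 := by
    have := mul_lt_mul_of_pos_right hlam.2 hpi
    rwa [one_div, inv_mul_cancel₀ hpi.ne'] at this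
  have hpa : π * α = Real.arcsin (lam * π) := by rw [hα]; field_simp
  have hsin : Real.sin (π * α) / π = lam := by
    rw [hpa, Real.sin_arcsin hl1.le hl2.le]; field_simp
  have h1 : -1 < α := by
    rw [hα, lt_div_iff₀ hpi]; linarith [Real.neg_pi_div_two_le_arcsin (lam * π)]
  have h2 : α < 1 := by
    rw [hα, div_lt_iff₀ hpi]; linarith [Real.arcsin_le_pi_div_two (lam * π)]
  obtain ⟨m, hm⟩ : ∃ m, m = μ ^ 2 := ⟨_, rfl⟩
  have hm0 : 0 < m := by rw [hm]; positivity
  rw [← hm] at hJ ⊢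
  obtain ⟨hi, he⟩ := aux_unit α (x / m) h1 h2 (by positivity)
  rw [hsin] at he
  set h := fun t : ℝ => t * Fhyp α t / ((1 + t) ^ 2 * (1 + t + x / m)) with hh
  have heq : EqOn (fun t => (m ^ 2)⁻¹ * h (m⁻¹ * t))
      (fun t => J t / ((t + m) ^ 2 * (t + m + x))) (Ioi 0) := by
    intro t ht
    have ht : 0 < t := ht
    simp only [hh, hJ]
    rw [show m⁻¹ * t = t / m by ring]
    have e1 : 1 + t / m = (t + m) / m := by field_simp; ring
    have e2 : (t + m) / m + x / m = (t + m + x) / m := by field_simp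
    rw [e1, e2]
    have : t + m + x ≠ 0 := by positivity
    field_simp
  constructor
  · refine IntegrableOn.congr_fun (Integrable.const_mul ?_ _) heq measurableSet_Ioi
    refine (integrableOn_Ioi_comp_mul_left_iff h 0 (inv_pos.2 hm0)).2 ?_
    rwa [mul_zero]
  · rw [← setIntegral_congr_fun measurableSet_Ioi heq, integral_const_mul,
      integral_comp_mul_left_Ioi h 0 (inv_pos.2 hm0), mul_zero, inv_inv, smul_eq_mul, hJ, he]
    field_simp
end

section
/- For every α ∈ (0,1) and every x ≥ 0, the integral ∫₀^∞ F_α(t)/((1+t)(1+t+x)) dt converges absolutely and equals 1/(α(1−α)(1+x)) − (π/sin(πα)) · F_α(x)/(1+x). -/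
open MeasureTheory Real Set

lemma st_sub (a b : ℝ) (ha : 0 < a) (hb : 0 < b) (g : ℝ → ENNReal) :
    ∫⁻ y in Ioo 0 b, g y =
      ∫⁻ w in Ioi (0:ℝ), ENNReal.ofReal (a * b / (a + w) ^ 2) * g (b * w / (a + w)) := by
  have him : (fun w : ℝ => b * w / (a + w)) '' Ioi 0 = Ioo 0 b := by
    ext y
    simp only [mem_image, mem_Ioi, mem_Ioo]
    constructor
    · rintro ⟨w, hw, rfl⟩
      have : 0 < a + w := by positivity
      refine ⟨by positivity, ?_⟩
      rw [div_lt_iff₀ this]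
      nlinarith
    · rintro ⟨h0, h1⟩
      have : 0 < b - y := by linarith
      refine ⟨a * y / (b - y), by positivity, ?_⟩
      have h3 : a + a * y / (b - y) = a * b / (b - y) := by field_simp; ring
      rw [h3]
      field_simp
  rw [← him, lintegral_image_eq_lintegral_abs_deriv_mul (f' := fun w => a * b / (a + w) ^ 2)
    measurableSet_Ioi]
  · refine setLIntegral_congr_fun measurableSet_Ioi fun w hw => ?_
    have hw' : (0:ℝ) < w := hw
    rw [abs_of_nonneg (by positivity)]
  · intro w hw
    have hw' : (0:ℝ) < w := hw
    have : a + w ≠ 0 := by positivity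
    have h := ((hasDerivAt_id w).const_mul b).div ((hasDerivAt_id w).const_add a) this
    refine (h.congr_deriv ?_).hasDerivWithinAt
    simp only [id]
    congr 1
    ring
  · intro w hw v hv h
    have hw' : (0:ℝ) < w := hw
    have hv' : (0:ℝ) < v := hv
    have h1 : a + w ≠ 0 := by positivity
    have h2 : a + v ≠ 0 := by positivity
    simp only at h
    rw [div_eq_div_iff h1 h2] at h
    have : (a * b) * (w - v) = 0 := by linarith
    rcases mul_eq_zero.1 this with h | h
    · exact absurd h (by positivity)
    · linarith

lemma st_beta (a b : ℝ) (ha : 0 < a) (hb : 0 < b) :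
    ∫⁻ u in Ioo (0:ℝ) 1, ENNReal.ofReal (u ^ (a - 1) * (1 - u) ^ (b - 1)) =
      ENNReal.ofReal (Real.Gamma a * Real.Gamma b / Real.Gamma (a + b)) := by
  have h := ProbabilityTheory.lintegral_betaPDF_eq_one ha hb
  have hp := ProbabilityTheory.beta_pos ha hb
  rw [ProbabilityTheory.lintegral_betaPDF] at h
  simp_rw [mul_assoc] at h
  simp_rw [ENNReal.ofReal_mul (one_div_pos.2 hp).le] at h
  rw [lintegral_const_mul _ (by fun_prop)] at h
  change _ = ENNReal.ofReal (ProbabilityTheory.beta a b)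
  have h2 : ENNReal.ofReal (ProbabilityTheory.beta a b) *
      ENNReal.ofReal (1 / ProbabilityTheory.beta a b) = 1 := by
    rw [← ENNReal.ofReal_mul hp.le, mul_one_div_cancel hp.ne', ENNReal.ofReal_one]
  rw [← one_mul (lintegral _ _), ← h2, mul_assoc, h, mul_one]

lemma st_shift (s m : ℝ) (g : ℝ → ENNReal) :
    ∫⁻ t in Ioi s, g (t + m) = ∫⁻ t in Ioi (s + m), g t := by
  rw [← Set.image_add_const_Ioi,
    lintegral_image_eq_lintegral_abs_deriv_mul (f' := fun _ => 1) measurableSet_Ioi]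
  · simp
  · intro x _
    exact ((hasDerivAt_id x).add_const m).hasDerivWithinAt
  · intro x _ y _ h
    simpa using h

lemma st_tail (p c : ℝ) (hp : p < -1) (hc : 0 < c) :
    ∫⁻ t in Ioi c, ENNReal.ofReal (t ^ p) = ENNReal.ofReal (-c ^ (p + 1) / (p + 1)) := by
  rw [← integral_Ioi_rpow_of_lt hp hc, ofReal_integral_eq_lintegral_ofReal
    (integrableOn_Ioi_rpow_of_lt hp hc)]
  refine ae_restrict_of_forall_mem measurableSet_Ioi fun x hx => ?_
  exact rpow_nonneg (hc.trans hx).le _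

lemma st_swap (f : ℝ → ℝ → ENNReal) (hf : Measurable (Function.uncurry f)) :
    ∫⁻ t in Ioi (0:ℝ), ∫⁻ s in Ioo 0 t, f t s = ∫⁻ s in Ioi (0:ℝ), ∫⁻ t in Ioi s, f t s := by
  have h1 : ∀ t : ℝ, ∫⁻ s in Ioo 0 t, f t s =
      ∫⁻ s in Ioi (0:ℝ), {q : ℝ × ℝ | q.2 < q.1}.indicator (Function.uncurry f) (t, s) := by
    intro t
    rw [← Ioi_inter_Iio, Set.inter_comm, ← setLIntegral_indicator measurableSet_Iio]
    rfl
  have h2 : ∀ s ∈ Ioi (0:ℝ), ∫⁻ t in Ioi s, f t s =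
      ∫⁻ t in Ioi (0:ℝ), {q : ℝ × ℝ | q.2 < q.1}.indicator (Function.uncurry f) (t, s) := by
    intro s hs
    have : Ioi s = Ioi s ∩ Ioi 0 := by
      rw [Ioi_inter_Ioi, max_eq_left (le_of_lt hs)]
    rw [this, ← setLIntegral_indicator measurableSet_Ioi]
    rfl
  rw [setLIntegral_congr_fun measurableSet_Ioi h2]
  simp_rw [h1]
  refine lintegral_lintegral_swap (Measurable.aemeasurable ?_)
  exact hf.indicator (measurableSet_lt measurable_snd measurable_fst)

noncomputable def stE (α t : ℝ) : ENNReal :=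
  ∫⁻ w in Ioi (0:ℝ), ENNReal.ofReal ((w * (1 + w)) ^ (-α) * (1 + t + w) ^ (α - 2))

lemma st_B1 (α t : ℝ) (ht : 0 ≤ t) :
    ∫⁻ u in Ioo (0:ℝ) 1, ENNReal.ofReal (u ^ (-α) * (1 - u) ^ α * (1 + t * u) ^ (-α)) =
      ENNReal.ofReal (1 + t) * stE α t := by
  rw [st_sub (1 + t) 1 (by positivity) one_pos, stE, ← lintegral_const_mul _ (by fun_prop)]
  refine setLIntegral_congr_fun measurableSet_Ioi fun w hw => ?_
  have hw' : (0:ℝ) < w := hw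
  have e1 : 1 - 1 * w / (1 + t + w) = (1 + t) / (1 + t + w) := by field_simp; ring
  have e2 : 1 + t * (1 * w / (1 + t + w)) = (1 + t) * (1 + w) / (1 + t + w) := by
    field_simp; ring
  simp only [e1, e2]
  rw [← ENNReal.ofReal_mul (by positivity), ← ENNReal.ofReal_mul (by positivity)]
  congr 1
  refine Real.log_injOn_pos (mem_Ioi.2 (by positivity)) (mem_Ioi.2 (by positivity)) ?_
  simp (disch := positivity) only [log_mul, log_div, log_rpow, log_pow, log_one]
  push_cast
  ring

lemma st_B2 (α s : ℝ) (hs : 0 < s) :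
    ∫⁻ y in Ioo (0:ℝ) s, ENNReal.ofReal ((y * (1 + y)) ^ (-α) * (s - y) ^ (α - 1)) =
    ∫⁻ w in Ioi (0:ℝ), ENNReal.ofReal ((w * (1 + w)) ^ (-α) * (1 + s + w) ^ (α - 1)) := by
  rw [st_sub (1 + s) s (by positivity) hs]
  refine setLIntegral_congr_fun measurableSet_Ioi fun w hw => ?_
  have hw' : (0:ℝ) < w := hw
  have e1 : s - s * w / (1 + s + w) = s * (1 + s) / (1 + s + w) := by field_simp; ring
  have e2 : 1 + s * w / (1 + s + w) = (1 + s) * (1 + w) / (1 + s + w) := by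
    field_simp; ring
  simp only [e1, e2]
  rw [← ENNReal.ofReal_mul (by positivity)]
  congr 1
  refine Real.log_injOn_pos (mem_Ioi.2 (by positivity)) (mem_Ioi.2 (by positivity)) ?_
  simp (disch := positivity) only [log_mul, log_div, log_rpow, log_pow, log_one]
  push_cast
  ring

lemma st_B3 (α a : ℝ) (h0 : 0 < α) (h1 : α < 1) (ha : 0 < a) :
    ∫⁻ r in Ioi (0:ℝ), ENNReal.ofReal (r ^ (α - 1) * (a + r) ^ (-2 : ℝ)) =
    ENNReal.ofReal (a ^ (α - 2) * ((1 - α) * (Real.Gamma α * Real.Gamma (1 - α)))) := by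
  have hb := st_beta α (2 - α) h0 (by linarith)
  have hG : Real.Gamma (2 - α) = (1 - α) * Real.Gamma (1 - α) := by
    rw [← Real.Gamma_add_one (by linarith)]; congr 1; ring
  rw [show α + (2 - α) = 2 by ring, Real.Gamma_two, div_one, hG,
    st_sub a 1 ha one_pos] at hb
  rw [show Real.Gamma α * ((1 - α) * Real.Gamma (1 - α)) =
    ((1 - α) * (Real.Gamma α * Real.Gamma (1 - α))) by ring] at hb
  rw [ENNReal.ofReal_mul (by positivity), ← hb, ← lintegral_const_mul _ (by fun_prop)]
  refine setLIntegral_congr_fun measurableSet_Ioi fun w hw => ?_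
  have hw' : (0:ℝ) < w := hw
  have e1 : 1 - 1 * w / (a + w) = a / (a + w) := by field_simp; ring
  simp only [e1]
  rw [← ENNReal.ofReal_mul (by positivity), ← ENNReal.ofReal_mul (by positivity)]
  congr 1
  refine Real.log_injOn_pos (mem_Ioi.2 (by positivity)) (mem_Ioi.2 (by positivity)) ?_
  simp (disch := positivity) only [log_mul, log_div, log_rpow, log_pow, log_one]
  push_cast
  ring

lemma st_B4 (α : ℝ) (h0 : 0 < α) (h1 : α < 1) :
    ∫⁻ w in Ioi (0:ℝ), ENNReal.ofReal ((w * (1 + w)) ^ (-α) * (1 + 0 + w) ^ (α - 1)) =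
    ENNReal.ofReal (Real.Gamma α * Real.Gamma (1 - α)) := by
  have hb := st_beta (1 - α) α (by linarith) h0
  rw [show 1 - α + α = 1 by ring, Real.Gamma_one, div_one, mul_comm (Real.Gamma _),
    st_sub 1 1 one_pos one_pos] at hb
  rw [← hb]
  refine setLIntegral_congr_fun measurableSet_Ioi fun w hw => ?_
  have hw' : (0:ℝ) < w := hw
  have e1 : 1 - 1 * w / (1 + w) = 1 / (1 + w) := by field_simp; ring
  simp only [e1, add_zero]
  rw [← ENNReal.ofReal_mul (by positivity)]
  congr 1
  refine Real.log_injOn_pos (mem_Ioi.2 (by positivity)) (mem_Ioi.2 (by positivity)) ?_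
  simp (disch := positivity) only [log_mul, log_div, log_rpow, log_pow, log_one]
  push_cast
  ring

lemma st_meas (α : ℝ) : Measurable (stE α) := by
  unfold stE
  exact Measurable.lintegral_prod_right'
    (f := fun q : ℝ × ℝ =>
      ENNReal.ofReal ((q.2 * (1 + q.2)) ^ (-α) * (1 + q.1 + q.2) ^ (α - 2))) (by fun_prop)

lemma st_B5 (α s : ℝ) (h1 : α < 1) (hs : 0 ≤ s) :
    ∫⁻ t in Ioi s, stE α t = ENNReal.ofReal (1 / (1 - α)) *
    ∫⁻ w in Ioi (0:ℝ), ENNReal.ofReal ((w * (1 + w)) ^ (-α) * (1 + s + w) ^ (α - 1)) := by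
  unfold stE
  rw [lintegral_lintegral_swap (Measurable.aemeasurable (by fun_prop)),
    ← lintegral_const_mul _ (by fun_prop)]
  refine setLIntegral_congr_fun measurableSet_Ioi fun w hw => ?_
  have hw' : (0:ℝ) < w := hw
  have e : ∀ t : ℝ, ENNReal.ofReal ((w * (1 + w)) ^ (-α) * (1 + t + w) ^ (α - 2)) =
      ENNReal.ofReal ((w * (1 + w)) ^ (-α)) * ENNReal.ofReal ((t + (1 + w)) ^ (α - 2)) := by
    intro t
    rw [← ENNReal.ofReal_mul (by positivity), show t + (1 + w) = 1 + t + w by ring]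
  simp only [e]
  rw [lintegral_const_mul _ (by fun_prop),
    st_shift s (1 + w) (fun t => ENNReal.ofReal (t ^ (α - 2))),
    st_tail _ _ (by linarith) (by positivity), ← ENNReal.ofReal_mul (by positivity),
    ← ENNReal.ofReal_mul (by rw [one_div_nonneg]; linarith)]
  congr 1
  have : 1 - α ≠ 0 := by linarith
  rw [show α - 2 + 1 = -(1 - α) by ring, show s + (1 + w) = 1 + s + w by ring,
    show α - 1 = -(1 - α) by ring]
  field_simp

lemma st_pt (x t : ℝ) (hx : 0 ≤ x) (ht : 0 < t) :
    ENNReal.ofReal (1 / (1 + t + x)) + ∫⁻ s in Ioo 0 t, ENNReal.ofReal ((1 + x + s) ^ (-2:ℝ)) =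
      ENNReal.ofReal (1 / (1 + x)) := by
  have hpos : ∀ s ∈ Icc 0 t, 0 < 1 + x + s := fun s hs => by have := hs.1; positivity
  have hc : ContinuousOn (fun s : ℝ => (1 + x + s) ^ (-2:ℝ)) (Icc 0 t) := by
    refine ContinuousOn.rpow_const (by fun_prop) fun s hs => Or.inl (hpos s hs).ne'
  have hii : IntervalIntegrable (fun s : ℝ => (1 + x + s) ^ (-2:ℝ)) volume 0 t :=
    ContinuousOn.intervalIntegrable (by rwa [uIcc_of_le ht.le])
  have hI : ∫ s in (0:ℝ)..t, (1 + x + s) ^ (-2:ℝ) = -(1 / (1 + x + t)) - -(1 / (1 + x + 0)) := by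
    refine intervalIntegral.integral_eq_sub_of_hasDerivAt
      (f := fun s => -(1 / (1 + x + s))) (fun s hs => ?_) hii
    rw [uIcc_of_le ht.le] at hs
    have := hpos s hs
    have h := (((hasDerivAt_id s).const_add (1 + x)).inv this.ne').neg
    simp only [one_div]
    refine h.congr_deriv ?_
    simp only [id]
    rw [rpow_neg this.le, rpow_two]
    field_simp
  rw [intervalIntegral.integral_of_le ht.le, integral_Ioc_eq_integral_Ioo] at hI
  rw [← ofReal_integral_eq_lintegral_ofReal, hI, ← ENNReal.ofReal_add (by positivity)]
  · congr 1
    rw [show 1 + t + x = 1 + x + t by ring]; simp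
  · have : 1 / (1 + x + t) ≤ 1 / (1 + x + 0) := by gcongr
    linarith
  · exact hc.integrableOn_Icc.mono_set Ioo_subset_Icc_self
  · refine ae_restrict_of_forall_mem measurableSet_Ioo fun s hs => ?_
    exact rpow_nonneg (hpos s ⟨hs.1.le, hs.2.le⟩).le _

lemma st_D (α x : ℝ) (h0 : 0 < α) (h1 : α < 1) (hx : 0 ≤ x) :
    ∫⁻ t in Ioi (0:ℝ), stE α t * ∫⁻ s in Ioo 0 t, ENNReal.ofReal ((1 + x + s) ^ (-2:ℝ)) =
      ENNReal.ofReal (Real.Gamma α * Real.Gamma (1 - α)) * stE α x := by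
  have hm := st_meas α
  have h1' : 0 < 1 - α := by linarith
  simp_rw [← lintegral_const_mul _ (show Measurable
    (fun s : ℝ => ENNReal.ofReal ((1 + x + s) ^ (-2:ℝ))) by fun_prop)]
  rw [st_swap (fun t s => stE α t * ENNReal.ofReal ((1 + x + s) ^ (-2:ℝ)))
    ((hm.comp measurable_fst).mul (by fun_prop))]
  have a1 : ∀ s ∈ Ioi (0:ℝ), ∫⁻ t in Ioi s, stE α t * ENNReal.ofReal ((1 + x + s) ^ (-2:ℝ)) =
      ∫⁻ y in Ioo 0 s, ENNReal.ofReal (1 / (1 - α)) *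
        (ENNReal.ofReal ((y * (1 + y)) ^ (-α) * (s - y) ^ (α - 1)) *
          ENNReal.ofReal ((1 + x + s) ^ (-2:ℝ))) := by
    intro s hs
    rw [lintegral_mul_const _ hm, st_B5 α s h1 (le_of_lt hs), ← st_B2 α s hs,
      lintegral_const_mul _ (by fun_prop), lintegral_mul_const _ (by fun_prop), mul_assoc]
  rw [setLIntegral_congr_fun measurableSet_Ioi a1,
    st_swap (fun s y => ENNReal.ofReal (1 / (1 - α)) *
        (ENNReal.ofReal ((y * (1 + y)) ^ (-α) * (s - y) ^ (α - 1)) *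
          ENNReal.ofReal ((1 + x + s) ^ (-2:ℝ)))) (by fun_prop)]
  rw [stE, ← lintegral_const_mul _ (by fun_prop)]
  refine setLIntegral_congr_fun measurableSet_Ioi fun y hy => ?_
  have hy' : (0:ℝ) < y := hy
  have hG1 := Real.Gamma_pos_of_pos h0
  have hG2 := Real.Gamma_pos_of_pos h1'
  have hsh := st_shift 0 y (fun s => ENNReal.ofReal (1 / (1 - α)) *
        (ENNReal.ofReal ((y * (1 + y)) ^ (-α) * (s - y) ^ (α - 1)) *
          ENNReal.ofReal ((1 + x + s) ^ (-2:ℝ))))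
  rw [zero_add] at hsh
  rw [← hsh]
  have e : ∀ r ∈ Ioi (0:ℝ), ENNReal.ofReal (1 / (1 - α)) *
        (ENNReal.ofReal ((y * (1 + y)) ^ (-α) * (r + y - y) ^ (α - 1)) *
          ENNReal.ofReal ((1 + x + (r + y)) ^ (-2:ℝ))) =
        ENNReal.ofReal (1 / (1 - α) * (y * (1 + y)) ^ (-α)) *
          ENNReal.ofReal (r ^ (α - 1) * ((1 + x + y) + r) ^ (-2 : ℝ)) := by
    intro r hr
    have hr' : (0:ℝ) < r := hr
    rw [add_sub_cancel_right, ← ENNReal.ofReal_mul (by positivity),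
      ← ENNReal.ofReal_mul (by positivity), ← ENNReal.ofReal_mul (by positivity),
      show 1 + x + (r + y) = 1 + x + y + r by ring]
    congr 1
    ring
  rw [setLIntegral_congr_fun measurableSet_Ioi e, lintegral_const_mul _ (by fun_prop),
    st_B3 α _ h0 h1 (by positivity), ← ENNReal.ofReal_mul (by positivity),
    ← ENNReal.ofReal_mul (by positivity)]
  congr 1
  field_simp

lemma st_main (α x : ℝ) (h0 : 0 < α) (h1 : α < 1) (hx : 0 ≤ x) :
    (∫⁻ t in Ioi (0:ℝ), stE α t * ENNReal.ofReal (1 / (1 + t + x))) +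
      ENNReal.ofReal (Real.Gamma α * Real.Gamma (1 - α)) * stE α x =
    ENNReal.ofReal (1 / (1 - α) * (Real.Gamma α * Real.Gamma (1 - α)) * (1 / (1 + x))) := by
  have hm := st_meas α
  have h1' : 0 < 1 - α := by linarith
  have hG1 := Real.Gamma_pos_of_pos h0
  have hG2 := Real.Gamma_pos_of_pos h1'
  rw [← st_D α x h0 h1 hx, ← lintegral_add_left (show Measurable
    (fun t => stE α t * ENNReal.ofReal (1 / (1 + t + x))) from hm.mul (by fun_prop))]
  have e : ∀ t ∈ Ioi (0:ℝ), stE α t * ENNReal.ofReal (1 / (1 + t + x)) +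
      stE α t * ∫⁻ s in Ioo 0 t, ENNReal.ofReal ((1 + x + s) ^ (-2:ℝ)) =
      stE α t * ENNReal.ofReal (1 / (1 + x)) := by
    intro t ht
    rw [← mul_add, st_pt x t hx ht]
  rw [setLIntegral_congr_fun measurableSet_Ioi e, lintegral_mul_const _ hm,
    st_B5 α 0 h1 le_rfl, st_B4 α h0 h1, ← ENNReal.ofReal_mul (by positivity),
    ← ENNReal.ofReal_mul (by positivity)]

lemma st_F (α : ℝ) (h0 : 0 < α) (h1 : α < 1) (t : ℝ) (ht : 0 ≤ t) (hfin : stE α t ≠ ⊤) :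
    Fhyp α t / (1 + t) = 1 / (α * (Real.Gamma α * Real.Gamma (1 - α))) * (stE α t).toReal := by
  have h := st_B1 α t ht
  have e : ∫ u in (0:ℝ)..1, u ^ (-α) * (1 - u) ^ α * (1 + t * u) ^ (-α) =
      (1 + t) * (stE α t).toReal := by
    rw [intervalIntegral.integral_of_le zero_le_one, integral_Ioc_eq_integral_Ioo,
      integral_eq_lintegral_of_nonneg_ae, h, ENNReal.toReal_mul,
      ENNReal.toReal_ofReal (by positivity)]
    · refine ae_restrict_of_forall_mem measurableSet_Ioo fun u hu => ?_
      have := hu.1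
      have : 0 < 1 - u := by linarith [hu.2]
      simp only [Pi.zero_apply]
      positivity
    · exact Measurable.aestronglyMeasurable (by fun_prop)
  have hG1 := Real.Gamma_pos_of_pos h0
  have hG2 := Real.Gamma_pos_of_pos (show 0 < 1 - α by linarith)
  rw [Fhyp, e, add_comm 1 α, Real.Gamma_add_one h0.ne']
  field_simp

theorem stieltjes_transform (α : ℝ) (hα : α ∈ Set.Ioo (0:ℝ) 1) (x : ℝ) (hx : 0 ≤ x) :
    IntegrableOn (fun t => Fhyp α t / ((1 + t) * (1 + t + x))) (Set.Ioi 0) ∧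
    ∫ t in Set.Ioi (0:ℝ), Fhyp α t / ((1 + t) * (1 + t + x)) =
      1 / (α * (1 - α) * (1 + x)) - (π / Real.sin (π * α)) * Fhyp α x / (1 + x) := by
  obtain ⟨h0, h1⟩ := hα
  have hm := st_meas α
  have h1' : 0 < 1 - α := by linarith
  have hG1 := Real.Gamma_pos_of_pos h0
  have hG2 := Real.Gamma_pos_of_pos h1'
  have hG : 0 < Real.Gamma α * Real.Gamma (1 - α) := by positivity
  rw [← Real.Gamma_mul_Gamma_one_sub]
  have hfin : ∀ t : ℝ, 0 ≤ t → stE α t ≠ ⊤ := by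
    intro t ht htop
    have h := st_main α t h0 h1 ht
    rw [htop, ENNReal.mul_top (by simpa using hG), add_top] at h
    exact ENNReal.ofReal_ne_top h.symm
  have hM := st_main α x h0 h1 hx
  set G := Real.Gamma α * Real.Gamma (1 - α) with hGdef
  have hL : ∫⁻ t in Ioi (0:ℝ), stE α t * ENNReal.ofReal (1 / (1 + t + x)) ≠ ⊤ := by
    intro htop
    rw [htop, top_add] at hM
    exact ENNReal.ofReal_ne_top hM.symm
  have hmm : Measurable (fun t => stE α t * ENNReal.ofReal (1 / (1 + t + x))) :=
    hm.mul (by fun_prop)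
  have hint : IntegrableOn (fun t => (stE α t * ENNReal.ofReal (1 / (1 + t + x))).toReal) (Ioi 0) :=
    integrable_toReal_of_lintegral_ne_top hmm.aemeasurable hL
  have hval : ∫ t in Ioi (0:ℝ), (stE α t * ENNReal.ofReal (1 / (1 + t + x))).toReal =
      (∫⁻ t in Ioi (0:ℝ), stE α t * ENNReal.ofReal (1 / (1 + t + x))).toReal :=
    integral_toReal hmm.aemeasurable (ae_lt_top hmm hL)
  have hpt : ∀ t ∈ Ioi (0:ℝ), Fhyp α t / ((1 + t) * (1 + t + x)) =
      1 / (α * G) * (stE α t * ENNReal.ofReal (1 / (1 + t + x))).toReal := by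
    intro t ht
    have ht' : (0:ℝ) < t := ht
    rw [← div_div, st_F α h0 h1 t ht'.le (hfin t ht'.le), ENNReal.toReal_mul,
      ENNReal.toReal_ofReal (by positivity)]
    ring
  have hM' := congrArg ENNReal.toReal hM
  rw [ENNReal.toReal_add hL (ENNReal.mul_ne_top ENNReal.ofReal_ne_top (hfin x hx)),
    ENNReal.toReal_mul, ENNReal.toReal_ofReal hG.le, ENNReal.toReal_ofReal (by positivity)] at hM'
  refine ⟨(integrableOn_congr_fun hpt measurableSet_Ioi).2 (hint.const_mul _), ?_⟩
  rw [setIntegral_congr_fun measurableSet_Ioi hpt, integral_const_mul, hval,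
    eq_sub_of_add_eq hM', mul_div_assoc, st_F α h0 h1 x hx (hfin x hx), ← hGdef]
  field_simp
end

section
/- For every α ∈ (0,1), the integral ∫₀^∞ F_α(t)/(1+t)² dt converges absolutely and equals 1/(α(1−α)) − π/sin(πα). -/
open MeasureTheory Real Set

lemma subst_aux (s t : Set ℝ) (hs : MeasurableSet s) (f f' g : ℝ → ℝ) (F H : ℝ → ℝ)
    (hf : ∀ x ∈ s, HasDerivAt f (f' x) x) (hst : ∀ x ∈ s, f x ∈ t) (hts : ∀ y ∈ t, g y ∈ s)
    (hfg : ∀ y ∈ t, f (g y) = y) (hgf : ∀ x ∈ s, g (f x) = x)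
    (hH : ∀ x ∈ s, |f' x| * F (f x) = H x) :
    ∫⁻ y in t, ENNReal.ofReal (F y) = ∫⁻ x in s, ENNReal.ofReal (H x) := by
  have him : f '' s = t := by
    ext y
    constructor
    · rintro ⟨x, hx, rfl⟩
      exact hst x hx
    · intro hy
      exact ⟨g y, hts y hy, hfg y hy⟩
  have hinj : InjOn f s := by
    intro x hx y hy hxy
    rw [← hgf x hx, ← hgf y hy, hxy]
  rw [← him, lintegral_image_eq_lintegral_abs_deriv_mul hs
    (fun x hx => (hf x hx).hasDerivWithinAt) hinj]
  refine setLIntegral_congr_fun hs (fun x hx => ?_)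
  try simp only
  rw [← ENNReal.ofReal_mul (abs_nonneg _), hH x hx]

lemma beta_lint (a b : ℝ) (ha : 0 < a) (hb : 0 < b) :
    ∫⁻ x in Ioo (0:ℝ) 1, ENNReal.ofReal (x ^ (a - 1) * (1 - x) ^ (b - 1)) =
      ENNReal.ofReal (ProbabilityTheory.beta a b) := by
  have hB := ProbabilityTheory.beta_pos ha hb
  have h := ProbabilityTheory.lintegral_betaPDF_eq_one ha hb
  rw [ProbabilityTheory.lintegral_betaPDF] at h
  have : ∀ x : ℝ, ENNReal.ofReal (x ^ (a - 1) * (1 - x) ^ (b - 1)) =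
      ENNReal.ofReal (ProbabilityTheory.beta a b) *
      ENNReal.ofReal (1 / ProbabilityTheory.beta a b * x ^ (a - 1) * (1 - x) ^ (b - 1)) := by
    intro x
    rw [← ENNReal.ofReal_mul hB.le]
    congr 1
    field_simp
  simp_rw [this]
  rw [lintegral_const_mul' _ _ ENNReal.ofReal_ne_top, h, mul_one]

lemma lemC (α w : ℝ) (h0 : 0 < α) (h1 : α < 1) (hw : 0 < w) :
    ∫⁻ z in Ioi (0:ℝ), ENNReal.ofReal (z ^ (α - 1) / (z + w)) =
      ENNReal.ofReal (w ^ (α - 1) * (π / Real.sin (π * α))) := by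
  rw [subst_aux (Ioo 0 1) (Ioi 0) measurableSet_Ioo (fun x => w * x / (1 - x))
    (fun x => w / (1 - x) ^ 2) (fun z => z / (z + w)) _
    (fun x => w ^ (α - 1) * (x ^ (α - 1) * (1 - x) ^ ((1 - α) - 1)))]
  · simp_rw [ENNReal.ofReal_mul (rpow_nonneg hw.le (α - 1))]
    rw [lintegral_const_mul' _ _ ENNReal.ofReal_ne_top, beta_lint _ _ h0 (by linarith)]
    congr 2
    rw [ProbabilityTheory.beta, Gamma_mul_Gamma_one_sub]
    simp
  · rintro x ⟨hx0, hx1⟩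
    have : 1 - x ≠ 0 := by linarith
    have h := (((hasDerivAt_id x).const_mul w).div ((hasDerivAt_id x).const_sub 1) this)
    convert! h using 1
    simp only [id]
    field_simp
    ring
  · rintro x ⟨hx0, hx1⟩
    have : 0 < 1 - x := by linarith
    simp only [mem_Ioi]
    positivity
  · intro z hz
    have hz : 0 < z := hz
    refine ⟨by positivity, ?_⟩
    rw [div_lt_one (by positivity)]
    linarith
  · intro z hz
    have hz : 0 < z := hz
    have : 1 - z / (z + w) = w / (z + w) := by field_simp; ring
    simp only [this]
    field_simp
  · rintro x ⟨hx0, hx1⟩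
    have : 0 < 1 - x := by linarith
    have h2 : w * x / (1 - x) + w = w / (1 - x) := by field_simp; ring
    simp only [h2]
    field_simp
  · rintro x ⟨hx0, hx1⟩
    have : 0 < 1 - x := by linarith
    have h2 : w * x / (1 - x) + w = w / (1 - x) := by field_simp; ring
    simp only [h2]
    rw [abs_of_pos (by positivity), div_rpow (by positivity) this.le, mul_rpow hw.le hx0.le,
      show 1 - α - 1 = -(α - 1) - 1 by ring, rpow_sub_one this.ne' (-(α - 1)), rpow_neg this.le]
    have := rpow_pos_of_pos this (α - 1)
    field_simp

lemma lemD (α w : ℝ) (h0 : 0 < α) (h1 : α < 1) (hw : 0 < w) (hw1 : w < 1) :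
    ∫⁻ z in Ioi (0:ℝ), ENNReal.ofReal ((1 - w) * z ^ α / ((1 + z) * (z + w))) =
      ENNReal.ofReal ((π / Real.sin (π * α)) * (1 - w ^ α)) := by
  have hs : 0 < Real.sin (π * α) := sin_pos_of_pos_of_lt_pi (by positivity)
    (by nlinarith [pi_pos])
  have e : ∫⁻ z in Ioi (0:ℝ), ENNReal.ofReal (z ^ (α - 1) / (z + 1)) =
      (∫⁻ z in Ioi (0:ℝ), ENNReal.ofReal ((1 - w) * z ^ α / ((1 + z) * (z + w)))) +
      ENNReal.ofReal w * ∫⁻ z in Ioi (0:ℝ), ENNReal.ofReal (z ^ (α - 1) / (z + w)) := by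
    rw [← lintegral_const_mul' _ _ ENNReal.ofReal_ne_top, ← lintegral_add_left (by fun_prop)]
    refine setLIntegral_congr_fun measurableSet_Ioi (fun z hz => ?_)
    have hz : 0 < z := hz
    have : 0 < 1 - w := by linarith
    try simp only
    rw [← ENNReal.ofReal_mul hw.le, ← ENNReal.ofReal_add (by positivity) (by positivity),
      rpow_sub_one hz.ne']
    congr 1
    field_simp
    ring
  rw [lemC _ _ h0 h1 one_pos, lemC _ _ h0 h1 hw, ← ENNReal.ofReal_mul hw.le] at e
  rw [ENNReal.eq_sub_of_add_eq ENNReal.ofReal_ne_top e.symm, ← ENNReal.ofReal_sub _ (by positivity)]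
  congr 1
  rw [rpow_sub_one hw.ne', one_rpow]
  field_simp

lemma lemN (α : ℝ) (h0 : 0 < α) (h1 : α < 1) :
    α * (π / Real.sin (π * α)) ≤ 1 / (1 - α) := by
  have hb1 : ProbabilityTheory.beta (1 + α) (1 - α) = α * (π / Real.sin (π * α)) := by
    rw [ProbabilityTheory.beta, ← Gamma_mul_Gamma_one_sub, add_comm 1 α, Gamma_add_one h0.ne',
      show α + 1 + (1 - α) = 2 by ring, Gamma_two]
    ring
  have hh : 0 < 1 - α := by linarith
  have hb2 : ProbabilityTheory.beta 1 (1 - α) = 1 / (1 - α) := by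
    have := Gamma_pos_of_pos hh
    rw [ProbabilityTheory.beta, add_comm 1 (1 - α), Gamma_add_one hh.ne', Gamma_one]
    field_simp
  rw [← hb1, ← hb2, ← ENNReal.ofReal_le_ofReal_iff (ProbabilityTheory.beta_pos one_pos hh).le,
    ← beta_lint _ _ (by linarith) hh, ← beta_lint _ _ one_pos hh]
  refine setLIntegral_mono' measurableSet_Ioo (fun x hx => ENNReal.ofReal_le_ofReal ?_)
  have : 0 < 1 - x := by linarith [hx.2]
  have : x ^ (1 + α - 1) ≤ x ^ ((1:ℝ) - 1) :=
    rpow_le_rpow_of_exponent_ge hx.1 hx.2.le (by linarith)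
  gcongr

lemma lemJ (α : ℝ) (h0 : 0 < α) (h1 : α < 1) :
    ∫⁻ w in Ioo (0:ℝ) 1, ENNReal.ofReal ((1 - w) ^ (-α) *
        ((π / Real.sin (π * α)) * (1 - w ^ α))) =
      ENNReal.ofReal ((π / Real.sin (π * α)) * (1 / (1 - α) - α * (π / Real.sin (π * α)))) := by
  have hs : 0 < Real.sin (π * α) := sin_pos_of_pos_of_lt_pi (by positivity)
    (by nlinarith [pi_pos])
  have hC : 0 < π / Real.sin (π * α) := by positivity
  have hb1 : ProbabilityTheory.beta (1 + α) (1 - α) = α * (π / Real.sin (π * α)) := by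
    rw [ProbabilityTheory.beta, ← Gamma_mul_Gamma_one_sub, add_comm 1 α, Gamma_add_one h0.ne',
      show α + 1 + (1 - α) = 2 by ring, Gamma_two]
    ring
  have hb2 : ProbabilityTheory.beta 1 (1 - α) = 1 / (1 - α) := by
    have hh : 0 < 1 - α := by linarith
    have := Gamma_pos_of_pos hh
    rw [ProbabilityTheory.beta, add_comm 1 (1 - α), Gamma_add_one hh.ne', Gamma_one]
    field_simp
  have e1 := beta_lint (1 + α) (1 - α) (by linarith) (by linarith)
  have e2 := beta_lint 1 (1 - α) (by linarith) (by linarith)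
  rw [hb1] at e1
  rw [hb2] at e2
  generalize π / Real.sin (π * α) = C at *
  have e : ENNReal.ofReal C *
      ∫⁻ x in Ioo (0:ℝ) 1, ENNReal.ofReal (x ^ ((1:ℝ) - 1) * (1 - x) ^ (1 - α - 1)) =
      (∫⁻ w in Ioo (0:ℝ) 1, ENNReal.ofReal ((1 - w) ^ (-α) * (C * (1 - w ^ α)))) +
      ENNReal.ofReal C *
        ∫⁻ x in Ioo (0:ℝ) 1, ENNReal.ofReal (x ^ (1 + α - 1) * (1 - x) ^ (1 - α - 1)) := by
    rw [← lintegral_const_mul' _ _ ENNReal.ofReal_ne_top,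
      ← lintegral_const_mul' _ _ ENNReal.ofReal_ne_top, ← lintegral_add_left (by fun_prop)]
    refine setLIntegral_congr_fun measurableSet_Ioo (fun z hz => ?_)
    obtain ⟨hz0, hz1⟩ := hz
    have hz2 : 0 < 1 - z := by linarith
    have hz3 : 0 ≤ 1 - z ^ α := by linarith [rpow_le_one hz0.le hz1.le h0.le]
    try simp only
    rw [← ENNReal.ofReal_mul hC.le, ← ENNReal.ofReal_mul hC.le,
      ← ENNReal.ofReal_add (by positivity) (by positivity)]
    congr 1
    rw [show 1 - α - 1 = -α by ring, show 1 + α - 1 = α by ring]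
    simp
    ring
  rw [e1, e2, ← ENNReal.ofReal_mul hC.le, ← ENNReal.ofReal_mul hC.le] at e
  rw [ENNReal.eq_sub_of_add_eq ENNReal.ofReal_ne_top e.symm, ← ENNReal.ofReal_sub _ (by positivity)]
  congr 1
  ring

lemma step3 (α u : ℝ) (hu : 0 < u) (hu1 : u < 1) :
    ∫⁻ t in Ioi (0:ℝ), ENNReal.ofReal (u ^ (-α) * (1 - u) ^ α * (1 + t * u) ^ (-α) / (1 + t) ^ 2) =
    ∫⁻ w in Ioo 0 (1 - u), ENNReal.ofReal (u ^ (-α) * (1 - u - w) ^ α * (1 - w) ^ (-α) / (1 - u)) := by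
  have hv : 0 < 1 - u := by linarith
  apply subst_aux (Ioo 0 (1 - u)) (Ioi 0) measurableSet_Ioo (fun w => w / (1 - u - w))
    (fun w => (1 - u) / (1 - u - w) ^ 2) (fun t => (1 - u) * t / (1 + t))
  · rintro x ⟨hx0, hx1⟩
    have : 1 - u - x ≠ 0 := by linarith
    have h := ((hasDerivAt_id x).div ((hasDerivAt_id x).const_sub (1 - u)) this)
    convert! h using 1
    simp only [id]
    field_simp
    ring
  · rintro x ⟨hx0, hx1⟩
    have : 0 < 1 - u - x := by linarith
    simp only [mem_Ioi]
    positivity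
  · intro z hz
    have hz : 0 < z := hz
    refine ⟨by positivity, ?_⟩
    rw [div_lt_iff₀ (by positivity)]
    linarith
  · intro z hz
    have hz : 0 < z := hz
    have : 1 - u - (1 - u) * z / (1 + z) = (1 - u) / (1 + z) := by field_simp; ring
    simp only [this]
    field_simp
  · rintro x ⟨hx0, hx1⟩
    have : 0 < 1 - u - x := by linarith
    have h2 : 1 + x / (1 - u - x) = (1 - u) / (1 - u - x) := by field_simp; ring
    simp only [h2]
    field_simp
  · rintro x ⟨hx0, hx1⟩
    have h : 0 < 1 - u - x := by linarith
    have h' : 0 < 1 - x := by linarith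
    have h2 : 1 + x / (1 - u - x) = (1 - u) / (1 - u - x) := by field_simp; ring
    have h3 : 1 + x / (1 - u - x) * u = (1 - u) * (1 - x) / (1 - u - x) := by field_simp; ring
    simp only [h2, h3]
    rw [abs_of_pos (by positivity), div_rpow (by positivity) h.le, mul_rpow hv.le h'.le,
      rpow_neg hv.le, rpow_neg h.le]
    have := rpow_pos_of_pos h α
    have := rpow_pos_of_pos hv α
    field_simp

lemma step5 (α w : ℝ) (hw : 0 < w) (hw1 : w < 1) :
    ∫⁻ u in Ioo 0 (1 - w), ENNReal.ofReal (u ^ (-α) * (1 - u - w) ^ α * (1 - w) ^ (-α) / (1 - u)) =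
    ∫⁻ z in Ioi (0:ℝ), ENNReal.ofReal ((1 - w) ^ (-α) * ((1 - w) * z ^ α / ((1 + z) * (z + w)))) := by
  have hv : 0 < 1 - w := by linarith
  apply subst_aux (Ioi 0) (Ioo 0 (1 - w)) measurableSet_Ioi (fun z => (1 - w) / (1 + z))
    (fun z => - (1 - w) / (1 + z) ^ 2) (fun u => (1 - w - u) / u)
  · intro z hz
    have hz : 0 < z := hz
    have : 1 + z ≠ 0 := by positivity
    have h := ((hasDerivAt_const z (1 - w)).div ((hasDerivAt_id z).const_add 1) this)
    convert! h using 1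
    simp only [id]
    field_simp
    ring
  · intro z hz
    have hz : 0 < z := hz
    refine ⟨by positivity, ?_⟩
    rw [div_lt_iff₀ (by positivity)]
    nlinarith
  · rintro x ⟨hx0, hx1⟩
    have : 0 < 1 - w - x := by linarith
    simp only [mem_Ioi]
    positivity
  · rintro x ⟨hx0, hx1⟩
    have h2 : 1 + (1 - w - x) / x = (1 - w) / x := by field_simp; ring
    simp only [h2]
    field_simp
  · intro z hz
    have hz : 0 < z := hz
    have : 1 - w - (1 - w) / (1 + z) = (1 - w) * z / (1 + z) := by field_simp; ring
    simp only [this]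
    field_simp
  · intro z hz
    have hz : 0 < z := hz
    have hz1 : 0 < 1 + z := by linarith
    have h2 : 1 - (1 - w) / (1 + z) = (z + w) / (1 + z) := by field_simp; ring
    have h3 : 1 - (1 - w) / (1 + z) - w = (1 - w) * z / (1 + z) := by field_simp; ring
    simp only [h3]
    rw [h2]
    rw [neg_div, abs_neg, abs_of_pos (by positivity), div_rpow hv.le hz1.le,
      div_rpow (by positivity) hz1.le, mul_rpow hv.le hz.le, rpow_neg hv.le, rpow_neg hz1.le]
    have := rpow_pos_of_pos hz1 α
    have := rpow_pos_of_pos hv α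
    field_simp

lemma step4 (f : ℝ → ℝ → ENNReal) (hf : Measurable (Function.uncurry f)) :
    ∫⁻ u in Ioo (0:ℝ) 1, ∫⁻ w in Ioo 0 (1 - u), f u w =
    ∫⁻ w in Ioo (0:ℝ) 1, ∫⁻ u in Ioo 0 (1 - w), f u w := by
  have hm : MeasurableSet {p : ℝ × ℝ | 0 < p.1 ∧ 0 < p.2 ∧ p.1 + p.2 < 1} := by measurability
  have hS := hf.indicator hm
  set S := {p : ℝ × ℝ | 0 < p.1 ∧ 0 < p.2 ∧ p.1 + p.2 < 1}
  have a1 : ∫⁻ u in Ioo (0:ℝ) 1, ∫⁻ w in Ioo 0 (1 - u), f u w =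
      ∫⁻ u, ∫⁻ w, S.indicator (Function.uncurry f) (u, w) := by
    rw [← lintegral_indicator measurableSet_Ioo]
    refine lintegral_congr fun u => ?_
    by_cases hu : u ∈ Ioo (0:ℝ) 1
    · rw [indicator_of_mem hu, ← lintegral_indicator measurableSet_Ioo]
      refine lintegral_congr fun w => ?_
      refine indicator_eq_indicator ?_ rfl
      simp only [S, mem_Ioo, mem_ofPred_eq] at *
      grind
    · rw [indicator_of_notMem hu]
      symm
      rw [← lintegral_zero (μ := (volume : Measure ℝ))]
      refine lintegral_congr fun w => ?_
      rw [indicator_of_notMem]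
      simp only [S, mem_Ioo, mem_ofPred_eq] at *
      grind
  have a2 : ∫⁻ w in Ioo (0:ℝ) 1, ∫⁻ u in Ioo 0 (1 - w), f u w =
      ∫⁻ w, ∫⁻ u, S.indicator (Function.uncurry f) (u, w) := by
    rw [← lintegral_indicator measurableSet_Ioo]
    refine lintegral_congr fun w => ?_
    by_cases hu : w ∈ Ioo (0:ℝ) 1
    · rw [indicator_of_mem hu, ← lintegral_indicator measurableSet_Ioo]
      refine lintegral_congr fun u => ?_
      refine indicator_eq_indicator ?_ rfl
      simp only [S, mem_Ioo, mem_ofPred_eq] at *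
      grind
    · rw [indicator_of_notMem hu]
      symm
      rw [← lintegral_zero (μ := (volume : Measure ℝ))]
      refine lintegral_congr fun u => ?_
      rw [indicator_of_notMem]
      simp only [S, mem_Ioo, mem_ofPred_eq] at *
      grind
  rw [a1, a2]
  exact lintegral_lintegral_swap (f := fun u w => S.indicator (Function.uncurry f) (u, w))
    hS.aemeasurable

lemma total (α : ℝ) (h0 : 0 < α) (h1 : α < 1) :
    ∫⁻ t in Ioi (0:ℝ), ∫⁻ u in Ioo (0:ℝ) 1,
      ENNReal.ofReal (u ^ (-α) * (1 - u) ^ α * (1 + t * u) ^ (-α) / (1 + t) ^ 2) =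
      ENNReal.ofReal ((π / Real.sin (π * α)) * (1 / (1 - α) - α * (π / Real.sin (π * α)))) := by
  rw [lintegral_lintegral_swap (by
    apply Measurable.aemeasurable
    unfold Function.uncurry
    fun_prop)]
  rw [setLIntegral_congr_fun measurableSet_Ioo (fun u hu => step3 α u hu.1 hu.2)]
  rw [step4 (fun u w => ENNReal.ofReal (u ^ (-α) * (1 - u - w) ^ α * (1 - w) ^ (-α) / (1 - u)))
    (by unfold Function.uncurry; fun_prop)]
  rw [← lemJ α h0 h1]
  refine setLIntegral_congr_fun measurableSet_Ioo (fun w hw => ?_)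
  have hw1 : 0 ≤ 1 - w := by linarith [hw.2]
  try simp only
  rw [step5 α w hw.1 hw.2]
  simp_rw [ENNReal.ofReal_mul (rpow_nonneg hw1 (-α))]
  rw [lintegral_const_mul' _ _ ENNReal.ofReal_ne_top, lemD α w h0 h1 hw.1 hw.2]

lemma Fh_lint (α t : ℝ) (h0 : 0 < α) (h1 : α < 1) (ht : 0 < t) :
    0 ≤ Fhyp α t / (1 + t) ^ 2 ∧ ENNReal.ofReal (Fhyp α t / (1 + t) ^ 2) =
      ENNReal.ofReal (1 / (Real.Gamma (1 - α) * Real.Gamma (1 + α))) * ∫⁻ u in Ioo (0:ℝ) 1,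
      ENNReal.ofReal (u ^ (-α) * (1 - u) ^ α * (1 + t * u) ^ (-α) / (1 + t) ^ 2) := by
  have g1 : 0 < Real.Gamma (1 - α) := Gamma_pos_of_pos (by linarith)
  have g2 : 0 < Real.Gamma (1 + α) := Gamma_pos_of_pos (by linarith)
  have hnn : ∀ u ∈ Ioo (0:ℝ) 1,
      0 ≤ u ^ (-α) * (1 - u) ^ α * (1 + t * u) ^ (-α) / (1 + t) ^ 2 := by
    rintro u ⟨hu, hu1⟩
    have : 0 < 1 - u := by linarith
    positivity
  have key : Fhyp α t / (1 + t) ^ 2 = (1 / (Real.Gamma (1 - α) * Real.Gamma (1 + α))) *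
      ∫ u in Ioo (0:ℝ) 1, u ^ (-α) * (1 - u) ^ α * (1 + t * u) ^ (-α) / (1 + t) ^ 2 := by
    rw [Fhyp, intervalIntegral.integral_of_le zero_le_one, integral_Ioc_eq_integral_Ioo,
      integral_div, mul_div_assoc]
  have hi : IntegrableOn (fun u : ℝ => u ^ (-α) * (1 - u) ^ α * (1 + t * u) ^ (-α) / (1 + t) ^ 2)
      (Ioo 0 1) := by
    have hb : IntegrableOn (fun u : ℝ => u ^ (-α)) (Ioo 0 1) := by
      have := intervalIntegral.intervalIntegrable_rpow' (a := 0) (b := 1) (r := -α) (by linarith)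
      rw [intervalIntegrable_iff_integrableOn_Ioo_of_le zero_le_one] at this
      exact this
    refine Integrable.mono' hb (Measurable.aestronglyMeasurable (by fun_prop)) ?_
    refine (ae_restrict_iff' measurableSet_Ioo).2 (Filter.Eventually.of_forall fun u hu => ?_)
    rw [Real.norm_of_nonneg (hnn u hu)]
    obtain ⟨hu, hu1⟩ := hu
    have q0 : 0 < 1 - u := by linarith
    have q1 : (1 - u) ^ α ≤ 1 := rpow_le_one q0.le (by linarith) h0.le
    have q2 : (1 + t * u) ^ (-α) ≤ 1 :=
      rpow_le_one_of_one_le_of_nonpos (by nlinarith [mul_pos ht hu]) (by linarith)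
    have q3 : 1 ≤ (1 + t) ^ 2 := by nlinarith
    have q4 : 0 < u ^ (-α) := rpow_pos_of_pos hu _
    have q5 : 0 < 1 + t * u := by positivity
    calc _ ≤ u ^ (-α) * 1 * 1 / 1 := by gcongr
      _ = _ := by ring
  have hae : 0 ≤ᵐ[volume.restrict (Ioo (0:ℝ) 1)]
      (fun u : ℝ => u ^ (-α) * (1 - u) ^ α * (1 + t * u) ^ (-α) / (1 + t) ^ 2) :=
    (ae_restrict_iff' measurableSet_Ioo).2 (Filter.Eventually.of_forall hnn)
  constructor
  · rw [key]
    exact mul_nonneg (by positivity) (integral_nonneg_of_ae hae)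
  · rw [key, ENNReal.ofReal_mul (by positivity), ofReal_integral_eq_lintegral_ofReal hi hae]

lemma Fh_meas (α : ℝ) : Measurable (fun t => Fhyp α t / (1 + t) ^ 2) := by
  have : StronglyMeasurable (fun t : ℝ => ∫ u in Ioc (0:ℝ) 1,
      u ^ (-α) * (1 - u) ^ α * (1 + t * u) ^ (-α)) := by
    apply StronglyMeasurable.integral_prod_right
      (f := fun t u : ℝ => u ^ (-α) * (1 - u) ^ α * (1 + t * u) ^ (-α))
    apply Measurable.stronglyMeasurable
    unfold Function.uncurry
    fun_prop
  have := this.measurable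
  simp only [Fhyp, intervalIntegral.integral_of_le (zero_le_one (α := ℝ))]
  fun_prop

theorem boundary_integral (α : ℝ) (hα : α ∈ Set.Ioo (0:ℝ) 1) :
    IntegrableOn (fun t => Fhyp α t / (1 + t)^2) (Set.Ioi 0) ∧
    ∫ t in Set.Ioi (0:ℝ), Fhyp α t / (1 + t)^2 =
      1 / (α * (1 - α)) - π / Real.sin (π * α) := by
  obtain ⟨h0, h1⟩ := hα
  have hs : 0 < Real.sin (π * α) := sin_pos_of_pos_of_lt_pi (by positivity)
    (by nlinarith [pi_pos])
  have g1 : 0 < Real.Gamma (1 - α) := Gamma_pos_of_pos (by linarith)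
  have g2 : 0 < Real.Gamma (1 + α) := Gamma_pos_of_pos (by linarith)
  have hae : 0 ≤ᵐ[volume.restrict (Ioi (0:ℝ))] (fun t => Fhyp α t / (1 + t)^2) :=
    (ae_restrict_iff' measurableSet_Ioi).2
      (Filter.Eventually.of_forall fun t ht => (Fh_lint α t h0 h1 ht).1)
  have hL : ∫⁻ t in Ioi (0:ℝ), ENNReal.ofReal (Fhyp α t / (1 + t)^2) =
      ENNReal.ofReal (1 / (α * (1 - α)) - π / Real.sin (π * α)) := by
    rw [setLIntegral_congr_fun measurableSet_Ioi (fun t ht => (Fh_lint α t h0 h1 ht).2),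
      lintegral_const_mul' _ _ ENNReal.ofReal_ne_top, total α h0 h1,
      ← ENNReal.ofReal_mul (by positivity)]
    congr 1
    have : Real.Gamma (1 - α) * Real.Gamma (1 + α) = α * (π / Real.sin (π * α)) := by
      rw [← Gamma_mul_Gamma_one_sub, add_comm 1 α, Gamma_add_one h0.ne']
      ring
    rw [this]
    have : 1 - α ≠ 0 := by linarith
    have hC : π / Real.sin (π * α) ≠ 0 := by positivity
    generalize π / Real.sin (π * α) = C at *
    field_simp
  have hm := (Fh_meas α).aestronglyMeasurable (μ := volume.restrict (Ioi (0:ℝ)))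
  refine ⟨⟨hm, ?_⟩, ?_⟩
  · rw [hasFiniteIntegral_iff_ofReal hae, hL]
    exact ENNReal.ofReal_lt_top
  · rw [integral_eq_lintegral_of_nonneg_ae hae hm, hL, ENNReal.toReal_ofReal]
    have hn := lemN α h0 h1
    have : 0 < 1 - α := by linarith
    rw [sub_nonneg, le_div_iff₀ (by positivity)]
    rw [le_div_iff₀ this] at hn
    linarith
end

section
/- Let λ ∈ (−1/π, 1/π), set α = arcsin(λπ)/π, let μ > 0, and define J(x) := x·F_α(x/μ²) for x ≥ 0. Then for every real p, the integral ∫₀^∞ J(t)·(1+t)^{−p/2} dt is finite if and only if p > 4 − 2α. Consequently the spectral dimension inf{ p : ∫₀^∞ J(t)(1+t)^{−p/2} dt < ∞ } equals 4 − 2·arcsin(λπ)/π. -/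
open MeasureTheory Real Set

lemma beta_intOn {a b : ℝ} (ha : -1 < a) (hb : -1 < b) :
    IntegrableOn (fun u : ℝ => u ^ a * (1 - u) ^ b) (Ioo 0 1) := by
  have h := Complex.betaIntegral_convergent (u := ((a + 1 : ℝ) : ℂ)) (v := ((b + 1 : ℝ) : ℂ))
    (by rw [Complex.ofReal_re]; linarith) (by rw [Complex.ofReal_re]; linarith)
  rw [intervalIntegrable_iff_integrableOn_Ioo_of_le zero_le_one] at h
  refine IntegrableOn.congr_fun h.norm ?_ measurableSet_Ioo
  intro u hu
  have h1 : (0:ℝ) < u := hu.1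
  have h2 : (0:ℝ) < 1 - u := by linarith [hu.2]
  have h3 : (1 - (u:ℂ)) = ((1 - u : ℝ) : ℂ) := by push_cast; rfl
  simp only [norm_mul]
  rw [h3, Complex.norm_cpow_eq_rpow_re_of_pos h1, Complex.norm_cpow_eq_rpow_re_of_pos h2]
  simp

lemma key_bound (α m M u t y : ℝ) (hm : 0 < m) (hM : 0 < M) (hu : 0 < u) (ht : 0 < t)
    (h1 : m * u * (1 + t) ≤ y) (h2 : y ≤ M * (1 + t)) :
    min (m ^ (-α) * u ^ (-α)) (M ^ (-α)) * (1 + t) ^ (-α) ≤ y ^ (-α) ∧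
    y ^ (-α) ≤ (m ^ (-α) * u ^ (-α) + M ^ (-α)) * (1 + t) ^ (-α) := by
  have ht' : 0 < 1 + t := by linarith
  have hp : 0 < m * u * (1 + t) := by positivity
  have hy : 0 < y := by linarith
  have e1 : (m * u * (1 + t)) ^ (-α) = m ^ (-α) * u ^ (-α) * (1 + t) ^ (-α) := by
    rw [Real.mul_rpow (by positivity) ht'.le, Real.mul_rpow hm.le hu.le]
  have e2 : (M * (1 + t)) ^ (-α) = M ^ (-α) * (1 + t) ^ (-α) := by
    rw [Real.mul_rpow hM.le ht'.le]
  have q1 : 0 < m ^ (-α) * u ^ (-α) := by positivity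
  have q2 : 0 < M ^ (-α) := by positivity
  have q3 : 0 < (1 + t) ^ (-α) := by positivity
  have l1 := mul_le_mul_of_nonneg_right (min_le_left (m ^ (-α) * u ^ (-α)) (M ^ (-α))) q3.le
  have l2 := mul_le_mul_of_nonneg_right (min_le_right (m ^ (-α) * u ^ (-α)) (M ^ (-α))) q3.le
  have p1 := mul_pos q1 q3
  have p2 := mul_pos q2 q3
  rw [add_mul]
  rcases le_total 0 α with h | h
  · have g1 := Real.rpow_le_rpow_of_nonpos hp h1 (by linarith : -α ≤ 0)
    have g2 := Real.rpow_le_rpow_of_nonpos hy h2 (by linarith : -α ≤ 0)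
    constructor <;> linarith
  · have g1 := Real.rpow_le_rpow hp.le h1 (by linarith : 0 ≤ -α)
    have g2 := Real.rpow_le_rpow hy.le h2 (by linarith : 0 ≤ -α)
    constructor <;> linarith

lemma Fhyp_bounds (α : ℝ) (h1 : -(1/2) < α) (h2 : α < 1/2) (k : ℝ) (hk : 0 < k) :
    ∃ c C : ℝ, 0 < c ∧ 0 < C ∧ ∀ t : ℝ, 0 < t →
      c * (1 + t) ^ (-α) ≤ Fhyp α (t / k) ∧ Fhyp α (t / k) ≤ C * (1 + t) ^ (-α) := by
  set m := min 1 (1 / k) with hm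
  set M := max 1 (1 / k) with hM
  have hk' : 0 < 1 / k := by positivity
  have m0 : 0 < m := lt_min one_pos hk'
  have M0 : 0 < M := lt_max_of_lt_left one_pos
  have hG : 0 < 1 / (Real.Gamma (1 - α) * Real.Gamma (1 + α)) := by
    have := Real.Gamma_pos_of_pos (by linarith : 0 < 1 - α)
    have := Real.Gamma_pos_of_pos (by linarith : 0 < 1 + α)
    positivity
  set K := 1 / (Real.Gamma (1 - α) * Real.Gamma (1 + α)) with hK
  have i1 : IntegrableOn (fun u : ℝ => u ^ (-α) * (1 - u) ^ α * (m ^ (-α) * u ^ (-α)))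
      (Ioo 0 1) := by
    refine IntegrableOn.congr_fun ((beta_intOn (a := -α + -α) (b := α) (by linarith)
      (by linarith)).const_mul (m ^ (-α))) ?_ measurableSet_Ioo
    intro u hu
    simp only
    rw [Real.rpow_add hu.1]
    ring
  have i2 : IntegrableOn (fun u : ℝ => u ^ (-α) * (1 - u) ^ α * M ^ (-α)) (Ioo 0 1) :=
    (beta_intOn (a := -α) (b := α) (by linarith) (by linarith)).mul_const _
  set lo := fun u : ℝ => u ^ (-α) * (1 - u) ^ α * min (m ^ (-α) * u ^ (-α)) (M ^ (-α)) with hlo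
  set up := fun u : ℝ => u ^ (-α) * (1 - u) ^ α * (m ^ (-α) * u ^ (-α) + M ^ (-α)) with hup
  have iup : IntegrableOn up (Ioo 0 1) := by
    refine (i1.add i2).congr_fun ?_ measurableSet_Ioo
    intro u hu
    simp only [hup, Pi.add_apply]
    ring
  have wpos : ∀ u ∈ Ioo (0:ℝ) 1, 0 < u ^ (-α) * (1 - u) ^ α := by
    intro u hu
    have h1 : (0:ℝ) < u := hu.1
    have h2 : (0:ℝ) < 1 - u := by linarith [hu.2]
    positivity
  have lopos : ∀ u ∈ Ioo (0:ℝ) 1, 0 < lo u := by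
    intro u hu
    have h1 : (0:ℝ) < u := hu.1
    exact mul_pos (wpos u hu) (lt_min (by positivity) (by positivity))
  have ilo : IntegrableOn lo (Ioo 0 1) := by
    refine Integrable.mono' i2 (Measurable.aestronglyMeasurable (by fun_prop)) ?_
    refine ae_restrict_of_forall_mem measurableSet_Ioo (fun u hu ↦ ?_)
    rw [Real.norm_of_nonneg (lopos u hu).le]
    exact mul_le_mul_of_nonneg_left (min_le_right _ _) (wpos u hu).le
  have cpos : 0 < ∫ u in Ioo (0:ℝ) 1, lo u := by
    have := intervalIntegral.intervalIntegral_pos_of_pos_on (f := lo) (a := 0) (b := 1)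
      ((intervalIntegrable_iff_integrableOn_Ioo_of_le zero_le_one).2 ilo) lopos one_pos
    rwa [intervalIntegral.integral_of_le zero_le_one, integral_Ioc_eq_integral_Ioo] at this
  have loup : ∀ u ∈ Ioo (0:ℝ) 1, lo u ≤ up u := by
    intro u hu
    have h1 : (0:ℝ) < u := hu.1
    refine mul_le_mul_of_nonneg_left ((min_le_right _ _).trans ?_) (wpos u hu).le
    have : 0 < m ^ (-α) * u ^ (-α) := by positivity
    linarith
  have Cpos : 0 < ∫ u in Ioo (0:ℝ) 1, up u :=
    cpos.trans_le (setIntegral_mono_on ilo iup measurableSet_Ioo loup)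
  refine ⟨K * ∫ u in Ioo (0:ℝ) 1, lo u, K * ∫ u in Ioo (0:ℝ) 1, up u,
    mul_pos hG cpos, mul_pos hG Cpos, ?_⟩
  intro t ht
  have ht' : 0 < 1 + t := by linarith
  have kb : ∀ u ∈ Ioo (0:ℝ) 1,
      lo u * (1 + t) ^ (-α) ≤ u ^ (-α) * (1 - u) ^ α * (1 + t / k * u) ^ (-α) ∧
      u ^ (-α) * (1 - u) ^ α * (1 + t / k * u) ^ (-α) ≤ up u * (1 + t) ^ (-α) := by
    intro u hu
    have hu0 : (0:ℝ) < u := hu.1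
    have hu1 : u < 1 := hu.2
    have a1 : m ≤ 1 := min_le_left _ _
    have a2 : m ≤ 1 / k := min_le_right _ _
    have a3 : 1 ≤ M := le_max_left _ _
    have a4 : 1 / k ≤ M := le_max_right _ _
    have e : t / k * u = (1 / k) * (t * u) := by ring
    have tu : 0 < t * u := by positivity
    have tu' : t * u ≤ t := by nlinarith
    have := key_bound α m M u t (1 + t / k * u) m0 M0 hu0 ht
      (by rw [e]; nlinarith [mul_le_mul_of_nonneg_right a2 tu.le])
      (by rw [e]; nlinarith [mul_le_mul_of_nonneg_right a4 tu.le])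
    have w := (wpos u hu).le
    have g1 := mul_le_mul_of_nonneg_left this.1 w
    have g2 := mul_le_mul_of_nonneg_left this.2 w
    rw [← mul_assoc] at g1 g2
    exact ⟨g1, g2⟩
  have imid : IntegrableOn (fun u : ℝ => u ^ (-α) * (1 - u) ^ α * (1 + t / k * u) ^ (-α))
      (Ioo 0 1) := by
    refine Integrable.mono' (iup.mul_const ((1 + t) ^ (-α)))
      (Measurable.aestronglyMeasurable (by fun_prop)) ?_
    refine ae_restrict_of_forall_mem measurableSet_Ioo (fun u hu ↦ ?_)
    rw [Real.norm_of_nonneg]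
    · exact (kb u hu).2
    · exact (mul_nonneg (lopos u hu).le (by positivity)).trans (kb u hu).1
  have f1 := setIntegral_mono_on (ilo.mul_const ((1 + t) ^ (-α))) imid measurableSet_Ioo
    (fun u hu => (kb u hu).1)
  have f2 := setIntegral_mono_on imid (iup.mul_const ((1 + t) ^ (-α))) measurableSet_Ioo
    (fun u hu => (kb u hu).2)
  rw [integral_mul_const] at f1 f2
  unfold Fhyp
  rw [intervalIntegral.integral_of_le zero_le_one, integral_Ioc_eq_integral_Ioo, ← hK,
    mul_assoc, mul_assoc]
  exact ⟨mul_le_mul_of_nonneg_left f1 hG.le, mul_le_mul_of_nonneg_left f2 hG.le⟩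

lemma Fhyp_meas (α : ℝ) : Measurable (Fhyp α) := by
  unfold Fhyp
  simp only [intervalIntegral.integral_of_le zero_le_one]
  refine Measurable.const_mul ?_ _
  refine StronglyMeasurable.measurable ?_
  refine StronglyMeasurable.integral_prod_right'
    (f := fun q : ℝ × ℝ => q.2 ^ (-α) * (1 - q.2) ^ α * (1 + q.1 * q.2) ^ (-α)) ?_
  exact Measurable.stronglyMeasurable (by fun_prop)

theorem spectral_dimension (lam : ℝ) (hlam : lam ∈ Set.Ioo (-(1/π)) (1/π))
    (α : ℝ) (hα : α = Real.arcsin (lam * π) / π)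
    (μ : ℝ) (hμ : 0 < μ)
    (J : ℝ → ℝ) (hJ : ∀ x, J x = x * Fhyp α (x / μ^2)) :
    (∀ p : ℝ, IntegrableOn (fun t => J t * (1 + t) ^ (-(p/2))) (Set.Ioi 0) ↔
      4 - 2*α < p) ∧
    sInf {p : ℝ | IntegrableOn (fun t => J t * (1 + t) ^ (-(p/2))) (Set.Ioi 0)} =
      4 - 2 * Real.arcsin (lam * π) / π := by
  have hπ := Real.pi_pos
  have l1 : -1 < lam * π := by
    have := mul_lt_mul_of_pos_right hlam.1 hπ
    rwa [neg_mul, one_div, inv_mul_cancel₀ hπ.ne'] at this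
  have l2 : lam * π < 1 := by
    have := mul_lt_mul_of_pos_right hlam.2 hπ
    rwa [one_div, inv_mul_cancel₀ hπ.ne'] at this
  have a1 : -(1/2) < α := by
    rw [hα, lt_div_iff₀ hπ]
    have := Real.neg_pi_div_two_lt_arcsin.2 l1
    linarith
  have a2 : α < 1/2 := by
    rw [hα, div_lt_iff₀ hπ]
    have := Real.arcsin_lt_pi_div_two.2 l2
    linarith
  obtain ⟨c, C, hc, hC, hb⟩ := Fhyp_bounds α a1 a2 (μ^2) (by positivity)
  have main : ∀ p : ℝ, IntegrableOn (fun t => J t * (1 + t) ^ (-(p/2))) (Set.Ioi 0) ↔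
      4 - 2*α < p := by
    intro p
    have hFm := Fhyp_meas α
    have hJm : Measurable J := by
      rw [funext hJ]
      fun_prop
    constructor
    · intro h
      have h' := h.mono_set (Ioi_subset_Ioi (zero_le_one (α := ℝ)))
      set s := -α + -(p/2) with hs
      set d := min 1 ((2:ℝ) ^ s) with hd
      have d0 : 0 < d := lt_min one_pos (by positivity)
      have key : IntegrableOn (fun t : ℝ => (c * d) * t ^ (1 + s)) (Ioi 1) := by
        refine Integrable.mono' h' (Measurable.aestronglyMeasurable (by fun_prop)) ?_
        refine ae_restrict_of_forall_mem measurableSet_Ioi (fun t ht ↦ ?_)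
        have ht1 : (1:ℝ) < t := ht
        have ht0 : 0 < t := by linarith
        have ht' : 0 < 1 + t := by linarith
        rw [Real.norm_of_nonneg (by positivity), hJ]
        have b := (hb t ht0).1
        have r : d * t ^ s ≤ (1 + t) ^ s := by
          have hts : 0 < t ^ s := by positivity
          rcases le_total 0 s with h0 | h0
          · calc d * t ^ s ≤ 1 * t ^ s := mul_le_mul_of_nonneg_right (min_le_left _ _) hts.le
              _ ≤ (1 + t) ^ s := by
                rw [one_mul]; exact Real.rpow_le_rpow ht0.le (by linarith) h0
          · calc d * t ^ s ≤ 2 ^ s * t ^ s :=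
                  mul_le_mul_of_nonneg_right (min_le_right _ _) hts.le
              _ = (2 * t) ^ s := (Real.mul_rpow (by norm_num) ht0.le).symm
              _ ≤ (1 + t) ^ s := Real.rpow_le_rpow_of_nonpos ht' (by linarith) h0
        calc c * d * t ^ (1 + s) = c * t * (d * t ^ s) := by
              rw [Real.rpow_add ht0, Real.rpow_one]; ring
          _ ≤ c * t * (1 + t) ^ s := mul_le_mul_of_nonneg_left r (by positivity)
          _ = t * (c * (1 + t) ^ (-α)) * (1 + t) ^ (-(p/2)) := by
              rw [hs, Real.rpow_add ht']; ring
          _ ≤ _ := by gcongr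
      have key2 : IntegrableOn (fun t : ℝ => t ^ (1 + s)) (Ioi 1) := by
        have := key.const_mul (c * d)⁻¹
        refine IntegrableOn.congr_fun this (fun t _ => ?_) measurableSet_Ioi
        rw [← mul_assoc, inv_mul_cancel₀ (by positivity), one_mul]
      rw [integrableOn_Ioi_rpow_iff one_pos] at key2
      linarith
    · intro hp
      have hi := (integrableOn_add_rpow_Ioi_of_lt (a := 1 + (-α + -(p/2))) (c := 0) (m := 1)
        (by linarith) (by norm_num)).const_mul C
      refine Integrable.mono' hi (Measurable.aestronglyMeasurable (by fun_prop)) ?_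
      refine ae_restrict_of_forall_mem measurableSet_Ioi (fun t ht ↦ ?_)
      have ht0 : (0:ℝ) < t := ht
      have ht' : 0 < 1 + t := by linarith
      have b := hb t ht0
      have F0 : 0 ≤ Fhyp α (t / μ^2) := le_trans (by positivity) b.1
      rw [hJ, Real.norm_of_nonneg (by positivity)]
      calc t * Fhyp α (t / μ^2) * (1 + t) ^ (-(p/2))
          ≤ (1 + t) * (C * (1 + t) ^ (-α)) * (1 + t) ^ (-(p/2)) := by
            have : t ≤ 1 + t := by linarith
            have := b.2
            gcongr
        _ = C * (t + 1) ^ (1 + (-α + -(p/2))) := by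
            rw [add_comm t 1, Real.rpow_add ht', Real.rpow_add ht', Real.rpow_one]; ring
  refine ⟨main, ?_⟩
  have : {p : ℝ | IntegrableOn (fun t => J t * (1 + t) ^ (-(p/2))) (Set.Ioi 0)}
      = Ioi (4 - 2*α) := by
    ext p
    exact main p
  rw [this, csInf_Ioi, hα]
  ring
end

section
/- Let α ∈ (−1,1). If y : [0,∞) → ℝ is continuous on [0,∞), twice continuously differentiable on (0,∞), satisfies x(1+x)y''(x) + (2+4x)y'(x) + (2+α−α²)y(x) = 0 for all x > 0, and y(0) = 1, then y(x) = F_α(x)/(1+x) for all x ≥ 0. -/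
open MeasureTheory Real Set

lemma pos_aux (z u : ℝ) (hz : -1 < z) (h0 : 0 ≤ u) (h1 : u ≤ 1) : 0 < 1 + z * u := by
  rcases h0.eq_or_lt with rfl | h
  · simp
  · have : 0 < (1 + z) * u := mul_pos (by linarith) h
    linarith

lemma hw_aux (α : ℝ) (hα : α ∈ Set.Ioo (-1 : ℝ) 1) :
    IntervalIntegrable (fun u : ℝ => u ^ (-α) * (1 - u) ^ α) volume 0 1 ∧
    ∫ u in (0:ℝ)..1, u ^ (-α) * (1 - u) ^ α = Real.Gamma (1 - α) * Real.Gamma (1 + α) := by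
  obtain ⟨h1, h2⟩ := hα
  have hc := Complex.betaIntegral_convergent (u := ((1 - α : ℝ) : ℂ)) (v := ((1 + α : ℝ) : ℂ))
    (by simp; linarith) (by simp; linarith)
  have hb := ProbabilityTheory.beta_eq_betaIntegralReal (1 - α) (1 + α) (by linarith) (by linarith)
  have heq : ∀ u ∈ Set.uIcc (0:ℝ) 1,
      (u : ℂ) ^ (((1 - α : ℝ) : ℂ) - 1) * (1 - (u : ℂ)) ^ (((1 + α : ℝ) : ℂ) - 1)
        = ((u ^ (-α) * (1 - u) ^ α : ℝ) : ℂ) := by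
    intro u hu
    rw [Set.uIcc_of_le zero_le_one] at hu
    have e1 : (((1 - α : ℝ) : ℂ) - 1) = ((-α : ℝ) : ℂ) := by push_cast; ring
    have e2 : (((1 + α : ℝ) : ℂ) - 1) = ((α : ℝ) : ℂ) := by push_cast; ring
    have e3 : (1 - (u : ℂ)) = ((1 - u : ℝ) : ℂ) := by push_cast; ring
    rw [e1, e2, e3, ← Complex.ofReal_cpow hu.1, ← Complex.ofReal_cpow (by linarith [hu.2])]
    push_cast; ring
  constructor
  · have hc' : IntervalIntegrable (fun u : ℝ => ((u ^ (-α) * (1 - u) ^ α : ℝ) : ℂ)) volume 0 1 := by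
      refine hc.congr ?_
      intro u hu
      exact heq u (Set.uIoc_subset_uIcc hu)
    rw [intervalIntegrable_iff] at hc' ⊢
    simpa [IntegrableOn] using hc'.re
  · rw [Complex.betaIntegral, intervalIntegral.integral_congr heq, intervalIntegral.integral_ofReal,
      Complex.ofReal_re, ProbabilityTheory.beta] at hb
    rw [← hb, show (1 - α + (1 + α)) = 2 by ring, Real.Gamma_two, div_one]

lemma int_aux (g : ℝ → ℝ) (hg : IntervalIntegrable g volume 0 1) (p : ℝ) (x : ℝ) (hx : -1 < x) :
    IntervalIntegrable (fun u => g u * (1 + x * u) ^ p) volume 0 1 := by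
  apply hg.mul_continuousOn
  apply ContinuousOn.rpow_const (by fun_prop)
  intro u hu
  rw [Set.uIcc_of_le zero_le_one] at hu
  exact Or.inl (pos_aux x u hx hu.1 hu.2).ne'

lemma deriv_aux (g : ℝ → ℝ) (hg : IntervalIntegrable g volume 0 1) (p : ℝ) (x : ℝ) (hx : -1 < x) :
    HasDerivAt (fun x => ∫ u in (0:ℝ)..1, g u * (1 + x * u) ^ p)
      (p * ∫ u in (0:ℝ)..1, (g u * u) * (1 + x * u) ^ (p - 1)) x := by
  obtain ⟨a, ha1, ha2⟩ := exists_between hx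
  have hpos : ∀ z ∈ Set.Icc a (x+1), ∀ u ∈ Set.Icc (0:ℝ) 1, 0 < 1 + z * u := by
    intro z hz u hu
    exact pos_aux z u (ha1.trans_le hz.1) hu.1 hu.2
  have hgu : IntervalIntegrable (fun u => g u * u) volume 0 1 :=
    hg.mul_continuousOn (by fun_prop)
  have hcont : ContinuousOn (fun z : ℝ × ℝ => (1 + z.1 * z.2) ^ (p - 1))
      (Set.Icc a (x+1) ×ˢ Set.Icc (0:ℝ) 1) := by
    apply ContinuousOn.rpow_const (by fun_prop)
    rintro ⟨z, u⟩ ⟨hz, hu⟩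
    exact Or.inl (hpos z hz u hu).ne'
  obtain ⟨C, hC⟩ := (isCompact_Icc.prod isCompact_Icc).exists_bound_of_continuousOn hcont
  have := (intervalIntegral.hasDerivAt_integral_of_dominated_loc_of_deriv_le (μ := volume)
    (a := 0) (b := 1) (x₀ := x) (s := Set.Icc a (x+1))
    (F := fun x u => g u * (1 + x * u) ^ p)
    (F' := fun x u => p * ((g u * u) * (1 + x * u) ^ (p - 1)))
    (bound := fun u => |p| * (|g u * u| * C))
    (Icc_mem_nhds ha2 (by linarith)) ?_ (int_aux g hg p x hx) ?_ ?_ ?_ ?_).2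
  · rwa [intervalIntegral.integral_const_mul] at this
  · filter_upwards [Ioi_mem_nhds hx] with z hz
    exact (intervalIntegrable_iff.1 (int_aux g hg p z hz)).aestronglyMeasurable
  · exact (intervalIntegrable_iff.1 ((int_aux _ hgu (p-1) x hx).const_mul p)).aestronglyMeasurable
  · refine Filter.Eventually.of_forall fun u hu z hz => ?_
    rw [norm_mul, norm_mul]
    have hu' := Set.uIoc_subset_uIcc hu
    rw [Set.uIcc_of_le zero_le_one] at hu'
    have := hC (z, u) ⟨hz, hu'⟩
    simp only [Real.norm_eq_abs] at this ⊢
    gcongr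
  · exact (hgu.abs.mul_const C).const_mul _
  · refine Filter.Eventually.of_forall fun u hu z hz => ?_
    have hu' := Set.uIoc_subset_uIcc hu
    rw [Set.uIcc_of_le zero_le_one] at hu'
    have h0 : HasDerivAt (fun z : ℝ => 1 + z * u) u z := by
      simpa using ((hasDerivAt_id z).mul_const u).const_add 1
    have h1 := (h0.rpow_const (p := p) (Or.inl (hpos z hz u hu').ne')).const_mul (g u)
    convert! h1 using 1
    ring

lemma ode_aux (α : ℝ) (hα : α ∈ Set.Ioo (-1 : ℝ) 1) (x : ℝ) (hx : 0 < x) :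
    x * (1 + x) * (-α * ((-α - 1) * ∫ u in (0:ℝ)..1,
        (u ^ (-α) * (1 - u) ^ α * u * u) * (1 + x * u) ^ (-α - 1 - 1)))
      + (2 + 2 * x) * (-α * ∫ u in (0:ℝ)..1,
        (u ^ (-α) * (1 - u) ^ α * u) * (1 + x * u) ^ (-α - 1))
      + α * (1 - α) * ∫ u in (0:ℝ)..1,
        (u ^ (-α) * (1 - u) ^ α) * (1 + x * u) ^ (-α) = 0 := by
  have hw := (hw_aux α hα).1
  have hw1 : IntervalIntegrable (fun u : ℝ => u ^ (-α) * (1 - u) ^ α * u) volume 0 1 :=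
    hw.mul_continuousOn (by fun_prop)
  have hw2 : IntervalIntegrable (fun u : ℝ => u ^ (-α) * (1 - u) ^ α * u * u) volume 0 1 :=
    hw1.mul_continuousOn (by fun_prop)
  have i0 := int_aux _ hw (-α) x (by linarith)
  have i1 := int_aux _ hw1 (-α-1) x (by linarith)
  have i2 := int_aux _ hw2 (-α-1-1) x (by linarith)
  obtain ⟨h1, h2⟩ := hα
  have j0 := i0.const_mul (α * (1 - α))
  have j1 := i1.const_mul ((2 + 2 * x) * (-α))
  have j2 := i2.const_mul (x * (1 + x) * (-α * (-α - 1)))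
  have key := intervalIntegral.integral_eq_sub_of_hasDerivAt_of_le (a := 0) (b := 1) zero_le_one
    (f := fun u => α * (u ^ (1 - α) * (1 - u) ^ (1 + α) * (1 + x * u) ^ (-α - 1)))
    (f' := fun u => x * (1 + x) * (-α * (-α - 1)) *
        ((u ^ (-α) * (1 - u) ^ α * u * u) * (1 + x * u) ^ (-α - 1 - 1))
      + (2 + 2 * x) * (-α) * ((u ^ (-α) * (1 - u) ^ α * u) * (1 + x * u) ^ (-α - 1))
      + α * (1 - α) * ((u ^ (-α) * (1 - u) ^ α) * (1 + x * u) ^ (-α))) ?_ ?_ ((j2.add j1).add j0)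
  · rw [intervalIntegral.integral_add (j2.add j1) j0, intervalIntegral.integral_add j2 j1,
      intervalIntegral.integral_const_mul, intervalIntegral.integral_const_mul,
      intervalIntegral.integral_const_mul] at key
    have z1 : (0:ℝ) ^ (1 - α) = 0 := Real.zero_rpow (by linarith)
    have z2 : (0:ℝ) ^ (1 + α) = 0 := Real.zero_rpow (by linarith)
    simp only [sub_self, z1, z2] at key
    linarith
  · have c1 : ContinuousOn (fun u : ℝ => u ^ (1 - α)) (Set.Icc 0 1) :=
      (Real.continuous_rpow_const (by linarith)).continuousOn
    have c2 : ContinuousOn (fun u : ℝ => (1 - u) ^ (1 + α)) (Set.Icc 0 1) :=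
      ((Real.continuous_rpow_const (by linarith)).comp (by fun_prop :
        Continuous fun u : ℝ => 1 - u)).continuousOn
    have c3 : ContinuousOn (fun u : ℝ => (1 + x * u) ^ (-α - 1)) (Set.Icc 0 1) := by
      apply ContinuousOn.rpow_const (by fun_prop)
      intro u hu
      left
      nlinarith [hu.1]
    exact continuousOn_const.mul ((c1.mul c2).mul c3)
  · intro u hu
    have hu0 := hu.1
    have hu1 : 0 < 1 - u := by linarith [hu.2]
    have hz : 0 < 1 + x * u := by positivity
    have d1 := Real.hasDerivAt_rpow_const (x := u) (p := 1 - α) (Or.inl hu0.ne')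
    have d2 := ((hasDerivAt_id u).const_sub 1).rpow_const (p := 1 + α) (Or.inl hu1.ne')
    have d3 := (((hasDerivAt_id u).const_mul x).const_add 1).rpow_const (p := -α - 1)
      (Or.inl hz.ne')
    convert! ((d1.mul d2).mul d3).const_mul α using 1
    simp only [id, Pi.mul_apply]
    have e1 : u ^ (1 - α) = u ^ (-α) * u := by
      rw [show 1 - α = -α + 1 by ring, Real.rpow_add_one hu0.ne']
    have e2 : (1 - u) ^ (1 + α) = (1 - u) ^ α * (1 - u) := by
      rw [show 1 + α = α + 1 by ring, Real.rpow_add_one hu1.ne']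
    have e3 : (1 + x * u) ^ (-α - 1) = (1 + x * u) ^ (-α - 1 - 1) * (1 + x * u) := by
      rw [← Real.rpow_add_one hz.ne']; congr 1; ring
    have e4 : (1 + x * u) ^ (-α) = (1 + x * u) ^ (-α - 1 - 1) * (1 + x * u) * (1 + x * u) := by
      rw [← Real.rpow_add_one hz.ne', ← Real.rpow_add_one hz.ne']; congr 1; ring
    rw [e4, e3, e1, e2, show 1 - α - 1 = -α by ring, show 1 + α - 1 = α by ring]
    ring

/-- Wronskian argument. -/
lemma uniq_aux (c : ℝ) (A A' A'' Y Y' Y'' : ℝ → ℝ)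
    (hA0 : ContinuousOn A (Set.Ici 0)) (hApos : ∀ x, 0 ≤ x → 0 < A x)
    (hY0 : ContinuousOn Y (Set.Ici 0))
    (hA : ∀ x, 0 < x → HasDerivAt A (A' x) x) (hA' : ∀ x, 0 < x → HasDerivAt A' (A'' x) x)
    (hY : ∀ x, 0 < x → HasDerivAt Y (Y' x) x) (hY' : ∀ x, 0 < x → HasDerivAt Y' (Y'' x) x)
    (oA : ∀ x, 0 < x → x * (1 + x) * A'' x + (2 + 2 * x) * A' x + c * A x = 0)
    (oY : ∀ x, 0 < x → x * (1 + x) * Y'' x + (2 + 2 * x) * Y' x + c * Y x = 0) :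
    ∀ x, 0 ≤ x → Y x / A x = Y 0 / A 0 := by
  have hW : ∃ K, ∀ x ∈ Set.Ioi (0:ℝ), x ^ 2 * (Y' x * A x - Y x * A' x) = K := by
    have hd : ∀ x ∈ Set.Ioi (0:ℝ),
        HasDerivAt (fun x => x ^ 2 * (Y' x * A x - Y x * A' x)) 0 x := by
      intro x hx
      have hx : 0 < x := hx
      have := (hasDerivAt_pow 2 x).mul
        (((hY' x hx).mul (hA x hx)).sub ((hY x hx).mul (hA' x hx)))
      convert! this using 1
      simp only [Pi.mul_apply, Pi.sub_apply]
      have h1 : (1 + x) ≠ 0 := by positivity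
      have a := oA x hx
      have b := oY x hx
      apply mul_left_cancel₀ h1
      push_cast
      linear_combination x * Y x * a - x * A x * b
    obtain ⟨K, hK⟩ := (isOpen_Ioi (a := (0:ℝ))).exists_is_const_of_deriv_eq_zero
      isPreconnected_Ioi (fun x hx => (hd x hx).differentiableAt.differentiableWithinAt)
      (fun x hx => (hd x hx).deriv)
    exact ⟨K, hK⟩
  obtain ⟨K, hK⟩ := hW
  have hq0 : ContinuousOn (fun x => Y x / A x) (Set.Ici 0) :=
    hY0.div hA0 fun x hx => (hApos x hx).ne'
  have hq : ∀ x, 0 < x → HasDerivAt (fun x => Y x / A x) (K / (x ^ 2 * A x ^ 2)) x := by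
    intro x hx
    convert! (hY x hx).div (hA x hx) (hApos x hx.le).ne' using 1
    have := (hApos x hx.le).ne'
    rw [← hK x hx]
    field_simp
  have hK0 : K = 0 := by
    by_contra hne
    obtain ⟨M, hM⟩ := (isCompact_Icc (a := (0:ℝ)) (b := 1)).exists_bound_of_continuousOn
      (hA0.mono Set.Icc_subset_Ici_self)
    obtain ⟨B, hB⟩ := (isCompact_Icc (a := (0:ℝ)) (b := 1)).exists_bound_of_continuousOn
      (hq0.mono Set.Icc_subset_Ici_self)
    have hMpos : 0 < M := by
      have := hM 0 (by simp)
      rw [Real.norm_eq_abs, abs_of_pos (hApos 0 le_rfl)] at this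
      exact (hApos 0 le_rfl).trans_le this
    have hB0 : 0 ≤ B := (norm_nonneg _).trans (hB 0 (by simp))
    -- mean value on [ε, 2ε]
    have hmv : ∀ ε, 0 < ε → 2 * ε ≤ 1 → |K| ≤ 8 * B * M ^ 2 * ε := by
      intro ε h0 h1
      obtain ⟨t, ht, hte⟩ := exists_hasDerivAt_eq_slope (fun x => Y x / A x)
        (fun x => K / (x ^ 2 * A x ^ 2)) (a := ε) (b := 2 * ε) (by linarith)
        (hq0.mono fun z hz => h0.le.trans hz.1) (fun z hz => hq z (h0.trans hz.1))
      have ht0 : 0 < t := h0.trans ht.1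
      have b1 := hB ε ⟨h0.le, by linarith⟩
      have b2 := hB (2 * ε) ⟨by linarith, h1⟩
      have bM := hM t ⟨ht0.le, by linarith [ht.2]⟩
      have hAt := hApos t ht0.le
      rw [Real.norm_eq_abs] at b1 b2 bM
      rw [abs_of_pos hAt] at bM
      have hb : |Y (2 * ε) / A (2 * ε) - Y ε / A ε| ≤ 2 * B :=
        (abs_sub _ _).trans (by linarith)
      have e : K * ε = (Y (2 * ε) / A (2 * ε) - Y ε / A ε) * (t ^ 2 * A t ^ 2) := by
        rw [show 2 * ε - ε = ε by ring] at hte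
        field_simp at hte ⊢
        linarith
      have e2 : |K| * ε ≤ 2 * B * ((2 * ε) ^ 2 * M ^ 2) := by
        rw [← abs_of_pos h0, ← abs_mul, abs_of_pos h0, e, abs_mul,
          abs_of_pos (by positivity : 0 < t ^ 2 * A t ^ 2)]
        have := ht.2.le
        gcongr
      have e3 : |K| * ε ≤ (8 * B * M ^ 2 * ε) * ε := by nlinarith
      exact le_of_mul_le_mul_right e3 h0
    have hKp : 0 < |K| := abs_pos.2 hne
    set D := 8 * B * M ^ 2 with hD
    have hD0 : 0 ≤ D := by positivity
    have h1 := hmv (min (1/2) (|K| / (2 * (D + 1)))) (by positivity)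
      (by linarith [min_le_left (1/2:ℝ) (|K| / (2 * (D + 1)))])
    have h2 : D * min (1/2) (|K| / (2 * (D + 1))) ≤ D * (|K| / (2 * (D + 1))) := by
      gcongr; exact min_le_right _ _
    have h3 : D * (|K| / (2 * (D + 1))) < |K| := by
      rw [← mul_div_assoc, div_lt_iff₀ (by positivity)]
      nlinarith
    linarith
  subst hK0
  intro x hx
  rcases hx.eq_or_lt with rfl | hx
  · rfl
  obtain ⟨t, ht, hte⟩ := exists_hasDerivAt_eq_slope (fun x => Y x / A x)
        (fun x => 0 / (x ^ 2 * A x ^ 2)) (a := 0) (b := x) hx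
        (hq0.mono Set.Icc_subset_Ici_self) (fun z hz => hq z hz.1)
  simp only [zero_div, sub_zero] at hte
  have := (div_eq_zero_iff.1 hte.symm).resolve_right hx.ne'
  linarith

theorem hypergeometric_ODE_uniqueness (α : ℝ) (hα : α ∈ Set.Ioo (-1 : ℝ) 1)
    (y : ℝ → ℝ)
    (hycont : ContinuousOn y (Set.Ici 0))
    (hyC2 : ContDiffOn ℝ 2 y (Set.Ioi 0))
    (hODE : ∀ x : ℝ, 0 < x →
      x * (1 + x) * deriv (deriv y) x + (2 + 4*x) * deriv y x
        + (2 + α - α^2) * y x = 0)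
    (hy0 : y 0 = 1) :
    ∀ x : ℝ, 0 ≤ x → y x = Fhyp α x / (1 + x) := by
  obtain ⟨hw, hwi⟩ := hw_aux α hα
  have hw1 : IntervalIntegrable (fun u : ℝ => u ^ (-α) * (1 - u) ^ α * u) volume 0 1 :=
    hw.mul_continuousOn (by fun_prop)
  have hG : 0 < Real.Gamma (1 - α) * Real.Gamma (1 + α) :=
    mul_pos (Real.Gamma_pos_of_pos (by linarith [hα.2])) (Real.Gamma_pos_of_pos (by linarith [hα.1]))
  have hy1 : ∀ x, 0 < x → HasDerivAt y (deriv y x) x := fun x hx =>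
    ((hyC2.differentiableOn (by norm_num)).differentiableAt (Ioi_mem_nhds hx)).hasDerivAt
  have hy2 : ∀ x, 0 < x → HasDerivAt (deriv y) (deriv (deriv y) x) x := fun x hx =>
    (((hyC2.deriv_of_isOpen (m := 1) isOpen_Ioi (by norm_num)).differentiableOn
      (by norm_num)).differentiableAt (Ioi_mem_nhds hx)).hasDerivAt
  have hl : ∀ x : ℝ, HasDerivAt (fun x : ℝ => 1 + x) 1 x := fun x =>
    (hasDerivAt_id x).const_add 1
  have hA := fun x (hx : -1 < x) => deriv_aux _ hw (-α) x hx
  have hA' := fun x (hx : -1 < x) => (deriv_aux _ hw1 (-α - 1) x hx).const_mul (-α)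
  have main := uniq_aux (α * (1 - α)) _ _ _ (fun x => (1 + x) * y x)
    (fun x => y x + (1 + x) * deriv y x)
    (fun x => 2 * deriv y x + (1 + x) * deriv (deriv y) x)
    (fun x hx => (hA x (by linarith [Set.mem_Ici.1 hx])).continuousAt.continuousWithinAt)
    (fun x hx => ?_)
    (ContinuousOn.mul (by fun_prop) hycont)
    (fun x hx => hA x (by linarith)) (fun x hx => hA' x (by linarith))
    (fun x hx => by
      convert! (hl x).mul (hy1 x hx) using 1
      ring)
    (fun x hx => by
      convert! (hy1 x hx).add ((hl x).mul (hy2 x hx)) using 1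
      ring)
    (fun x hx => ode_aux α hα x hx)
    (fun x hx => by linear_combination (1 + x) * hODE x hx)
  · intro x hx
    have h := main x hx
    simp only [zero_mul, add_zero, Real.one_rpow, mul_one, hwi, hy0] at h
    rw [Fhyp]
    have hI : (∫ u in (0:ℝ)..1, u ^ (-α) * (1 - u) ^ α * (1 + x * u) ^ (-α)) ≠ 0 := by
      intro h0
      rw [h0, div_zero] at h
      exact (one_div_pos.2 hG).ne h
    have h1 : (1 + x) ≠ 0 := by positivity
    have hG' := hG.ne'
    rw [div_eq_div_iff hI hG'] at h
    rw [eq_div_iff h1, one_div, inv_mul_eq_div, eq_div_iff hG']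
    linarith
  · refine intervalIntegral.intervalIntegral_pos_of_pos_on (int_aux _ hw (-α) x (by linarith))
      (fun u hu => ?_) zero_lt_one
    have hu0 := hu.1
    have hu1 : 0 < 1 - u := by linarith [hu.2]
    positivity
end

section
/- Let λ ∈ ℝ, c ∈ ℝ with c ≠ 0, and let φ : [0,∞) → ℝ be twice continuously differentiable with φ(0) = 1 and such that for some constants C, δ > 0 one has |φ(t)| ≤ C(1+t)^{−δ}, |φ'(t)| ≤ C(1+t)^{−1−δ}, and |φ''(t)| ≤ C(1+t)^{−2−δ} for all t ≥ 0. If φ satisfies φ(x) = c/(1+x) − λ ∫₀^∞ φ(t)/(1+t+x) dt for all x ≥ 0, then the function g(x) := x(1+x)φ''(x) + (2+4x)φ'(x) + ((2c+λ)/c)·φ(x) satisfies the homogeneous equation g(x) = −λ ∫₀^∞ g(t)/(1+t+x) dt for all x ≥ 0, all integrals converging absolutely. -/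
open MeasureTheory Real Set

lemma aux_int (δ : ℝ) (hδ : 0 < δ) (D : ℝ) :
    IntegrableOn (fun t : ℝ => D * (1 + t) ^ (-1 - δ)) (Set.Ioi 0) := by
  have h := integrableOn_add_rpow_Ioi_of_lt (a := -1 - δ) (c := 0) (m := 1) (by linarith) (by norm_num)
  have h2 := h.const_mul D
  simp only [add_comm _ (1:ℝ)] at h2
  exact h2

lemma aux_bd (δ D p t y : ℝ) (n : ℕ) (hp : |p| ≤ D * (1 + t) ^ (-δ)) (ht : 0 ≤ t)
    (hy : -(1/2) ≤ y) :
    |p / (1 + t + y) ^ (n + 1)| ≤ D * 2 ^ (n + 1) * (1 + t) ^ (-1 - δ) := by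
  have h1 : (0:ℝ) < 1 + t := by linarith
  have h2 : (1 + t) / 2 ≤ 1 + t + y := by linarith
  have h3 : 0 < 1 + t + y := by linarith
  have h4 : (1 + t) / 2 ^ (n+1) ≤ (1 + t + y) ^ (n + 1) := by
    calc (1 + t) / 2 ^ (n+1) ≤ (1 + t) ^ (n+1) / 2 ^ (n+1) := by
          gcongr
          exact le_self_pow₀ (by linarith) (by omega)
      _ = ((1 + t) / 2) ^ (n+1) := by rw [div_pow]
      _ ≤ _ := by gcongr
  rw [abs_div, abs_of_pos (pow_pos h3 _), div_le_iff₀ (pow_pos h3 _)]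
  have e : (1 + t) ^ (-δ) = (1 + t) ^ (-1 - δ) * (1 + t) := by
    rw [← Real.rpow_add_one h1.ne']; congr 1; ring
  have hD : 0 ≤ D * (1 + t) ^ (-1 - δ) := by
    have h5 : 0 ≤ D * (1 + t) ^ (-δ) := (abs_nonneg p).trans hp
    have h6 : 0 ≤ D := nonneg_of_mul_nonneg_left h5 (by positivity)
    positivity
  calc |p| ≤ D * (1 + t) ^ (-δ) := hp
    _ = D * (1 + t) ^ (-1 - δ) * 2 ^ (n+1) * ((1 + t) / 2 ^ (n+1)) := by
        rw [e]; field_simp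
    _ ≤ D * (1 + t) ^ (-1 - δ) * 2 ^ (n+1) * (1 + t + y) ^ (n + 1) := by gcongr
    _ = _ := by ring

lemma aux_meas (ψ : ℝ → ℝ) (hψ : ContinuousOn ψ (Set.Ici 0)) (y : ℝ) (hy : -(1/2) ≤ y) (n : ℕ) :
    AEStronglyMeasurable (fun t => ψ t / (1 + t + y) ^ (n+1)) (volume.restrict (Set.Ioi 0)) := by
  apply ContinuousOn.aestronglyMeasurable _ measurableSet_Ioi
  apply (hψ.mono Ioi_subset_Ici_self).div (by fun_prop)
  intro t ht
  have : 0 < t := ht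
  have : 0 < 1 + t + y := by linarith
  positivity

lemma aux_integrable (δ : ℝ) (hδ : 0 < δ) (D : ℝ) (ψ : ℝ → ℝ) (hψ : ContinuousOn ψ (Set.Ici 0))
    (hb : ∀ t : ℝ, 0 ≤ t → |ψ t| ≤ D * (1 + t) ^ (-δ)) (y : ℝ) (hy : -(1/2) ≤ y) (n : ℕ) :
    IntegrableOn (fun t => ψ t / (1 + t + y) ^ (n+1)) (Set.Ioi 0) := by
  refine Integrable.mono' (aux_int δ hδ (D * 2 ^ (n+1))) (aux_meas ψ hψ y hy n) ?_
  filter_upwards [ae_restrict_mem measurableSet_Ioi] with t ht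
  exact aux_bd δ D _ t y n (hb t (le_of_lt ht)) (le_of_lt ht) hy

lemma aux_deriv (δ : ℝ) (hδ : 0 < δ) (D : ℝ) (ψ : ℝ → ℝ) (hψ : ContinuousOn ψ (Set.Ici 0))
    (hb : ∀ t : ℝ, 0 ≤ t → |ψ t| ≤ D * (1 + t) ^ (-δ)) (x : ℝ) (hx : 0 ≤ x) (n : ℕ) :
    HasDerivAt (fun y => ∫ t in Set.Ioi (0:ℝ), ψ t / (1 + t + y) ^ (n+1))
      (-(n+1) * ∫ t in Set.Ioi (0:ℝ), ψ t / (1 + t + x) ^ (n+2)) x := by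
  rw [← integral_const_mul]
  have hball : ∀ y ∈ Metric.ball x (1/2), -(1/2) ≤ y := by
    intro y hy
    rw [Metric.mem_ball, Real.dist_eq, abs_lt] at hy
    linarith [hy.1]
  refine (hasDerivAt_integral_of_dominated_loc_of_deriv_le
    (F' := fun y t => -((n:ℝ)+1) * (ψ t / (1 + t + y) ^ (n+2)))
    (bound := fun t => ((n:ℝ)+1) * (D * 2 ^ (n+2) * (1 + t) ^ (-1 - δ)))
    (Metric.ball_mem_nhds x (by norm_num : (0:ℝ) < 1/2)) ?_ ?_ ?_ ?_ ?_ ?_).2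
  · filter_upwards [Metric.ball_mem_nhds x (by norm_num : (0:ℝ) < 1/2)] with y hy
    exact aux_meas ψ hψ y (hball y hy) n
  · exact aux_integrable δ hδ D ψ hψ hb x (by linarith) n
  · exact (aux_meas ψ hψ x (by linarith) (n+1)).const_mul _
  · filter_upwards [ae_restrict_mem measurableSet_Ioi] with t ht y hy
    have := aux_bd δ D _ t y (n+1) (hb t (le_of_lt ht)) (le_of_lt ht) (hball y hy)
    rw [norm_mul, norm_neg, Real.norm_eq_abs, Real.norm_eq_abs,
      abs_of_pos (by positivity : (0:ℝ) < (n:ℝ)+1)]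
    gcongr
  · exact (aux_int δ hδ _).const_mul _
  · filter_upwards [ae_restrict_mem measurableSet_Ioi] with t ht y hy
    have h0 : (0:ℝ) < t := ht
    have h1 := hball y hy
    have h2 : 1 + t + y ≠ 0 := by linarith
    have h3 : HasDerivAt (fun y : ℝ => 1 + t + y) 1 y := (hasDerivAt_id y).const_add _
    have h4 := ((hasDerivAt_const y (ψ t)).div (h3.pow (n+1)) (pow_ne_zero _ h2))
    refine h4.congr_deriv ?_
    simp only [Nat.add_sub_cancel, Pi.pow_apply]
    push_cast
    field_simp
    ring

theorem homogeneous_equation_for_g (lam c : ℝ) (hc : c ≠ 0)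
    (φ φ' φ'' : ℝ → ℝ)
    (hd1 : ∀ x ∈ Set.Ici (0:ℝ), HasDerivWithinAt φ (φ' x) (Set.Ici 0) x)
    (hd2 : ∀ x ∈ Set.Ici (0:ℝ), HasDerivWithinAt φ' (φ'' x) (Set.Ici 0) x)
    (hcont : ContinuousOn φ'' (Set.Ici 0))
    (hφ0 : φ 0 = 1)
    (C δ : ℝ) (hC : 0 < C) (hδ : 0 < δ)
    (hb0 : ∀ t : ℝ, 0 ≤ t → |φ t| ≤ C * (1 + t) ^ (-δ))
    (hb1 : ∀ t : ℝ, 0 ≤ t → |φ' t| ≤ C * (1 + t) ^ (-1 - δ))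
    (hb2 : ∀ t : ℝ, 0 ≤ t → |φ'' t| ≤ C * (1 + t) ^ (-2 - δ))
    (heq : ∀ x : ℝ, 0 ≤ x →
      IntegrableOn (fun t => φ t / (1 + t + x)) (Set.Ioi 0) ∧
      φ x = c / (1 + x) - lam * ∫ t in Set.Ioi (0:ℝ), φ t / (1 + t + x))
    (g : ℝ → ℝ)
    (hg : ∀ x, g x = x * (1 + x) * φ'' x + (2 + 4*x) * φ' x + ((2*c + lam)/c) * φ x) :
    ∀ x : ℝ, 0 ≤ x →
      IntegrableOn (fun t => g t / (1 + t + x)) (Set.Ioi 0) ∧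
      g x = -lam * ∫ t in Set.Ioi (0:ℝ), g t / (1 + t + x) := by
  have c0 : ContinuousOn φ (Set.Ici 0) := fun x hx => (hd1 x hx).continuousWithinAt
  have c1 : ContinuousOn φ' (Set.Ici 0) := fun x hx => (hd2 x hx).continuousWithinAt
  have e1 : ∀ t : ℝ, 0 ≤ t → (1 + t) ^ (-1 - δ) = (1 + t) ^ (-δ) / (1 + t) := by
    intro t ht
    rw [← Real.rpow_sub_one (by linarith)]; congr 1; ring
  have e2 : ∀ t : ℝ, 0 ≤ t → (1 + t) ^ (-2 - δ) = (1 + t) ^ (-δ) / (1 + t) ^ 2 := by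
    intro t ht
    rw [← Real.rpow_sub_natCast (by linarith)]; congr 1; push_cast; ring
  have b1 : ∀ t : ℝ, 0 ≤ t → (1 + t) * |φ' t| ≤ C * (1 + t) ^ (-δ) := by
    intro t ht
    have := hb1 t ht
    rw [e1 t ht, ← mul_div_assoc, le_div_iff₀ (by linarith)] at this
    linarith
  have b2 : ∀ t : ℝ, 0 ≤ t → (1 + t) ^ 2 * |φ'' t| ≤ C * (1 + t) ^ (-δ) := by
    intro t ht
    have := hb2 t ht
    rw [e2 t ht, ← mul_div_assoc, le_div_iff₀ (by positivity)] at this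
    linarith
  -- A general bound
  set A : ℝ → ℝ := fun t => t * (1 + t) * φ'' t + (2 + 4*t) * φ' t + 2 * φ t with hA
  have cA : ContinuousOn A (Set.Ici 0) := by
    simp only [hA]; fun_prop
  have bA : ∀ t : ℝ, 0 ≤ t → |A t| ≤ (7 * C) * (1 + t) ^ (-δ) := by
    intro t ht
    have h1 : |t * (1 + t) * φ'' t| ≤ C * (1 + t) ^ (-δ) := by
      rw [abs_mul, abs_of_nonneg (by positivity)]
      refine le_trans ?_ (b2 t ht)
      gcongr
      nlinarith
    have h2 : |(2 + 4*t) * φ' t| ≤ 4 * (C * (1 + t) ^ (-δ)) := by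
      rw [abs_mul, abs_of_nonneg (by positivity)]
      have := b1 t ht
      nlinarith [abs_nonneg (φ' t)]
    have h3 : |2 * φ t| ≤ 2 * (C * (1 + t) ^ (-δ)) := by
      rw [abs_mul, abs_of_pos (by norm_num : (0:ℝ) < 2)]
      linarith [hb0 t ht]
    simp only [hA]
    have := abs_add_three (t * (1 + t) * φ'' t) ((2 + 4*t) * φ' t) (2 * φ t)
    linarith
  have hgA : ∀ t, g t = A t + lam / c * φ t := by
    intro t; rw [hg, hA]; field_simp; ring
  have I0 : ∀ n : ℕ, ∀ y : ℝ, 0 ≤ y →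
      IntegrableOn (fun t => φ t / (1 + t + y) ^ (n+1)) (Set.Ioi 0) :=
    fun n y hy => aux_integrable δ hδ C φ c0 hb0 y (by linarith) n
  have f1 : ∀ x : ℝ, 0 ≤ x → φ x = c / (1 + x) - lam * ∫ t in Set.Ioi (0:ℝ), φ t / (1 + t + x) ^ (0+1) := by
    intro x hx
    simpa using (heq x hx).2
  have ud : ∀ x : ℝ, 0 ≤ x → UniqueDiffWithinAt ℝ (Set.Ici (0:ℝ)) x :=
    fun x hx => uniqueDiffOn_Ici 0 x hx
  have f2 : ∀ x : ℝ, 0 ≤ x → φ' x = -c / (1 + x)^2 + lam * ∫ t in Set.Ioi (0:ℝ), φ t / (1 + t + x) ^ (1+1) := by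
    intro x hx
    have h3 : HasDerivAt (fun y : ℝ => 1 + y) 1 x := (hasDerivAt_id x).const_add _
    have h4 := ((hasDerivAt_const x c).div h3 (by linarith)).sub
      ((aux_deriv δ hδ C φ c0 hb0 x hx 0).const_mul lam)
    have h5 := h4.hasDerivWithinAt (s := Set.Ici 0)
    have h6 := h5.congr (f₁ := φ) (fun y hy => f1 y hy) (f1 x hx)
    rw [(ud x hx).eq_deriv _ (hd1 x hx) h6]
    push_cast
    simp only [zero_mul, zero_add, mul_one, zero_sub, one_add_one_eq_two]
    ring
  have f3 : ∀ x : ℝ, 0 ≤ x → φ'' x = 2 * c / (1 + x)^3 - 2 * lam * ∫ t in Set.Ioi (0:ℝ), φ t / (1 + t + x) ^ (2+1) := by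
    intro x hx
    have h3 : HasDerivAt (fun y : ℝ => 1 + y) 1 x := (hasDerivAt_id x).const_add _
    have hx1 : (1 + x) ≠ 0 := by linarith
    have h4 := ((hasDerivAt_const x (-c)).div (h3.pow 2) (pow_ne_zero _ hx1)).add
      ((aux_deriv δ hδ C φ c0 hb0 x hx 1).const_mul lam)
    have h5 := h4.hasDerivWithinAt (s := Set.Ici 0)
    have h6 := h5.congr (f₁ := φ') (fun y hy => f2 y hy) (f2 x hx)
    rw [(ud x hx).eq_deriv _ (hd2 x hx) h6]
    push_cast
    simp only [Pi.pow_apply]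
    norm_num
    field_simp
    ring
  intro x hx
  have hx1 : (1 + x) ≠ 0 := by linarith
  have IA : IntegrableOn (fun t => A t / (1 + t + x)) (Set.Ioi 0) := by
    simpa using aux_integrable δ hδ _ A cA bA x (by linarith) 0
  have Iφ := (heq x hx).1
  have hgfun : (fun t => g t / (1 + t + x)) =
      fun t => A t / (1 + t + x) + lam / c * (φ t / (1 + t + x)) := by
    funext t; rw [hgA]; ring
  refine ⟨by rw [hgfun]; exact IA.add (Iφ.const_mul _), ?_⟩
  rw [hgfun, integral_add IA (Iφ.const_mul _), integral_const_mul, hgA]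
  -- B
  set B : ℝ → ℝ := fun t => φ t * (2 * t * (1 + t)) / (1 + t + x) ^ 3 with hB
  have hBfun : ∀ t ∈ Set.Ioi (0:ℝ), B t = (2 * x * (1 + x)) * (φ t / (1 + t + x) ^ (2+1))
      - (2 + 4 * x) * (φ t / (1 + t + x) ^ (1+1)) + 2 * (φ t / (1 + t + x) ^ (0+1)) := by
    intro t ht
    have : (0:ℝ) < t := ht
    have : 1 + t + x ≠ 0 := by linarith
    simp only [hB]
    field_simp
    ring
  have i1 := (I0 2 x hx).const_mul (2 * x * (1 + x))
  have i2 := (I0 1 x hx).const_mul (2 + 4 * x)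
  have i3 := (I0 0 x hx).const_mul 2
  have IB : IntegrableOn B (Set.Ioi 0) :=
    IntegrableOn.congr_fun ((i1.sub i2).add i3) (fun t ht => (hBfun t ht).symm) measurableSet_Ioi
  have hBint : ∫ t in Set.Ioi (0:ℝ), B t =
      (2 * x * (1 + x)) * (∫ t in Set.Ioi (0:ℝ), φ t / (1 + t + x) ^ (2+1))
      - (2 + 4 * x) * (∫ t in Set.Ioi (0:ℝ), φ t / (1 + t + x) ^ (1+1))
      + 2 * (∫ t in Set.Ioi (0:ℝ), φ t / (1 + t + x) ^ (0+1)) := by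
    rw [setIntegral_congr_fun measurableSet_Ioi hBfun, integral_add (by exact i1.sub i2) i3,
      integral_sub i1 i2, integral_const_mul, integral_const_mul, integral_const_mul]
  have hAB : A x = -lam * ∫ t in Set.Ioi (0:ℝ), B t := by
    rw [hBint, hA]
    simp only
    rw [f1 x hx, f2 x hx, f3 x hx]
    field_simp
    ring
  -- integration by parts
  set H : ℝ → ℝ := fun t => -(t * (1 + t) * φ t / (1 + t + x) ^ 2)
    - ((1 + 2 * t) * φ t + t * (1 + t) * φ' t) / (1 + t + x) with hH
  have hHd : ∀ t ∈ Set.Ioi (0:ℝ), HasDerivAt H (B t - A t / (1 + t + x)) t := by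
    intro t ht
    have ht0 : (0:ℝ) < t := ht
    have hn : 1 + t + x ≠ 0 := by linarith
    have k1 := (hd1 t ht0.le).hasDerivAt (Ici_mem_nhds ht0)
    have k2 := (hd2 t ht0.le).hasDerivAt (Ici_mem_nhds ht0)
    have k3 : HasDerivAt (fun t : ℝ => t * (1 + t)) (1 + 2 * t) t := by
      refine ((hasDerivAt_id t).mul ((hasDerivAt_id t).const_add 1)).congr_deriv ?_
      simp; ring
    have k4 : HasDerivAt (fun t : ℝ => 1 + 2 * t) 2 t := by
      simpa using ((hasDerivAt_id t).const_mul 2).const_add 1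
    have k5 : HasDerivAt (fun t : ℝ => 1 + t + x) 1 t :=
      ((hasDerivAt_id t).const_add 1).add_const x
    refine ((((k3.mul k1).div (k5.pow 2) (pow_ne_zero _ hn)).neg).sub
      (((k4.mul k1).add (k3.mul k2)).div k5 hn)).congr_deriv ?_
    simp only [hA, hB, Pi.pow_apply, Pi.mul_apply, Pi.add_apply]
    field_simp
    push_cast
    ring
  have cH : ContinuousWithinAt H (Set.Ici 0) 0 := by
    have : ContinuousOn H (Set.Ici 0) := by
      have hne : ∀ t ∈ Set.Ici (0:ℝ), 1 + t + x ≠ 0 := by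
        intro t ht
        have : (0:ℝ) ≤ t := ht
        linarith
      simp only [hH]
      refine ContinuousOn.sub (ContinuousOn.neg (ContinuousOn.div (by fun_prop) (by fun_prop) ?_))
        (ContinuousOn.div (by fun_prop) (by fun_prop) hne)
      exact fun t ht => pow_ne_zero _ (hne t ht)
    exact this 0 (by simp)
  have hHb : ∀ t : ℝ, 0 ≤ t → ‖H t‖ ≤ (4 * C) * (1 + t) ^ (-δ) := by
    intro t ht
    have hp : 0 < 1 + t + x := by linarith
    have q0 := hb0 t ht
    have q1 := b1 t ht
    have r1 : |-(t * (1 + t) * φ t / (1 + t + x) ^ 2)| ≤ C * (1 + t) ^ (-δ) := by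
      rw [abs_neg, abs_div, abs_mul, abs_of_nonneg (by positivity : 0 ≤ t * (1 + t)),
        abs_of_pos (by positivity : 0 < (1 + t + x)^2), div_le_iff₀ (by positivity), mul_comm]
      gcongr
      nlinarith
    have r2 : |((1 + 2 * t) * φ t + t * (1 + t) * φ' t) / (1 + t + x)| ≤ 3 * (C * (1 + t) ^ (-δ)) := by
      rw [abs_div, abs_of_pos hp, div_le_iff₀ hp]
      refine (abs_add_le _ _).trans ?_
      rw [abs_mul, abs_mul, abs_of_nonneg (by positivity : 0 ≤ t * (1 + t)),
        abs_of_nonneg (by positivity : 0 ≤ 1 + 2 * t)]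
      have s1 : (1 + 2 * t) * |φ t| ≤ 2 * (1 + t + x) * (C * (1 + t) ^ (-δ)) := by
        gcongr
        linarith
      have s2 : t * ((1 + t) * |φ' t|) ≤ (1 + t + x) * (C * (1 + t) ^ (-δ)) := by
        gcongr
        linarith
      nlinarith
    rw [Real.norm_eq_abs]
    simp only [hH]
    refine (abs_sub _ _).trans ?_
    linarith
  have hHt : Filter.Tendsto H Filter.atTop (nhds 0) := by
    have h1 : Filter.Tendsto (fun t : ℝ => (4 * C) * (1 + t) ^ (-δ)) Filter.atTop (nhds 0) := by
      have := ((tendsto_rpow_neg_atTop hδ).comp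
        (Filter.tendsto_atTop_add_const_left Filter.atTop (1:ℝ) Filter.tendsto_id)).const_mul (4 * C)
      simpa using this
    refine squeeze_zero_norm' ?_ h1
    filter_upwards [Filter.eventually_ge_atTop 0] with t ht using hHb t ht
  have key := integral_Ioi_of_hasDerivAt_of_tendsto cH hHd (IB.sub IA) hHt
  rw [integral_sub IB IA] at key
  have hH0 : H 0 = -(1 / (1 + x)) := by
    simp [hH, hφ0]
  rw [hH0] at key
  have hphi := (heq x hx).2
  have hBv : ∫ t in Set.Ioi (0:ℝ), B t = (∫ t in Set.Ioi (0:ℝ), A t / (1 + t + x)) + 1 / (1 + x) := by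
    linarith
  rw [hAB, hBv, hphi]
  field_simp
  ring
end

section
/- The linear operator A₀ on L²((0,∞)) defined by (A₀φ)(t) = ∫₀^∞ φ(u)/(t+u) du is a bounded, self-adjoint, positive operator, its operator norm equals π, and its spectrum equals the interval [0, π]. -/
open MeasureTheory Real Set
open scoped RealInnerProductSpace
open scoped ENNReal
open Filter Topology

noncomputable abbrev μH : Measure ℝ := volume.restrict (Set.Ioi (0:ℝ))

lemma schur_deriv {t : ℝ} (ht : 0 < t) (u : ℝ) (hu : 0 < u) :
    HasDerivAt (fun u => 2 / √t * arctan (√u / √t)) ((√u)⁻¹ / (t + u)) u := by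
  have h1 := ((Real.hasDerivAt_sqrt hu.ne').div_const (√t)).arctan.const_mul (2 / √t)
  have hs : 0 < √t := Real.sqrt_pos.2 ht
  have hs' : 0 < √u := Real.sqrt_pos.2 hu
  have e1 : t = √t ^ 2 := (Real.sq_sqrt ht.le).symm
  have e2 : u = √u ^ 2 := (Real.sq_sqrt hu.le).symm
  have key : ∀ a b : ℝ, 0 < a → 0 < b →
      b⁻¹ / (a ^ 2 + b ^ 2) = 2 / a * (1 / (1 + (b / a) ^ 2) * (1 / (2 * b) / a)) := by
    intro a b ha hb
    field_simp
  rw [← key _ _ hs hs', ← e1, ← e2] at h1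
  exact h1

lemma schur_tendsto {t : ℝ} (ht : 0 < t) :
    Tendsto (fun u => 2 / √t * arctan (√u / √t)) atTop (𝓝 (2 / √t * (π / 2))) := by
  have hs : 0 < √t := Real.sqrt_pos.2 ht
  refine Tendsto.const_mul _ ?_
  refine (tendsto_nhds_of_tendsto_nhdsWithin tendsto_arctan_atTop).comp ?_
  exact Real.tendsto_sqrt_atTop.atTop_div_const hs

lemma schur_cont {t : ℝ} :
    ContinuousWithinAt (fun u => 2 / √t * arctan (√u / √t)) (Ici 0) 0 := by
  apply Continuous.continuousWithinAt
  fun_prop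

lemma schur_integrable {t : ℝ} (ht : 0 < t) :
    IntegrableOn (fun u => (√u)⁻¹ / (t + u)) (Ioi 0) :=
  integrableOn_Ioi_deriv_of_nonneg schur_cont (fun u hu => schur_deriv ht u hu)
    (fun u hu => by have : 0 < u := hu; positivity) (schur_tendsto ht)

lemma schur_integral {t : ℝ} (ht : 0 < t) :
    ∫ u in Ioi 0, (√u)⁻¹ / (t + u) = π * (√t)⁻¹ := by
  rw [integral_Ioi_of_hasDerivAt_of_nonneg schur_cont (fun u hu => schur_deriv ht u hu)
    (fun u hu => by have : 0 < u := hu; positivity) (schur_tendsto ht)]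
  simp; ring

lemma schur_lintegral {t : ℝ} (ht : 0 < t) :
    ∫⁻ u in Ioi 0, ENNReal.ofReal ((√u)⁻¹ / (t + u)) = ENNReal.ofReal (π * (√t)⁻¹) := by
  rw [← schur_integral ht, ofReal_integral_eq_lintegral_ofReal (schur_integrable ht)]
  filter_upwards [ae_restrict_mem measurableSet_Ioi] with u hu
  have : 0 < u := hu
  simp only [Pi.zero_apply]; positivity

lemma cs_lint {μ : Measure ℝ} {f g : ℝ → ℝ≥0∞} (hf : AEMeasurable f μ) (hg : AEMeasurable g μ) :
    (∫⁻ a, f a * g a ∂μ) ^ 2 ≤ (∫⁻ a, f a ^ 2 ∂μ) * (∫⁻ a, g a ^ 2 ∂μ) := by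
  have h := ENNReal.lintegral_mul_le_Lp_mul_Lq μ (p := 2) (q := 2)
    Real.HolderConjugate.two_two hf hg
  simp only [Pi.mul_apply] at h
  calc _ ≤ _ := pow_le_pow_left' h 2
    _ = _ := by
      rw [mul_pow, ← ENNReal.rpow_natCast, ← ENNReal.rpow_natCast, ← ENNReal.rpow_mul,
        ← ENNReal.rpow_mul]
      norm_num

lemma schur_bound {φ : ℝ → ℝ} (hφ : Measurable φ) :
    ∫⁻ t, (∫⁻ u, ENNReal.ofReal (|φ u| / (t + u)) ∂μH) ^ 2 ∂μH ≤
      ENNReal.ofReal (π ^ 2) * ∫⁻ u, ENNReal.ofReal (φ u ^ 2) ∂μH := by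
  have step1 : ∀ t ∈ Ioi (0:ℝ), (∫⁻ u, ENNReal.ofReal (|φ u| / (t + u)) ∂μH) ^ 2 ≤
      ∫⁻ u, ENNReal.ofReal (π * (√t)⁻¹ * (√u / (t + u) * φ u ^ 2)) ∂μH := by
    intro t ht
    have ht : 0 < t := ht
    have h := cs_lint (μ := μH) (f := fun u => ENNReal.ofReal (√((√u)⁻¹ / (t + u))))
      (g := fun u => ENNReal.ofReal (√(√u / (t + u)) * |φ u|)) (by fun_prop) (by fun_prop)
    calc _ = (∫⁻ a, ENNReal.ofReal (√((√a)⁻¹ / (t + a))) *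
          ENNReal.ofReal (√(√a / (t + a)) * |φ a|) ∂μH) ^ 2 := by
          congr 1
          apply setLIntegral_congr_fun measurableSet_Ioi
          intro u hu
          have hu : 0 < u := hu
          simp only
          rw [← ENNReal.ofReal_mul (by positivity), ← mul_assoc, ← Real.sqrt_mul (by positivity)]
          have : (√u)⁻¹ / (t + u) * (√u / (t + u)) = (1 / (t + u)) ^ 2 := by
            have : 0 < √u := Real.sqrt_pos.2 hu
            field_simp
          rw [this, Real.sqrt_sq (by positivity)]
          ring_nf
      _ ≤ _ := h
      _ = ENNReal.ofReal (π * (√t)⁻¹) * ∫⁻ u, ENNReal.ofReal (√u / (t + u) * φ u ^ 2) ∂μH := by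
          rw [← schur_lintegral ht]
          congr 1
          · apply setLIntegral_congr_fun measurableSet_Ioi
            intro u hu
            have hu : 0 < u := hu
            simp only
            rw [← ENNReal.ofReal_pow (by positivity), Real.sq_sqrt (by positivity)]
          · apply setLIntegral_congr_fun measurableSet_Ioi
            intro u hu
            have hu : 0 < u := hu
            simp only
            rw [← ENNReal.ofReal_pow (by positivity), mul_pow, Real.sq_sqrt (by positivity), sq_abs]
      _ = _ := by
          rw [← lintegral_const_mul _ (by fun_prop)]
          congr 1; ext u
          rw [← ENNReal.ofReal_mul (by positivity)]
  calc _ ≤ ∫⁻ t, ∫⁻ u, ENNReal.ofReal (π * (√t)⁻¹ * (√u / (t + u) * φ u ^ 2)) ∂μH ∂μH :=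
        setLIntegral_mono' measurableSet_Ioi step1
    _ = ∫⁻ u, ∫⁻ t, ENNReal.ofReal (π * (√t)⁻¹ * (√u / (t + u) * φ u ^ 2)) ∂μH ∂μH := by
        apply lintegral_lintegral_swap
        apply Measurable.aemeasurable
        unfold Function.uncurry
        fun_prop
    _ = ∫⁻ u, ENNReal.ofReal (π ^ 2) * ENNReal.ofReal (φ u ^ 2) ∂μH := by
        apply setLIntegral_congr_fun measurableSet_Ioi
        intro u hu
        have hu : 0 < u := hu
        have hs : 0 < √u := Real.sqrt_pos.2 hu
        simp only
        have : ∀ t, ENNReal.ofReal (π * (√t)⁻¹ * (√u / (t + u) * φ u ^ 2)) =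
          ENNReal.ofReal (π * √u * φ u ^ 2) * ENNReal.ofReal ((√t)⁻¹ / (u + t)) := by
          intro t
          rw [← ENNReal.ofReal_mul (by positivity)]
          congr 1; rw [add_comm u t]; ring
        simp_rw [this]
        rw [lintegral_const_mul _ (by fun_prop), schur_lintegral hu,
          ← ENNReal.ofReal_mul (by positivity), ← ENNReal.ofReal_mul (by positivity)]
        congr 1; field_simp
    _ = _ := lintegral_const_mul _ (by fun_prop)

lemma eLpNorm_two_sq {μ : Measure ℝ} (f : ℝ → ℝ) :
    (eLpNorm f 2 μ) ^ 2 = ∫⁻ t, ENNReal.ofReal (f t ^ 2) ∂μ := by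
  rw [eLpNorm_eq_lintegral_rpow_enorm_toReal (by norm_num) (by norm_num), ← ENNReal.rpow_natCast,
    ← ENNReal.rpow_mul]
  norm_num
  congr 1; ext t
  rw [Real.enorm_eq_ofReal_abs, ← ENNReal.ofReal_pow (abs_nonneg _), sq_abs]

lemma lint_sq_lt_top {f : ℝ → ℝ} {μ : Measure ℝ} (hf : MemLp f 2 μ) :
    ∫⁻ t, ENNReal.ofReal (f t ^ 2) ∂μ < ⊤ := by
  rw [← eLpNorm_two_sq]
  exact ENNReal.pow_lt_top hf.2

noncomputable def TH (φ : ℝ → ℝ) (t : ℝ) : ℝ := ∫ u, φ u / (t + u) ∂μH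

lemma enorm_ker (φ : ℝ → ℝ) {t : ℝ} (ht : 0 < t) :
    ∫⁻ u, ‖φ u / (t + u)‖ₑ ∂μH = ∫⁻ u, ENNReal.ofReal (|φ u| / (t + u)) ∂μH := by
  apply setLIntegral_congr_fun measurableSet_Ioi
  intro u hu
  have hu : 0 < u := hu
  simp only
  rw [Real.enorm_eq_ofReal_abs, abs_div, abs_of_pos (by positivity : 0 < t + u)]

lemma ker_meas {φ : ℝ → ℝ} (hφ : Measurable φ) :
    Measurable (fun t => ∫⁻ u, ENNReal.ofReal (|φ u| / (t + u)) ∂μH) := by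
  apply Measurable.lintegral_prod_right' (f := fun p : ℝ × ℝ => ENNReal.ofReal (|φ p.2| / (p.1 + p.2)))
  fun_prop

lemma ker_integrable {φ : ℝ → ℝ} (hφ : Measurable φ) (h2 : MemLp φ 2 μH) :
    ∀ᵐ t ∂μH, Integrable (fun u => φ u / (t + u)) μH := by
  have h : ∀ᵐ t ∂μH, (∫⁻ u, ENNReal.ofReal (|φ u| / (t + u)) ∂μH) ^ 2 < ⊤ := by
    apply ae_lt_top
    · exact (ker_meas hφ).pow_const 2
    · refine ((schur_bound hφ).trans_lt ?_).ne
      exact ENNReal.mul_lt_top ENNReal.ofReal_lt_top (lint_sq_lt_top h2)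
  filter_upwards [h, ae_restrict_mem measurableSet_Ioi] with t ht ht0
  refine ⟨Measurable.aestronglyMeasurable (by fun_prop), ?_⟩
  unfold HasFiniteIntegral
  rw [enorm_ker φ ht0]
  by_contra hc
  rw [not_lt, top_le_iff] at hc
  rw [hc] at ht
  simp at ht

lemma TH_le {φ : ℝ → ℝ} (hφ : Measurable φ) :
    eLpNorm (TH φ) 2 μH ≤ ENNReal.ofReal π * eLpNorm φ 2 μH := by
  have : (eLpNorm (TH φ) 2 μH) ^ 2 ≤ (ENNReal.ofReal π * eLpNorm φ 2 μH) ^ 2 := by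
    rw [mul_pow, eLpNorm_two_sq, eLpNorm_two_sq, ← ENNReal.ofReal_pow (by positivity)]
    refine le_trans ?_ (schur_bound hφ)
    apply setLIntegral_mono' measurableSet_Ioi
    intro t ht
    rw [← sq_abs, ENNReal.ofReal_pow (abs_nonneg _), ← enorm_ker φ ht,
      ← Real.enorm_eq_ofReal_abs]
    gcongr
    exact enorm_integral_le_lintegral_enorm _
  exact (ENNReal.pow_le_pow_left_iff (by norm_num)).1 this

lemma TH_meas {φ : ℝ → ℝ} (hφ : Measurable φ) : StronglyMeasurable (TH φ) := by
  unfold TH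
  apply StronglyMeasurable.integral_prod_right (f := fun (p q : ℝ) => φ q / (p + q))
  apply Measurable.stronglyMeasurable
  unfold Function.uncurry
  fun_prop

lemma TH_memLp {φ : ℝ → ℝ} (hφ : Measurable φ) (h2 : MemLp φ 2 μH) : MemLp (TH φ) 2 μH :=
  ⟨(TH_meas hφ).aestronglyMeasurable,
    (TH_le hφ).trans_lt (ENNReal.mul_lt_top ENNReal.ofReal_lt_top h2.2)⟩

lemma TH_congr {φ ψ : ℝ → ℝ} (h : φ =ᵐ[μH] ψ) : TH φ = TH ψ := by
  ext t
  apply integral_congr_ae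
  filter_upwards [h] with u hu
  rw [hu]

lemma Lp_meas (φ : Lp ℝ 2 μH) : Measurable φ := (Lp.stronglyMeasurable φ).measurable

noncomputable def AL : Lp ℝ 2 μH →ₗ[ℝ] Lp ℝ 2 μH where
  toFun φ := (TH_memLp (Lp_meas φ) (Lp.memLp φ)).toLp _
  map_add' φ ψ := by
    rw [← MemLp.toLp_add, MemLp.toLp_eq_toLp_iff, TH_congr (Lp.coeFn_add φ ψ)]
    filter_upwards [ker_integrable (Lp_meas φ) (Lp.memLp φ),
      ker_integrable (Lp_meas ψ) (Lp.memLp ψ)] with t h1 h2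
    simp only [TH, Pi.add_apply, add_div]
    exact integral_add h1 h2
  map_smul' c φ := by
    rw [RingHom.id_apply, ← MemLp.toLp_const_smul, MemLp.toLp_eq_toLp_iff,
      TH_congr (Lp.coeFn_smul c φ)]
    refine Eventually.of_forall fun t => ?_
    simp only [TH, Pi.smul_apply, smul_eq_mul, mul_div_assoc]
    exact integral_const_mul _ _

noncomputable def AH : Lp ℝ 2 μH →L[ℝ] Lp ℝ 2 μH :=
  AL.mkContinuous π (by
    intro φ
    simp only [AL, LinearMap.coe_mk, AddHom.coe_mk, Lp.norm_toLp]
    rw [Lp.norm_def, ← ENNReal.toReal_ofReal pi_pos.le, ← ENNReal.toReal_mul]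
    exact ENNReal.toReal_mono (ENNReal.mul_lt_top ENNReal.ofReal_lt_top (Lp.memLp φ).2).ne
      (TH_le (Lp_meas φ)))

lemma AH_norm_le : ‖AH‖ ≤ π := LinearMap.mkContinuous_norm_le _ pi_pos.le _

lemma AH_coe (φ : Lp ℝ 2 μH) : (AH φ : ℝ → ℝ) =ᵐ[μH] TH φ :=
  MemLp.coeFn_toLp (TH_memLp (Lp_meas φ) (Lp.memLp φ))

lemma prod_integrable {φ ψ : ℝ → ℝ} (hφ : Measurable φ) (h2 : MemLp φ 2 μH)
    (hψ : Measurable ψ) (h2' : MemLp ψ 2 μH) :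
    Integrable (Function.uncurry fun t u => ψ t * (φ u / (t + u))) (μH.prod μH) := by
  have hm : Measurable (Function.uncurry fun t u => ψ t * (φ u / (t + u))) := by
    unfold Function.uncurry
    fun_prop
  refine ⟨hm.aestronglyMeasurable, ?_⟩
  unfold HasFiniteIntegral
  rw [lintegral_prod _ hm.enorm.aemeasurable]
  have e : ∫⁻ t, ∫⁻ u, ‖Function.uncurry (fun t u => ψ t * (φ u / (t + u))) (t, u)‖ₑ ∂μH ∂μH =
      ∫⁻ t, ENNReal.ofReal |ψ t| * ∫⁻ u, ENNReal.ofReal (|φ u| / (t + u)) ∂μH ∂μH := by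
    apply setLIntegral_congr_fun measurableSet_Ioi
    intro t ht
    simp only [Function.uncurry, enorm_mul]
    rw [lintegral_const_mul _ (by fun_prop), enorm_ker φ ht, Real.enorm_eq_ofReal_abs]
  rw [e]
  have h := cs_lint (μ := μH) (f := fun t => ENNReal.ofReal |ψ t|) (g := fun t =>
    ∫⁻ u, ENNReal.ofReal (|φ u| / (t + u)) ∂μH) (by fun_prop) (ker_meas hφ).aemeasurable
  have h3 : (∫⁻ a, ENNReal.ofReal |ψ a| ^ 2 ∂μH) < ⊤ := by
    have := lint_sq_lt_top h2'
    simpa only [← ENNReal.ofReal_pow (abs_nonneg _), sq_abs] using this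
  have h4 := (schur_bound hφ).trans_lt
    (ENNReal.mul_lt_top ENNReal.ofReal_lt_top (lint_sq_lt_top h2))
  have h5 := h.trans_lt (ENNReal.mul_lt_top h3 h4)
  by_contra hc
  rw [not_lt, top_le_iff] at hc
  rw [hc] at h5
  simp at h5

lemma AH_inner (φ ψ : Lp ℝ 2 μH) :
    ⟪AH φ, ψ⟫ = ∫ t, ∫ u, ψ t * (φ u / (t + u)) ∂μH ∂μH := by
  rw [L2.inner_def]
  apply integral_congr_ae
  filter_upwards [AH_coe φ] with t ht
  simp only [ht, TH, RCLike.inner_apply, conj_trivial]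
  rw [integral_const_mul]

lemma AH_symm (φ ψ : Lp ℝ 2 μH) : ⟪AH φ, ψ⟫ = ⟪φ, AH ψ⟫ := by
  rw [real_inner_comm, real_inner_comm, ← real_inner_comm φ, AH_inner, AH_inner,
    integral_integral_swap (prod_integrable (Lp_meas φ) (Lp.memLp φ) (Lp_meas ψ) (Lp.memLp ψ))]
  congr 1; ext u; congr 1; ext t
  rw [add_comm]; ring

lemma AH_pos (φ : Lp ℝ 2 μH) : 0 ≤ ⟪AH φ, φ⟫ := by
  have hi := prod_integrable (Lp_meas φ) (Lp.memLp φ) (Lp_meas φ) (Lp.memLp φ)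
  have hφ := Lp_meas φ
  rw [AH_inner, integral_integral hi]
  have hpos : ∀ᵐ z ∂(μH.prod μH), 0 < z.1 ∧ 0 < z.2 := by
    rw [Measure.prod_restrict]
    filter_upwards [ae_restrict_mem (measurableSet_Ioi.prod measurableSet_Ioi)] with z hz
    exact hz
  have hexp : ∀ c : ℝ, 0 < c → IntegrableOn (fun s => exp (-c * s)) (Ioi 0) := fun c hc =>
    integrableOn_exp_mul_Ioi (by linarith) 0
  have hexp' : ∀ c : ℝ, 0 < c → ∫ s, exp (-c * s) ∂μH = 1 / c := fun c hc => by
    rw [integral_exp_mul_Ioi (by linarith) 0]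
    simp
  have hI : Integrable (Function.uncurry fun (z : ℝ × ℝ) (s : ℝ) =>
      (φ z.1 * φ z.2) * exp (-(z.1 + z.2) * s)) ((μH.prod μH).prod μH) := by
    rw [integrable_prod_iff]
    · constructor
      · filter_upwards [hpos] with z hz
        exact Integrable.const_mul (hexp _ (add_pos hz.1 hz.2)) (φ z.1 * φ z.2)
      · refine hi.norm.congr ?_
        filter_upwards [hpos] with z hz
        simp only [Function.uncurry, norm_mul]
        rw [integral_const_mul]
        simp only [Real.norm_eq_abs, abs_exp]
        rw [hexp' _ (add_pos hz.1 hz.2), abs_div, abs_of_pos (add_pos hz.1 hz.2)]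
        ring
    · apply Measurable.aestronglyMeasurable
      unfold Function.uncurry
      fun_prop
  have e : ∫ z, φ z.1 * (φ z.2 / (z.1 + z.2)) ∂(μH.prod μH) =
      ∫ z : ℝ × ℝ, ∫ s, (φ z.1 * φ z.2) * exp (-(z.1 + z.2) * s) ∂μH ∂(μH.prod μH) := by
    apply integral_congr_ae
    filter_upwards [hpos] with z hz
    rw [integral_const_mul, hexp' _ (add_pos hz.1 hz.2)]
    ring
  rw [e, integral_integral_swap hI]
  apply integral_nonneg
  intro s
  have : ∫ z : ℝ × ℝ, (φ z.1 * φ z.2) * exp (-(z.1 + z.2) * s) ∂(μH.prod μH) =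
      ∫ z : ℝ × ℝ, (φ z.1 * exp (-z.1 * s)) * (φ z.2 * exp (-z.2 * s)) ∂(μH.prod μH) := by
    congr 1; ext z
    have : -(z.1 + z.2) * s = -z.1 * s + -z.2 * s := by ring
    rw [this, exp_add]; ring
  simp only [Pi.zero_apply]
  rw [this, integral_prod_mul (fun x => φ x * exp (-x * s)) (fun x => φ x * exp (-x * s))]
  exact mul_self_nonneg _

noncomputable def kH (x : ℝ) : ℝ := √(exp x) / (1 + exp x)

noncomputable def eH (ξ u : ℝ) : ℝ := (√u)⁻¹ * cos (ξ * log u)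

noncomputable def lamH (ξ : ℝ) : ℝ := ∫ x, kH x * cos (ξ * x)

lemma image_exp {t : ℝ} (ht : 0 < t) : (fun x => t * exp x) '' univ = Ioi 0 := by
  ext y
  simp only [image_univ, mem_range, mem_Ioi]
  constructor
  · rintro ⟨x, rfl⟩; positivity
  · intro hy
    refine ⟨log (y / t), ?_⟩
    rw [exp_log (by positivity)]; field_simp

lemma deriv_exp' (t : ℝ) : ∀ x ∈ (univ : Set ℝ),
    HasDerivWithinAt (fun x => t * exp x) (t * exp x) univ x :=
  fun x _ => ((Real.hasDerivAt_exp x).const_mul t).hasDerivWithinAt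

lemma inj_exp {t : ℝ} (ht : 0 < t) : InjOn (fun x => t * exp x) univ := by
  intro x _ y _ h
  exact exp_injective (mul_left_cancel₀ ht.ne' h)

lemma key_point {t : ℝ} (ht : 0 < t) (x c : ℝ) :
    |t * exp x| • ((√(t * exp x))⁻¹ * c / (t + t * exp x)) = (√t)⁻¹ * (kH x * c) := by
  rw [abs_of_pos (by positivity), smul_eq_mul, Real.sqrt_mul ht.le, kH]
  have h1 : 0 < √t := Real.sqrt_pos.2 ht
  have h2 : 0 < √(exp x) := Real.sqrt_pos.2 (exp_pos x)
  have h3 : exp x = √(exp x) ^ 2 := (Real.sq_sqrt (exp_pos x).le).symm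
  have : t + t * exp x = t * (1 + exp x) := by ring
  rw [this]
  have h4 : 0 < 1 + exp x := by positivity
  field_simp
  rw [← h3]

lemma kH_integrable : Integrable kH := by
  have h := schur_integrable one_pos
  rw [← image_exp one_pos, integrableOn_image_iff_integrableOn_abs_deriv_smul MeasurableSet.univ
    (deriv_exp' 1) (inj_exp one_pos), integrableOn_univ] at h
  refine h.congr (Eventually.of_forall fun x => ?_)
  have := key_point one_pos x 1
  simpa using this

lemma kH_pos (x : ℝ) : 0 < kH x := by unfold kH; positivity

lemma kH_even (x : ℝ) : kH (-x) = kH x := by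
  unfold kH
  have h2 : 0 < √(exp x) := Real.sqrt_pos.2 (exp_pos x)
  have h3 : exp x = √(exp x) ^ 2 := (Real.sq_sqrt (exp_pos x).le).symm
  rw [exp_neg, Real.sqrt_inv]
  generalize √(exp x) = a at *
  rw [h3]
  field_simp
  ring

lemma kcos_integrable (ξ : ℝ) : Integrable (fun x => kH x * cos (ξ * x)) :=
  kH_integrable.mono (kH_integrable.1.mul (by fun_prop)) (Eventually.of_forall fun x => by
    rw [norm_mul]
    exact mul_le_of_le_one_right (norm_nonneg _) (abs_cos_le_one _))

lemma ksin_integrable (ξ : ℝ) : Integrable (fun x => kH x * sin (ξ * x)) :=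
  kH_integrable.mono (kH_integrable.1.mul (by fun_prop)) (Eventually.of_forall fun x => by
    rw [norm_mul]
    exact mul_le_of_le_one_right (norm_nonneg _) (abs_sin_le_one _))

lemma ksin_zero (ξ : ℝ) : ∫ x, kH x * sin (ξ * x) = 0 := by
  have h := integral_neg_eq_self (fun x => kH x * sin (ξ * x)) volume
  simp only [kH_even, mul_neg, sin_neg, integral_neg] at h
  linarith

lemma eH_integral (ξ : ℝ) {t : ℝ} (ht : 0 < t) :
    ∫ u in Ioi 0, eH ξ u / (t + u) = lamH ξ * eH ξ t := by
  rw [← image_exp ht, integral_image_eq_integral_abs_deriv_smul MeasurableSet.univ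
    (deriv_exp' t) (inj_exp ht), setIntegral_univ]
  have : ∀ x, |t * exp x| • (eH ξ (t * exp x) / (t + t * exp x)) =
      eH ξ t * (kH x * cos (ξ * x)) - (√t)⁻¹ * sin (ξ * log t) * (kH x * sin (ξ * x)) := by
    intro x
    rw [eH, key_point ht, log_mul ht.ne' (exp_pos x).ne', log_exp, mul_add, cos_add, eH]
    ring
  simp_rw [this]
  rw [integral_sub ((kcos_integrable ξ).const_mul _) ((ksin_integrable ξ).const_mul _),
    integral_const_mul, integral_const_mul, ksin_zero, lamH]
  ring

lemma lamH_zero : lamH 0 = π := by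
  have h := eH_integral 0 one_pos
  have h2 := schur_integral one_pos
  simp only [eH, zero_mul, cos_zero, mul_one, sqrt_one, inv_one] at h h2
  rw [← h, h2]

lemma lamH_cont : Continuous lamH := by
  unfold lamH
  apply continuous_of_dominated (bound := kH)
  · exact fun ξ => (kcos_integrable ξ).1
  · intro ξ
    refine Eventually.of_forall fun x => ?_
    rw [norm_mul, Real.norm_of_nonneg (kH_pos x).le]
    exact mul_le_of_le_one_right (kH_pos x).le (abs_cos_le_one _)
  · exact kH_integrable
  · refine Eventually.of_forall fun x => ?_
    fun_prop

lemma lamH_tendsto : Tendsto (fun w => lamH (2 * π * w)) (cocompact ℝ) (𝓝 0) := by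
  have h := Real.tendsto_integral_exp_smul_cocompact (fun x => (kH x : ℂ))
  have h2 := (Complex.continuous_re.tendsto _).comp h
  simp only [Complex.zero_re] at h2
  refine h2.congr fun w => ?_
  have hi : Integrable (fun v : ℝ => Real.fourierChar (-(v * w)) • (kH v : ℂ)) := by
    have := (Real.fourierIntegral_convergent_iff (μ := volume) (f := fun x => (kH x : ℂ)) w).2
      kH_integrable.ofReal
    simpa [mul_comm] using this
  simp only [Function.comp]
  have := integral_re hi
  simp only [RCLike.re_to_complex] at this
  rw [← this, lamH]
  congr 1; ext v
  rw [Circle.smul_def, Real.fourierChar_apply, smul_eq_mul, Complex.re_mul_ofReal, 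
    Complex.exp_ofReal_mul_I_re]
  rw [mul_comm]
  congr 1
  rw [← cos_neg]
  congr 1
  ring

lemma lamH_surj {l : ℝ} (h0 : 0 < l) (h1 : l < π) : ∃ ξ, ξ ≠ 0 ∧ lamH ξ = l := by
  have h := lamH_tendsto.mono_left (atTop_le_cocompact)
  obtain ⟨w, hw⟩ := (h.eventually (gt_mem_nhds h0)).exists
  have := mem_range_of_exists_le_of_exists_ge lamH_cont ⟨_, hw.le⟩ ⟨0, h1.le.trans_eq lamH_zero.symm⟩
  obtain ⟨ξ, hξ⟩ := this
  refine ⟨ξ, ?_, hξ⟩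
  rintro rfl
  rw [lamH_zero] at hξ
  exact h1.ne hξ.symm

lemma arctan_le_self' {x : ℝ} (hx : 0 ≤ x) : arctan x ≤ x := by
  have h := Real.le_tan (arctan_nonneg.2 hx) (arctan_lt_pi_div_two x)
  rwa [tan_arctan] at h

lemma tail_integral {t a : ℝ} (ht : 0 < t) (ha : 0 < a) :
    ∫ u in Ioi a, (√u)⁻¹ / (t + u) = 2 / √t * (π / 2) - 2 / √t * arctan (√a / √t) :=
  integral_Ioi_of_hasDerivAt_of_nonneg' (fun u hu => schur_deriv ht u (ha.trans_le hu))
    (fun u hu => by have : 0 < u := ha.trans hu; positivity) (schur_tendsto ht)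

lemma L2b {t a : ℝ} (ht : 0 < t) (ha : 0 < a) :
    ∫ u in Ioi a, (√u)⁻¹ / (t + u) ≤ 2 / √a := by
  have h1 : 0 < √t := Real.sqrt_pos.2 ht
  have h2 : 0 < √a := Real.sqrt_pos.2 ha
  rw [tail_integral ht ha, ← mul_sub, ← arctan_inv_of_pos (by positivity)]
  calc _ ≤ 2 / √t * (√a / √t)⁻¹ := by
        gcongr; exact arctan_le_self' (by positivity)
    _ = _ := by field_simp

lemma L1b {t a : ℝ} (ht : 0 < t) (ha : 0 < a) :
    ∫ u in Ioc 0 a, (√u)⁻¹ / (t + u) ≤ 2 * √a / t := by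
  have h1 : 0 < √t := Real.sqrt_pos.2 ht
  have h2 : 0 < √a := Real.sqrt_pos.2 ha
  have hs := schur_integrable ht
  have h := setIntegral_union (f := fun u => (√u)⁻¹ / (t + u)) (μ := volume)
    (Ioc_disjoint_Ioi_same (a := (0:ℝ)) (b := a)) measurableSet_Ioi
    (hs.mono_set Ioc_subset_Ioi_self) (hs.mono_set (Ioi_subset_Ioi ha.le))
  rw [Ioc_union_Ioi_eq_Ioi ha.le, schur_integral ht, tail_integral ht ha] at h
  have e : ∫ u in Ioc 0 a, (√u)⁻¹ / (t + u) = 2 / √t * arctan (√a / √t) := by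
    have : π * (√t)⁻¹ = 2 / √t * (π / 2) := by field_simp
    linarith
  rw [e]
  calc _ ≤ 2 / √t * (√a / √t) := by
        gcongr; exact arctan_le_self' (by positivity)
    _ = 2 * √a / (√t * √t) := by field_simp
    _ = _ := by rw [Real.mul_self_sqrt ht.le]

lemma eH_le (ξ : ℝ) (u : ℝ) : |eH ξ u| ≤ (√u)⁻¹ := by
  rw [eH, abs_mul, abs_of_nonneg (by positivity : 0 ≤ (√u)⁻¹)]
  exact mul_le_of_le_one_right (by positivity) (abs_cos_le_one _)

lemma eH_meas (ξ : ℝ) : Measurable (eH ξ) := by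
  unfold eH; fun_prop

lemma eH_set_le (ξ : ℝ) {t : ℝ} (ht : 0 < t) {S : Set ℝ} (hS : MeasurableSet S) (h : S ⊆ Ioi 0) :
    |∫ u in S, eH ξ u / (t + u)| ≤ ∫ u in S, (√u)⁻¹ / (t + u) := by
  rw [← Real.norm_eq_abs]
  apply norm_integral_le_of_norm_le ((schur_integrable ht).mono_set h)
  filter_upwards [ae_restrict_mem hS] with u hu
  have hu : 0 < u := h hu
  rw [norm_div, Real.norm_eq_abs, Real.norm_eq_abs, abs_of_pos (by positivity : 0 < t + u)]
  gcongr
  exact eH_le _ _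

lemma set_le {t : ℝ} (ht : 0 < t) {S T : Set ℝ} (hT' : MeasurableSet T) (hST : S ⊆ T)
    (hT : T ⊆ Ioi 0) :
    ∫ u in S, (√u)⁻¹ / (t + u) ≤ ∫ u in T, (√u)⁻¹ / (t + u) := by
  apply setIntegral_mono_set ((schur_integrable ht).mono_set hT)
  · filter_upwards [ae_restrict_mem hT'] with u hu
    have hu : 0 < u := hT hu
    simp only [Pi.zero_apply]; positivity
  · exact hST.eventuallyLE

lemma eH_integrable (ξ : ℝ) {t : ℝ} (ht : 0 < t) :
    IntegrableOn (fun u => eH ξ u / (t + u)) (Ioi 0) := by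
  have := eH_meas ξ
  apply Integrable.mono' (schur_integrable ht) (Measurable.aestronglyMeasurable (by fun_prop))
  filter_upwards [ae_restrict_mem measurableSet_Ioi] with u hu
  have hu : 0 < u := hu
  rw [norm_div, Real.norm_eq_abs, Real.norm_eq_abs, abs_of_pos (by positivity : 0 < t + u)]
  gcongr
  exact eH_le _ _

noncomputable def phiH (ξ N : ℝ) : ℝ → ℝ := (Ioc 1 N).indicator (eH ξ)

lemma phiH_meas (ξ N : ℝ) : Measurable (phiH ξ N) := (eH_meas ξ).indicator measurableSet_Ioc

lemma phiH_memLp (ξ N : ℝ) : MemLp (phiH ξ N) 2 μH := by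
  unfold phiH
  rw [memLp_indicator_iff_restrict measurableSet_Ioc]
  rw [Measure.restrict_restrict measurableSet_Ioc]
  have : IsFiniteMeasure (volume.restrict (Ioc 1 N ∩ Ioi 0)) := by
    constructor
    rw [Measure.restrict_apply_univ]
    exact (measure_mono inter_subset_left).trans_lt measure_Ioc_lt_top
  apply MemLp.of_bound (eH_meas ξ).aestronglyMeasurable 1
  filter_upwards [ae_restrict_mem (measurableSet_Ioc.inter measurableSet_Ioi)] with u hu
  refine (eH_le ξ u).trans ?_
  apply inv_le_one_of_one_le₀
  rw [Real.one_le_sqrt]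
  exact hu.1.1.le

lemma TH_phi (ξ : ℝ) {N t : ℝ} : TH (phiH ξ N) t = ∫ u in Ioc 1 N, eH ξ u / (t + u) := by
  unfold TH phiH
  have : (fun u => (Ioc 1 N).indicator (eH ξ) u / (t + u)) =
      (Ioc 1 N).indicator (fun u => eH ξ u / (t + u)) := by
    ext u
    by_cases h : u ∈ Ioc 1 N <;> simp [h]
  rw [this, setIntegral_indicator measurableSet_Ioc]
  congr 2
  apply inter_eq_self_of_subset_right
  intro u hu
  exact one_pos.trans hu.1

lemma g_small (ξ : ℝ) {N t : ℝ} (ht : 0 < t) (ht1 : t ≤ 1) :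
    (lamH ξ * phiH ξ N t - TH (phiH ξ N) t) ^ 2 ≤ 4 := by
  have h1 : phiH ξ N t = 0 := by
    apply indicator_of_notMem; intro h; exact absurd h.1 (not_lt.2 ht1)
  have h2 : |TH (phiH ξ N) t| ≤ 2 := by
    rw [TH_phi]
    refine (eH_set_le ξ ht measurableSet_Ioc
      (fun u hu => one_pos.trans hu.1)).trans ?_
    refine (set_le ht (T := Ioi 1) measurableSet_Ioi Ioc_subset_Ioi_self
      (Ioi_subset_Ioi zero_le_one)).trans ?_
    simpa using L2b ht one_pos
  rw [h1, mul_zero, zero_sub, neg_sq, ← sq_abs]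
  nlinarith [abs_nonneg (TH (phiH ξ N) t)]

lemma g_large (ξ : ℝ) {N t : ℝ} (hN : 1 < N) (ht : N < t) :
    (lamH ξ * phiH ξ N t - TH (phiH ξ N) t) ^ 2 ≤ 4 * N * (t ^ (-2 : ℝ)) := by
  have ht0 : 0 < t := by linarith
  have hN0 : 0 < N := by linarith
  have h1 : phiH ξ N t = 0 := by
    apply indicator_of_notMem; intro h; exact absurd h.2 (not_le.2 ht)
  have h2 : |TH (phiH ξ N) t| ≤ 2 * √N / t := by
    rw [TH_phi]
    refine (eH_set_le ξ ht0 measurableSet_Ioc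
      (fun u hu => one_pos.trans hu.1)).trans ?_
    refine (set_le ht0 (T := Ioc 0 N) measurableSet_Ioc (Ioc_subset_Ioc_left zero_le_one)
      Ioc_subset_Ioi_self).trans ?_
    exact L1b ht0 hN0
  rw [h1, mul_zero, zero_sub, neg_sq, ← sq_abs]
  calc _ ≤ (2 * √N / t) ^ 2 := by gcongr
    _ = _ := by
      rw [div_pow, mul_pow, Real.sq_sqrt hN0.le, Real.rpow_neg ht0.le]
      norm_num
      ring

lemma g_mid (ξ : ℝ) {N t : ℝ} (ht : 1 < t) (htN : t ≤ N) :
    (lamH ξ * phiH ξ N t - TH (phiH ξ N) t) ^ 2 ≤ 8 * (t ^ (-2 : ℝ)) + 8 / N := by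
  have ht0 : 0 < t := by linarith
  have hN0 : 0 < N := by linarith
  have hN1 : 1 < N := by linarith
  have h1 : phiH ξ N t = eH ξ t := indicator_of_mem (mem_Ioc.2 ⟨ht, htN⟩) _
  have hi := eH_integrable ξ ht0
  have s1 := setIntegral_union (f := fun u => eH ξ u / (t + u)) (μ := volume)
    (Ioc_disjoint_Ioi_same (a := (0:ℝ)) (b := 1)) measurableSet_Ioi
    (hi.mono_set Ioc_subset_Ioi_self) (hi.mono_set (Ioi_subset_Ioi zero_le_one))
  have s2 := setIntegral_union (f := fun u => eH ξ u / (t + u)) (μ := volume)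
    (Ioc_disjoint_Ioi_same (a := (1:ℝ)) (b := N)) measurableSet_Ioi
    (hi.mono_set (fun u hu => one_pos.trans hu.1)) (hi.mono_set (Ioi_subset_Ioi hN0.le))
  rw [Ioc_union_Ioi_eq_Ioi zero_le_one] at s1
  rw [Ioc_union_Ioi_eq_Ioi hN1.le] at s2
  rw [h1, ← eH_integral ξ ht0, s1, s2, TH_phi]
  have b1 := (eH_set_le ξ ht0 measurableSet_Ioc
    (S := Ioc 0 1) Ioc_subset_Ioi_self).trans (L1b ht0 one_pos)
  have b2 := (eH_set_le ξ ht0 measurableSet_Ioi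
    (Ioi_subset_Ioi hN0.le)).trans (L2b ht0 hN0)
  rw [sqrt_one, mul_one] at b1
  generalize (∫ u in Ioc 0 1, eH ξ u / (t + u)) = x at *
  generalize (∫ u in Ioi N, eH ξ u / (t + u)) = y at *
  generalize (∫ u in Ioc 1 N, eH ξ u / (t + u)) = z at *
  have c1 : x ^ 2 ≤ 4 * t ^ (-2 : ℝ) := by
    rw [← sq_abs]
    calc _ ≤ (2 / t) ^ 2 := by gcongr
      _ = _ := by
        rw [div_pow, Real.rpow_neg ht0.le]
        norm_num
        ring
  have c2 : y ^ 2 ≤ 4 / N := by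
    rw [← sq_abs]
    calc _ ≤ (2 / √N) ^ 2 := by gcongr
      _ = _ := by
        rw [div_pow, Real.sq_sqrt hN0.le]
        norm_num
  have : x + (z + y) - z = x + y := by ring
  rw [this]
  have : 8 / N = 2 * (4 / N) := by ring
  rw [this]
  nlinarith [sq_nonneg (x - y)]

lemma lint_inv_sq {c : ℝ} (hc : 0 < c) :
    ∫⁻ t in Ioi c, ENNReal.ofReal (t ^ (-2 : ℝ)) = ENNReal.ofReal (1 / c) := by
  rw [← ofReal_integral_eq_lintegral_ofReal
    (integrableOn_Ioi_rpow_of_lt (by norm_num) hc)]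
  · rw [integral_Ioi_rpow_of_lt (by norm_num) hc]
    norm_num
    rw [Real.rpow_neg_one]
  · filter_upwards [ae_restrict_mem measurableSet_Ioi] with u hu
    have hu : 0 < u := hc.trans hu
    simp only [Pi.zero_apply]; positivity

lemma g_total (ξ : ℝ) {N : ℝ} (hN : 1 < N) :
    ∫⁻ t, ENNReal.ofReal ((lamH ξ * phiH ξ N t - TH (phiH ξ N) t) ^ 2) ∂μH ≤
      ENNReal.ofReal 24 := by
  have hN0 : 0 < N := by linarith
  have e : Ioi (0:ℝ) = Ioc 0 1 ∪ (Ioc 1 N ∪ Ioi N) := by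
    rw [Ioc_union_Ioi_eq_Ioi hN.le, Ioc_union_Ioi_eq_Ioi zero_le_one]
  unfold μH
  rw [e]
  refine (lintegral_union_le _ _ _).trans ?_
  have i1 : ∫⁻ t in Ioc 0 1, ENNReal.ofReal ((lamH ξ * phiH ξ N t - TH (phiH ξ N) t) ^ 2) ≤
      ENNReal.ofReal 4 := by
    calc _ ≤ ∫⁻ t in Ioc (0:ℝ) 1, ENNReal.ofReal 4 :=
          setLIntegral_mono' measurableSet_Ioc fun t ht =>
            ENNReal.ofReal_le_ofReal (g_small ξ ht.1 ht.2)
      _ = _ := by simp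
  have i2 : ∫⁻ t in Ioc 1 N, ENNReal.ofReal ((lamH ξ * phiH ξ N t - TH (phiH ξ N) t) ^ 2) ≤
      ENNReal.ofReal 16 := by
    calc _ ≤ ∫⁻ t in Ioc 1 N, (ENNReal.ofReal 8 * ENNReal.ofReal (t ^ (-2 : ℝ)) +
            ENNReal.ofReal (8 / N)) :=
          setLIntegral_mono' measurableSet_Ioc fun t ht => by
            have : 0 < t := one_pos.trans ht.1
            rw [← ENNReal.ofReal_mul (by norm_num), ← ENNReal.ofReal_add (by positivity)
              (by positivity)]
            exact ENNReal.ofReal_le_ofReal (g_mid ξ ht.1 ht.2)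
      _ = ENNReal.ofReal 8 * (∫⁻ t in Ioc 1 N, ENNReal.ofReal (t ^ (-2 : ℝ))) +
            ENNReal.ofReal (8 / N) * ENNReal.ofReal (N - 1) := by
          rw [lintegral_add_right _ (by fun_prop), lintegral_const_mul _ (by fun_prop)]
          simp
      _ ≤ ENNReal.ofReal 8 * ENNReal.ofReal (1 / 1) + ENNReal.ofReal 8 := by
          gcongr
          · rw [← lint_inv_sq one_pos]
            exact lintegral_mono_set Ioc_subset_Ioi_self
          · rw [← ENNReal.ofReal_mul (by positivity)]
            apply ENNReal.ofReal_le_ofReal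
            rw [div_mul_eq_mul_div, div_le_iff₀ hN0]
            linarith
      _ = _ := by
          rw [← ENNReal.ofReal_mul (by norm_num), ← ENNReal.ofReal_add (by norm_num) (by norm_num)]
          norm_num
  have i3 : ∫⁻ t in Ioi N, ENNReal.ofReal ((lamH ξ * phiH ξ N t - TH (phiH ξ N) t) ^ 2) ≤
      ENNReal.ofReal 4 := by
    calc _ ≤ ∫⁻ t in Ioi N, (ENNReal.ofReal (4 * N) * ENNReal.ofReal (t ^ (-2 : ℝ))) :=
          setLIntegral_mono' measurableSet_Ioi fun t ht => by
            rw [← ENNReal.ofReal_mul (by positivity)]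
            exact ENNReal.ofReal_le_ofReal (g_large ξ hN ht)
      _ = _ := by
          rw [lintegral_const_mul _ (by fun_prop), lint_inv_sq hN0,
            ← ENNReal.ofReal_mul (by positivity)]
          congr 1; field_simp
  calc _ ≤ ENNReal.ofReal 4 + (ENNReal.ofReal 16 + ENNReal.ofReal 4) := by
        gcongr
        exact (lintegral_union_le _ _ _).trans (by gcongr)
    _ = _ := by
        rw [← ENNReal.ofReal_add (by norm_num) (by norm_num),
          ← ENNReal.ofReal_add (by norm_num) (by norm_num)]
        norm_num

lemma phi_sq (ξ : ℝ) (hξ : ξ ≠ 0) {N : ℝ} (hN : 1 < N) :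
    ENNReal.ofReal (log N / 2 - 1 / (4 * |ξ|)) ≤ ∫⁻ t, ENNReal.ofReal (phiH ξ N t ^ 2) ∂μH := by
  have hd : ∀ t ∈ uIcc 1 N, HasDerivAt (fun t => log t / 2 + sin (2 * ξ * log t) / (4 * ξ))
      (eH ξ t ^ 2) t := by
    intro t ht
    rw [uIcc_of_le hN.le] at ht
    have ht0 : 0 < t := one_pos.trans_le ht.1
    have h1 := (Real.hasDerivAt_log ht0.ne')
    have h2 := (h1.div_const 2).add (((h1.const_mul (2 * ξ)).sin).div_const (4 * ξ))
    have e : t⁻¹ / 2 + cos (2 * ξ * log t) * (2 * ξ * t⁻¹) / (4 * ξ) = eH ξ t ^ 2 := by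
      rw [eH, mul_pow, inv_pow, Real.sq_sqrt ht0.le, mul_assoc 2 ξ, cos_two_mul]
      field_simp
      ring
    rw [e] at h2
    exact h2
  have hc : ContinuousOn (fun t => eH ξ t ^ 2) (Icc 1 N) := by
    unfold eH
    have hp : ∀ t ∈ Icc 1 N, 0 < t := fun t ht => one_pos.trans_le ht.1
    refine ContinuousOn.pow (ContinuousOn.mul (ContinuousOn.inv₀ (by fun_prop) ?_) ?_) 2
    · exact fun t ht => (Real.sqrt_pos.2 (hp t ht)).ne'
    · refine Real.continuous_cos.comp_continuousOn (ContinuousOn.mul (by fun_prop) ?_)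
      exact Real.continuousOn_log.mono fun t ht => (hp t ht).ne'
  have hii : IntervalIntegrable (fun t => eH ξ t ^ 2) volume 1 N := by
    apply ContinuousOn.intervalIntegrable
    rwa [uIcc_of_le hN.le]
  have hint := intervalIntegral.integral_eq_sub_of_hasDerivAt hd hii
  rw [intervalIntegral.integral_of_le hN.le] at hint
  rw [intervalIntegrable_iff_integrableOn_Ioc_of_le hN.le] at hii
  have e : ∫⁻ t, ENNReal.ofReal (phiH ξ N t ^ 2) ∂μH =
      ENNReal.ofReal (∫ t in Ioc 1 N, eH ξ t ^ 2) := by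
    rw [ofReal_integral_eq_lintegral_ofReal hii (Eventually.of_forall fun t => sq_nonneg _)]
    have : (fun t => ENNReal.ofReal (phiH ξ N t ^ 2)) =
        (Ioc 1 N).indicator (fun t => ENNReal.ofReal (eH ξ t ^ 2)) := by
      ext t
      by_cases h : t ∈ Ioc 1 N <;> simp [phiH, h]
    rw [this, setLIntegral_indicator measurableSet_Ioc]
    congr 2
    apply inter_eq_self_of_subset_left
    intro u hu
    exact one_pos.trans hu.1
  rw [e, hint]
  apply ENNReal.ofReal_le_ofReal
  simp only [log_one, mul_zero, sin_zero, zero_div, add_zero, sub_zero]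
  have : -(1 / (4 * |ξ|)) ≤ sin (2 * ξ * log N) / (4 * ξ) := by
    apply neg_le_of_abs_le
    rw [abs_div, abs_mul, abs_of_pos (by norm_num : (0:ℝ) < 4)]
    gcongr
    exact abs_sin_le_one _
  linarith

lemma mem_spec {l : ℝ} (h0 : 0 < l) (h1 : l < π) : l ∈ spectrum ℝ AH := by
  obtain ⟨ξ, hξ, rfl⟩ := lamH_surj h0 h1
  rw [spectrum.mem_iff]
  rintro ⟨B, hB⟩
  set C : ℝ := ‖(↑(B⁻¹) : Lp ℝ 2 μH →L[ℝ] Lp ℝ 2 μH)‖ with hC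
  have hb : ∀ φ : Lp ℝ 2 μH, ‖φ‖ ≤ C * ‖lamH ξ • φ - AH φ‖ := by
    intro φ
    have e : φ = (↑(B⁻¹) : Lp ℝ 2 μH →L[ℝ] Lp ℝ 2 μH) (lamH ξ • φ - AH φ) := by
      have h : ((↑(B⁻¹) * ↑B : Lp ℝ 2 μH →L[ℝ] Lp ℝ 2 μH)) φ = φ := by
        rw [Units.inv_mul]; rfl
      rw [hB] at h
      conv_lhs => rw [← h]
      rfl
    conv_lhs => rw [e]
    exact ContinuousLinearMap.le_opNorm _ _
  have hall : ∀ N : ℝ, 1 < N → log N / 2 - 1 / (4 * |ξ|) ≤ C ^ 2 * 24 := by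
    intro N hN
    set φ := (phiH_memLp ξ N).toLp
    have hφ : (φ : ℝ → ℝ) =ᵐ[μH] phiH ξ N := (phiH_memLp ξ N).coeFn_toLp
    have n1 : ENNReal.ofReal (‖φ‖ ^ 2) = ∫⁻ t, ENNReal.ofReal (phiH ξ N t ^ 2) ∂μH := by
      rw [ENNReal.ofReal_pow (norm_nonneg _), ← eLpNorm_two_sq, ofReal_norm, Lp.enorm_def,
        eLpNorm_congr_ae hφ]
    have hd : (↑(lamH ξ • φ - AH φ) : ℝ → ℝ) =ᵐ[μH]
        fun t => lamH ξ * phiH ξ N t - TH (phiH ξ N) t := by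
      have hA := AH_coe φ
      rw [TH_congr hφ] at hA
      filter_upwards [Lp.coeFn_sub (lamH ξ • φ) (AH φ), Lp.coeFn_smul (lamH ξ) φ, hA, hφ]
        with t a1 a2 a3 a4
      rw [a1, Pi.sub_apply, a2, Pi.smul_apply, a3, a4, smul_eq_mul]
    have n2 : ENNReal.ofReal (‖lamH ξ • φ - AH φ‖ ^ 2) ≤ ENNReal.ofReal 24 := by
      rw [ENNReal.ofReal_pow (norm_nonneg _), ofReal_norm, Lp.enorm_def,
        eLpNorm_congr_ae hd, eLpNorm_two_sq]
      exact g_total ξ hN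
    rw [ENNReal.ofReal_le_ofReal_iff (by norm_num)] at n2
    have n3 := phi_sq ξ hξ hN
    rw [← n1, ENNReal.ofReal_le_ofReal_iff (by positivity)] at n3
    calc _ ≤ _ := n3
      _ ≤ (C * ‖lamH ξ • φ - AH φ‖) ^ 2 := by gcongr; exact hb φ
      _ = C ^ 2 * ‖lamH ξ • φ - AH φ‖ ^ 2 := by ring
      _ ≤ _ := by gcongr
  have hx := hall (exp (2 * (C ^ 2 * 24 + 1 / (4 * |ξ|) + 1))) (by
    rw [Real.one_lt_exp_iff]; positivity)
  rw [log_exp] at hx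
  linarith

lemma AH_spec_nonneg {l : ℝ} (hl : l ∈ spectrum ℝ AH) : 0 ≤ l := by
  have hp : AH.IsPositive := by
    rw [ContinuousLinearMap.isPositive_def]
    exact ⟨fun φ ψ => AH_symm φ ψ, fun φ => AH_pos φ⟩
  exact (SpectrumRestricts.nnreal_iff.1 hp.spectrumRestricts) l hl

lemma AH_spec_le {l : ℝ} (hl : l ∈ spectrum ℝ AH) : l ≤ ‖AH‖ := by
  have h := spectrum.norm_le_norm_mul_of_mem hl
  refine (le_abs_self l).trans (h.trans ?_)
  exact mul_le_of_le_one_right (norm_nonneg _) ContinuousLinearMap.norm_id_le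

lemma AH_norm : ‖AH‖ = π := by
  apply le_antisymm AH_norm_le
  apply le_of_forall_lt
  intro c hc
  have h : max c 0 < π := max_lt hc pi_pos
  have h3 := AH_spec_le (mem_spec (l := (max c 0 + π) / 2)
    (by linarith [le_max_right c 0, pi_pos]) (by linarith))
  linarith [le_max_left c 0]

lemma AH_spec : spectrum ℝ AH = Icc 0 π := by
  apply Subset.antisymm
  · exact fun l hl => ⟨AH_spec_nonneg hl, (AH_spec_le hl).trans AH_norm_le⟩
  · rw [← closure_Ioo pi_pos.ne]
    exact closure_minimal (fun l hl => mem_spec hl.1 hl.2) (spectrum.isClosed _)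

theorem hilbert_operator_norm_and_spectrum :
    ∃ A : Lp ℝ 2 (volume.restrict (Set.Ioi (0:ℝ))) →L[ℝ]
          Lp ℝ 2 (volume.restrict (Set.Ioi (0:ℝ))),
      (∀ φ : Lp ℝ 2 (volume.restrict (Set.Ioi (0:ℝ))),
        (A φ : ℝ → ℝ) =ᵐ[volume.restrict (Set.Ioi (0:ℝ))]
          fun t => ∫ u in Set.Ioi (0:ℝ), φ u / (t + u)) ∧
      (∀ φ ψ : Lp ℝ 2 (volume.restrict (Set.Ioi (0:ℝ))), ⟪A φ, ψ⟫ = ⟪φ, A ψ⟫) ∧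
      (∀ φ : Lp ℝ 2 (volume.restrict (Set.Ioi (0:ℝ))), 0 ≤ ⟪A φ, φ⟫) ∧
      ‖A‖ = π ∧
      spectrum ℝ A = Set.Icc 0 π :=
  ⟨AH, AH_coe, AH_symm, AH_pos, AH_norm, AH_spec⟩
end

section
/- The map U : L²((0,∞)) → L²(ℝ) defined by (Uφ)(v) = e^{v/2} φ(e^v) is a unitary isomorphism, and it conjugates the operator A₀ with kernel 1/(t+u) into the convolution operator with kernel 1/(2 cosh(v/2)): for every φ ∈ L²((0,∞)) one has (U A₀ φ)(v) = ∫_ℝ (Uφ)(s)/(2 cosh((v−s)/2)) ds for almost every v ∈ ℝ. -/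
open MeasureTheory Real Set

lemma lc_lint (g : ℝ → ENNReal) :
    ∫⁻ x in Ioi (0:ℝ), g x = ∫⁻ s, ENNReal.ofReal (Real.exp s) * g (Real.exp s) := by
  have h := lintegral_image_eq_lintegral_abs_deriv_mul (s := univ) (f := Real.exp)
    (f' := Real.exp) MeasurableSet.univ
    (fun x _ => (Real.hasDerivAt_exp x).hasDerivWithinAt) Real.exp_injective.injOn g
  simpa [image_univ, Real.range_exp, abs_of_pos (Real.exp_pos _)] using h

lemma lc_int (g : ℝ → ℝ) :
    ∫ x in Ioi (0:ℝ), g x = ∫ s, Real.exp s * g (Real.exp s) := by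
  have h := integral_image_eq_integral_abs_deriv_smul (s := univ) (f := Real.exp)
    (f' := Real.exp) MeasurableSet.univ
    (fun x _ => (Real.hasDerivAt_exp x).hasDerivWithinAt) Real.exp_injective.injOn g
  simpa [image_univ, Real.range_exp, abs_of_pos (Real.exp_pos _)] using h

lemma lc_qexp : Measure.QuasiMeasurePreserving Real.exp volume
    (volume.restrict (Ioi (0:ℝ))) := by
  refine ⟨Real.measurable_exp, Measure.AbsolutelyContinuous.mk fun N hN h0 => ?_⟩
  rw [Measure.map_apply Real.measurable_exp hN]
  rw [← lintegral_indicator_one hN, lc_lint] at h0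
  replace h0 := (lintegral_eq_zero_iff
    ((ENNReal.measurable_ofReal.comp Real.measurable_exp).mul
      ((measurable_one.indicator hN).comp Real.measurable_exp))).1 h0
  refine measure_mono_null ?_ (ae_iff.1 h0)
  intro x hx
  have hx' : Real.exp x ∈ N := hx
  simp [hx', Real.exp_pos]

lemma lc_qlog : Measure.QuasiMeasurePreserving Real.log
    (volume.restrict (Ioi (0:ℝ))) volume := by
  refine ⟨Real.measurable_log, Measure.AbsolutelyContinuous.mk fun N hN h0 => ?_⟩
  rw [Measure.map_apply Real.measurable_log hN]
  rw [← lintegral_indicator_one (Real.measurable_log hN), lc_lint]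
  refine (lintegral_eq_zero_iff
    ((ENNReal.measurable_ofReal.comp Real.measurable_exp).mul
      ((measurable_one.indicator (Real.measurable_log hN)).comp Real.measurable_exp))).2 ?_
  have : ∀ᵐ x : ℝ, x ∉ N := measure_eq_zero_iff_ae_notMem.1 h0
  filter_upwards [this] with x hx
  simp [hx]

lemma lc_norm (f : ℝ → ℝ) :
    eLpNorm (fun v => Real.exp (v/2) * f (Real.exp v)) 2 volume
      = eLpNorm f 2 (volume.restrict (Ioi (0:ℝ))) := by
  rw [eLpNorm_eq_lintegral_rpow_enorm_toReal (by norm_num) (by norm_num),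
    eLpNorm_eq_lintegral_rpow_enorm_toReal (by norm_num) (by norm_num), lc_lint]
  congr 1
  refine lintegral_congr fun v => ?_
  rw [enorm_mul, ENNReal.mul_rpow_of_nonneg _ _ (by norm_num)]
  congr 1
  rw [Real.enorm_of_nonneg (Real.exp_pos _).le]
  simp only [ENNReal.toReal_ofNat, ENNReal.rpow_ofNat]
  rw [← ENNReal.ofReal_pow (Real.exp_pos _).le, ← Real.exp_nat_mul]
  congr 2
  push_cast
  ring

lemma lc_memLp {f : ℝ → ℝ} (hf : MemLp f 2 (volume.restrict (Ioi (0:ℝ)))) :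
    MemLp (fun v => Real.exp (v/2) * f (Real.exp v)) 2 volume := by
  refine ⟨?_, by rw [lc_norm]; exact hf.2⟩
  exact (by fun_prop : Continuous fun v : ℝ => Real.exp (v/2)).aestronglyMeasurable.mul
    (hf.1.comp_quasiMeasurePreserving lc_qexp)

noncomputable def lcLin : Lp ℝ 2 (volume.restrict (Set.Ioi (0:ℝ))) →ₗᵢ[ℝ]
    Lp ℝ 2 (volume : Measure ℝ) where
  toFun φ := (lc_memLp (Lp.memLp φ)).toLp _
  map_add' φ ψ := by
    rw [← MemLp.toLp_add]
    refine MemLp.toLp_congr _ _ ?_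
    filter_upwards [lc_qexp.ae (Lp.coeFn_add φ ψ)] with v hv
    simp only [Pi.add_apply] at hv ⊢
    rw [hv]; ring
  map_smul' c φ := by
    rw [RingHom.id_apply, ← MemLp.toLp_const_smul]
    refine MemLp.toLp_congr _ _ ?_
    filter_upwards [lc_qexp.ae (Lp.coeFn_smul c φ)] with v hv
    simp only [Pi.smul_apply, smul_eq_mul] at hv ⊢
    rw [hv]; ring
  norm_map' φ := by
    simp only [LinearMap.coe_mk, AddHom.coe_mk]
    rw [Lp.norm_toLp, lc_norm, Lp.norm_def]

lemma lcLin_coe (φ : Lp ℝ 2 (volume.restrict (Set.Ioi (0:ℝ)))) :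
    (lcLin φ : ℝ → ℝ) =ᵐ[volume] fun v => Real.exp (v/2) * φ (Real.exp v) :=
  MemLp.coeFn_toLp (lc_memLp (Lp.memLp φ))

lemma lcLin_surj : Function.Surjective lcLin := by
  intro ψ
  have hW : (fun v => Real.exp (v/2) * ((fun t => Real.exp (-(Real.log t)/2) * ψ (Real.log t))
      (Real.exp v))) = (ψ : ℝ → ℝ) := by
    funext v
    simp only [Real.log_exp]
    rw [← mul_assoc, ← Real.exp_add]
    ring_nf
    simp
  have hm : MemLp (fun t => Real.exp (-(Real.log t)/2) * ψ (Real.log t)) 2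
      (volume.restrict (Ioi (0:ℝ))) := by
    refine ⟨?_, ?_⟩
    · exact (by fun_prop : Measurable fun t : ℝ =>
        Real.exp (-(Real.log t)/2)).aestronglyMeasurable.mul
        ((Lp.memLp ψ).1.comp_quasiMeasurePreserving lc_qlog)
    · rw [← lc_norm, hW]; exact (Lp.memLp ψ).2
  refine ⟨hm.toLp _, ?_⟩
  apply Lp.ext
  filter_upwards [lcLin_coe (hm.toLp _), lc_qexp.ae hm.coeFn_toLp] with v h1 h2
  rw [h1, h2]
  exact congrFun hW v

theorem log_coordinates_unitary :
    ∃ U : Lp ℝ 2 (volume.restrict (Set.Ioi (0:ℝ))) ≃ₗᵢ[ℝ] Lp ℝ 2 (volume : Measure ℝ),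
      (∀ φ : Lp ℝ 2 (volume.restrict (Set.Ioi (0:ℝ))),
        (U φ : ℝ → ℝ) =ᵐ[volume] fun v => Real.exp (v/2) * φ (Real.exp v)) ∧
      (∀ φ : Lp ℝ 2 (volume.restrict (Set.Ioi (0:ℝ))),
        ∀ᵐ v ∂(volume : Measure ℝ),
          Real.exp (v/2) * ∫ u in Set.Ioi (0:ℝ), φ u / (Real.exp v + u) =
            ∫ s, (Real.exp (s/2) * φ (Real.exp s)) / (2 * Real.cosh ((v - s)/2))) := by
  refine ⟨LinearIsometryEquiv.ofSurjective lcLin lcLin_surj, fun φ => ?_, fun φ => ?_⟩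
  · simpa using lcLin_coe φ
  · refine Filter.Eventually.of_forall fun v => ?_
    rw [lc_int, ← integral_const_mul]
    congr 1
    funext s
    have e1 : Real.exp v = Real.exp (v/2) * Real.exp (v/2) := by
      rw [← Real.exp_add]; ring_nf
    have e2 : Real.exp s = Real.exp (s/2) * Real.exp (s/2) := by
      rw [← Real.exp_add]; ring_nf
    have e3 : Real.exp ((v-s)/2) = Real.exp (v/2) / Real.exp (s/2) := by
      rw [← Real.exp_sub]; ring_nf
    have e4 : Real.exp (-((v-s)/2)) = Real.exp (s/2) / Real.exp (v/2) := by
      rw [← Real.exp_sub]; ring_nf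
    rw [Real.cosh_eq, e3, e4]
    generalize φ (Real.exp s) = y
    rw [e1, e2]
    have := Real.exp_pos (v/2)
    have := Real.exp_pos (s/2)
    field_simp
end
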